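/- arXiv:1802.00290 — 12 statements merged into one kernel-verified Lean document; each statement's English description precedes it below -/
import Mathlib

section
/- Let σ be a circular arc of radius 1 and of arc length less than 1.32 in the Euclidean plane ℝ². Then for every ε > 0 and every orientation-preserving isometry g of ℝ², there exists a continuous path γ : [0,1] → Isom⁺(ℝ²) of orientation-preserving isometries of the plane (with the topology of pointwise convergence) such that γ(0) is the identity, γ(1)(σ) = g(σ), and the Lebesgue measure of the set of touched points ⋃_{t∈[0,1]} γ(t)(σ) is less than ε. -/
/-!
A position of the arc is a pair (centre `c`, angle `φ`). Turning the arc about its centre touches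
only a unit circle, a null set, so rotations are free and only displacements of the centre cost
area. Translating the arc by `w` costs area at most `L ‖w‖`, where `L` is the arc length. If every
displacement `w` can be achieved at cost `C ‖w‖` up to an arbitrarily small error
(`LinearCost L C`), then it can also be achieved at cost `C sin L ‖w‖` (`LinearCost.mul_sin`).
As `L < π / 2`, iterating this makes the cost arbitrarily small (`joinedIn_small`).

The improvement is a Venetian blind construction. Write `w = x e^{iφ} (tan L - i)` and let `B(β) = x
e^{iφ} (tan β - i)`, a vector orthogonal to `e^{i(φ+β)}`. Starting from the segment `B(L) = w`,
every segment of direction `B(β)` is repeatedly cut into many equal pieces, and each piece is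
replaced by a small multiple of `B(β')`, with `β'` slightly smaller than `β`, followed by a jump in
the fixed direction `e^{iφ}`. Along the blinds the arc keeps the angle `φ`, so that its points are
`e^{i(φ+θ)}` with `θ ∈ [0, L]`. Consider the set swept by the points with `θ ∈ [β, L]`. After a
subdivision that is fine enough the new blinds are close to the old ones, so the part with `θ ∈ [β,
L]` gains almost no area (the swept set is compact, so thin thickenings of it have almost the same
area), while the part with `θ ∈ [β', β]` is swept almost tangentially and has area `O((β - β')²)`.
Reaching `β = 0` in `M` steps, the whole arc sweeps area `O(1/M)`, up to errors as small as desired,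
along the final blinds (`stage_step`, `stage_iterate`). The jumps have total length `x tan L = ‖w‖
sin L`, and each of them is performed at the assumed cost `C`.
-/

open MeasureTheory Set

/-! ### Positions of the arc and swept areas -/

/-- Pairs `(c, φ)` (centre, initial angle) whose arc `c + exp (i [φ, φ + L])` lies in `T`. -/
def arcsIn (L : ℝ) (T : Set ℂ) : Set (ℂ × ℝ) :=
  {x | ∀ s ∈ Icc (0:ℝ) L, x.1 + Complex.exp ((x.2 + s : ℝ) * Complex.I) ∈ T}

/-- The set swept by the sub-arcs `z + exp (i [φ + a, φ + b])`, `z ∈ Z`, under the translation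
by `d`. -/
def swept (φ : ℝ) (Z : Set ℂ) (d : ℂ) (a b : ℝ) : Set ℂ :=
  (fun q : ℂ × ℝ × ℝ => q.1 + q.2.1 * d + Complex.exp ((φ + q.2.2 : ℝ) * Complex.I)) ''
    (Z ×ˢ Icc (0:ℝ) 1 ×ˢ Icc a b)

lemma arcsIn_mono {L : ℝ} {S T : Set ℂ} (h : S ⊆ T) : arcsIn L S ⊆ arcsIn L T :=
  fun _ hx s hs => h (hx s hs)

lemma isCompact_swept (φ : ℝ) {Z : Set ℂ} (hZ : IsCompact Z) (d : ℂ) (a b : ℝ) :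
    IsCompact (swept φ Z d a b) := by
  refine (hZ.prod (isCompact_Icc.prod isCompact_Icc)).image ?_
  fun_prop

lemma volume_Icc_reProdIm (a b c d : ℝ) :
    volume (Icc a b ×ℂ Icc c d) = ENNReal.ofReal (b - a) * ENNReal.ofReal (d - c) := by
  have h := Complex.volume_preserving_equiv_real_prod.measure_preimage_equiv
    (Icc a b ×ˢ Icc c d)
  rw [Measure.volume_eq_prod, Measure.prod_prod, Real.volume_Icc, Real.volume_Icc] at h
  rw [← h]
  rfl

/-- The sweep is parametrized by time `t ∈ [0, 1]` and angle `θ ∈ [a, b]`, with Jacobian equal to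
the component of `d` along the normal `exp (i (φ + θ))`. -/
lemma volume_swept_singleton_le (φ : ℝ) (c d : ℂ) {a b K : ℝ}
    (hK : ∀ θ ∈ Icc a b, |d.re * Real.cos (φ + θ) + d.im * Real.sin (φ + θ)| ≤ K) :
    volume (swept φ {c} d a b) ≤ ENNReal.ofReal (K * (b - a)) := by
  rcases lt_or_ge b a with hab | hab
  · simp [swept, Icc_eq_empty_of_lt hab]
  have hK0 : 0 ≤ K := (abs_nonneg _).trans (hK a ⟨le_rfl, hab⟩)
  set f : ℂ → ℂ := fun z => c + (z.re : ℂ) * d + Complex.exp ((φ + z.im : ℝ) * Complex.I)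
  set f' : ℂ → ℂ →L[ℝ] ℂ := fun z => Complex.reCLM.smulRight d +
    Complex.imCLM.smulRight (Complex.exp ((φ + z.im : ℝ) * Complex.I) * Complex.I)
  have hf : ∀ z, HasFDerivAt f (f' z) z := by
    intro z
    have h1 : HasFDerivAt (fun z : ℂ => (z.re : ℂ) * d) (Complex.reCLM.smulRight d) z := by
      have := (Complex.reCLM.smulRight d).hasFDerivAt (x := z)
      refine this.congr_of_eventuallyEq (Filter.Eventually.of_forall fun z => ?_)
      simp
    have h2 : HasDerivAt (fun t : ℝ => Complex.exp ((φ + t : ℝ) * Complex.I))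
        (Complex.exp ((φ + z.im : ℝ) * Complex.I) * Complex.I) z.im := by
      have := (((hasDerivAt_id z.im).const_add φ).ofReal_comp.mul_const Complex.I).cexp
      simpa using this
    have h3 := h2.hasFDerivAt.comp z (Complex.imCLM.hasFDerivAt (x := z))
    have h4 := (h1.const_add c).add h3
    refine h4.congr_fderiv ?_
    ext w <;> simp [f']
  have hdet : ∀ z, (f' z).det = d.re * Real.cos (φ + z.im) + d.im * Real.sin (φ + z.im) := by
    intro z
    rw [ContinuousLinearMap.det, ← LinearMap.det_toMatrix Complex.basisOneI, Matrix.det_fin_two]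
    simp [LinearMap.toMatrix_apply, f', Complex.exp_ofReal_mul_I_re, Complex.exp_ofReal_mul_I_im,
      -Complex.ofReal_add]
    ring
  have himg : swept φ {c} d a b = f '' (Icc 0 1 ×ℂ Icc a b) := by
    ext y; constructor
    · rintro ⟨⟨z, t, θ⟩, ⟨hz, ht, hθ⟩, rfl⟩
      refine ⟨⟨t, θ⟩, ⟨ht, hθ⟩, ?_⟩
      simp only [mem_singleton_iff] at hz
      simp [f, hz]
    · rintro ⟨z, ⟨ht, hθ⟩, rfl⟩
      exact ⟨(c, z.re, z.im), ⟨rfl, ht, hθ⟩, rfl⟩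
  have hmeas : MeasurableSet (Icc (0:ℝ) 1 ×ℂ Icc a b) :=
    (measurableSet_Icc.preimage Complex.measurable_re).inter
      (measurableSet_Icc.preimage Complex.measurable_im)
  rw [himg]
  calc volume (f '' (Icc 0 1 ×ℂ Icc a b))
      ≤ ∫⁻ z in Icc 0 1 ×ℂ Icc a b, ENNReal.ofReal |(f' z).det| :=
        addHaar_image_le_lintegral_abs_det_fderiv volume hmeas
          (fun z _ => (hf z).hasFDerivWithinAt)
    _ ≤ ∫⁻ z in Icc 0 1 ×ℂ Icc a b, ENNReal.ofReal K := by
        refine setLIntegral_mono measurable_const fun z hz => ?_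
        rw [hdet]
        exact ENNReal.ofReal_le_ofReal (hK _ hz.2)
    _ = ENNReal.ofReal (K * (b - a)) := by
        rw [setLIntegral_const, volume_Icc_reProdIm, ENNReal.ofReal_mul hK0]
        simp

lemma volume_swept_finset_le (φ : ℝ) (Z : Finset ℂ) (d : ℂ) {a b K : ℝ} {n : ℕ} (hn : Z.card ≤ n)
    (hK : ∀ θ ∈ Icc a b, |d.re * Real.cos (φ + θ) + d.im * Real.sin (φ + θ)| ≤ K) :
    volume (swept φ Z d a b) ≤ ENNReal.ofReal (n * (K * (b - a))) := by
  have h : swept φ Z d a b = ⋃ z ∈ Z, swept φ {z} d a b := by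
    ext y
    simp only [swept, mem_image, mem_iUnion, Prod.exists, mem_prod, mem_singleton_iff,
      Finset.mem_coe]
    constructor
    · rintro ⟨z, t, θ, ⟨hz, h⟩, rfl⟩
      exact ⟨z, hz, z, t, θ, ⟨rfl, h⟩, rfl⟩
    · rintro ⟨z, hz, _, t, θ, ⟨rfl, h⟩, rfl⟩
      exact ⟨_, t, θ, ⟨hz, h⟩, rfl⟩
  rw [h]
  calc volume (⋃ z ∈ Z, swept φ {z} d a b)
      ≤ ∑ z ∈ Z, volume (swept φ {z} d a b) := measure_biUnion_finset_le _ _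
    _ ≤ ∑ z ∈ Z, ENNReal.ofReal (K * (b - a)) :=
        Finset.sum_le_sum fun z _ => volume_swept_singleton_le φ z d hK
    _ = Z.card * ENNReal.ofReal (K * (b - a)) := by simp
    _ ≤ n * ENNReal.ofReal (K * (b - a)) := by gcongr
    _ = _ := by rw [ENNReal.ofReal_mul (Nat.cast_nonneg n), ENNReal.ofReal_natCast]

/-- Translating an arc joins its two extreme positions inside the swept set. -/
lemma joinedIn_translate {L φ : ℝ} {T Z : Set ℂ} {z d : ℂ} (hz : z ∈ Z)
    (hT : swept φ Z d 0 L ⊆ T) :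
    JoinedIn (arcsIn L T) (z, φ) (z + d, φ) := by
  refine JoinedIn.of_segment_subset ?_
  rw [segment_eq_image']
  rintro _ ⟨t, ht, rfl⟩ s hs
  refine hT ⟨(z, t, s), ⟨hz, ht, hs⟩, ?_⟩
  simp

/-- Turning an arc about its centre touches only the unit circle. -/
lemma joinedIn_rotate {L : ℝ} {T : Set ℂ} {p : ℂ} (hT : Metric.sphere p 1 ⊆ T) (φ ψ : ℝ) :
    JoinedIn (arcsIn L T) (p, φ) (p, ψ) := by
  refine JoinedIn.of_segment_subset ?_
  rw [segment_eq_image']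
  rintro _ ⟨t, ht, rfl⟩ s hs
  apply hT
  simp [Complex.norm_exp_ofReal_mul_I, -Complex.ofReal_add]

/-! ### Linear cost of displacing the centre -/

/-- `LinearCost L C`: an arc of length `L` can be moved so that its centre is displaced by `w`,
with arbitrary initial and final angles, inside a set of area at most `C ‖w‖ + ε`. -/
def LinearCost (L C : ℝ) : Prop :=
  ∀ (w p : ℂ) (φ ψ ε : ℝ), 0 < ε → ∃ T : Set ℂ,
    volume T ≤ ENNReal.ofReal (C * ‖w‖ + ε) ∧ JoinedIn (arcsIn L T) (p, φ) (p + w, ψ)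

lemma volume_sphere_one (p : ℂ) : volume (Metric.sphere p 1) = 0 :=
  Measure.addHaar_sphere _ _ _

lemma abs_normal_le (d : ℂ) (t : ℝ) : |d.re * Real.cos t + d.im * Real.sin t| ≤ ‖d‖ := by
  rw [← Real.sqrt_sq_eq_abs, Complex.norm_eq_sqrt_sq_add_sq]
  apply Real.sqrt_le_sqrt
  nlinarith [sq_nonneg (d.re * Real.sin t - d.im * Real.cos t), Real.sin_sq_add_cos_sq t]

lemma linearCost_self {L : ℝ} : LinearCost L L := by
  intro w p φ ψ ε hε
  refine ⟨swept φ {p} w 0 L ∪ Metric.sphere (p + w) 1, ?_, ?_⟩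
  · refine (measure_union_le _ _).trans ?_
    rw [volume_sphere_one, add_zero]
    refine (volume_swept_singleton_le φ p w fun θ _ => abs_normal_le w _).trans ?_
    exact ENNReal.ofReal_le_ofReal (by nlinarith)
  · exact (joinedIn_translate (mem_singleton p) subset_union_left).trans
      (joinedIn_rotate subset_union_right φ ψ)

/-! ### The Venetian blind construction -/

/-- `blind φ x β = x e^{iφ} (tan β - i)`; this vector is orthogonal to `exp (i (φ + β))`, and
its component along `-i e^{iφ}` is `x` for every `β`. -/
noncomputable def blind (φ x β : ℝ) : ℂ :=
  x * Complex.exp (φ * Complex.I) * (Real.tan β - Complex.I)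

/-- The normal component of `blind φ x β` at the point of angle `φ + θ`; it vanishes at
`θ = β`. -/
lemma blind_normal (φ x β θ : ℝ) (hβ : Real.cos β ≠ 0) :
    (blind φ x β).re * Real.cos (φ + θ) + (blind φ x β).im * Real.sin (φ + θ)
      = x / Real.cos β * Real.sin (β - θ) := by
  have h : blind φ x β = ⟨x * (Real.cos φ * Real.tan β + Real.sin φ),
      x * (Real.sin φ * Real.tan β - Real.cos φ)⟩ := by
    apply Complex.ext <;>
    simp [blind, Complex.exp_ofReal_mul_I_re, Complex.exp_ofReal_mul_I_im, -Complex.ofReal_tan] <;>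
    ring
  rw [h, Real.cos_add, Real.sin_add, Real.sin_sub, Real.tan_eq_sin_div_cos]
  field_simp
  linear_combination (x * (Real.sin β * Real.cos θ - Real.cos β * Real.sin θ))
    * Real.sin_sq_add_cos_sq φ

/-- The state of the construction with blinds of direction `blind φ x β`, up to any error `ε`:
there are at most `n` blinds `[z, z + blind φ x β / n]`, `z ∈ Z`, such that the part of the arc with
angles in `[φ + β, φ + L]` sweeps area at most `A + ε` along them; and if the arc at angle `φ` can
be moved along each blind within `T`, then adding to `T` a set of area at most
`C x (tan L - tan β) + ε`, used for the jumps between blinds, suffices to move the centre from `p`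
to `p + w`. -/
def Stage (L C : ℝ) (p w : ℂ) (φ x β A : ℝ) : Prop :=
  ∀ ε : ℝ, 0 < ε → ∃ n : ℕ, 0 < n ∧ ∃ Z : Finset ℂ, Z.card ≤ n ∧
    volume (swept φ Z (blind φ x β / n) β L) ≤ ENNReal.ofReal (A + ε) ∧
    ∀ T : Set ℂ, (∀ z ∈ Z, JoinedIn (arcsIn L T) (z, φ) (z + blind φ x β / n, φ)) →
      ∃ T' : Set ℂ, volume T' ≤ ENNReal.ofReal (C * (x * (Real.tan L - Real.tan β)) + ε) ∧
        JoinedIn (arcsIn L (T ∪ T')) (p, φ) (p + w, φ)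

lemma stage_zero {L C : ℝ} (p : ℂ) (φ x : ℝ) :
    Stage L C p (blind φ x L) φ x L 0 := by
  intro ε hε
  refine ⟨1, one_pos, {p}, by simp, ?_, fun T hT => ⟨∅, by simp, ?_⟩⟩
  · have := volume_swept_singleton_le φ p (blind φ x L / (1:ℕ)) (a := L) (b := L)
      fun θ _ => abs_normal_le _ _
    rw [sub_self, mul_zero, ENNReal.ofReal_zero] at this
    rw [Finset.coe_singleton]
    exact this.trans zero_le
  · simpa using hT p (by simp)

lemma norm_blind_sub (φ x β β' : ℝ) :
    ‖blind φ x β - blind φ x β'‖ = |x| * |Real.tan β - Real.tan β'| := by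
  have : blind φ x β - blind φ x β' =
      x * Complex.exp (φ * Complex.I) * ((Real.tan β - Real.tan β' : ℝ) : ℂ) := by
    simp only [blind]; push_cast; ring
  rw [this, norm_mul, norm_mul, Complex.norm_exp_ofReal_mul_I, Complex.norm_real,
    Complex.norm_real, mul_one, Real.norm_eq_abs, Real.norm_eq_abs]

/-- One subdivision: each blind is cut into `N` pieces, and each piece `blind φ x β / (n N)` is
replaced by the new blind `blind φ x β' / (n N)` and a jump. -/
lemma stage_step {L C : ℝ} (hL : L < Real.pi / 2) (hC0 : 0 ≤ C) (hC : LinearCost L C)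
    {p w : ℂ} {φ x β β' A : ℝ} (hx : 0 ≤ x) (hA : 0 ≤ A) (h0 : 0 ≤ β') (h1 : β' ≤ β) (h2 : β ≤ L)
    (h : Stage L C p w φ x β A) :
    Stage L C p w φ x β' (A + x / Real.cos L * (β - β') ^ 2) := by
  intro ε hε
  obtain ⟨n, hn, Z, hZ, hvol, hjoin⟩ := h (ε / 2) (by positivity)
  set B := blind φ x β with hB
  set B' := blind φ x β' with hB'
  set S := swept φ Z (B / n) β L with hS
  have hScomp : IsCompact S := isCompact_swept φ Z.finite_toSet.isCompact _ _ _
  -- A thickening of the compact set `S` has almost the same area.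
  obtain ⟨δ, hδ, hSδ⟩ : ∃ δ > 0, volume (Metric.cthickening δ S) < ENNReal.ofReal (A + ε) := by
    have ht := tendsto_measure_cthickening_of_isCompact (μ := volume) hScomp
    have hlt : volume S < ENNReal.ofReal (A + ε) :=
      hvol.trans_lt ((ENNReal.ofReal_lt_ofReal_iff (by positivity)).2 (by linarith))
    have := (ht.eventually (gt_mem_nhds hlt)).filter_mono (nhdsWithin_le_nhds (s := Ioi 0))
    obtain ⟨δ, h1, h2⟩ := (this.and self_mem_nhdsWithin).exists
    exact ⟨δ, h2, h1⟩
  -- With this `N` the new blinds are within `δ` of the old ones.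
  obtain ⟨N, hN⟩ := exists_nat_gt (‖B' - B‖ / δ)
  have hN0 : 0 < N := by
    have : (0:ℝ) < N := lt_of_le_of_lt (by positivity) hN
    exact_mod_cast this
  have hnR : (0:ℝ) < n := by exact_mod_cast hn
  have hNR : (0:ℝ) < N := by exact_mod_cast hN0
  have hn1 : (1:ℝ) ≤ n := by exact_mod_cast hn
  have hnC : (n:ℂ) ≠ 0 := by exact_mod_cast hn.ne'
  have hNC : (N:ℂ) ≠ 0 := by exact_mod_cast hN0.ne'
  set m : ℕ := n * N with hm
  have hm0 : 0 < m := Nat.mul_pos hn hN0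
  have hmR : (0:ℝ) < m := by exact_mod_cast hm0
  have hmC : (m:ℂ) ≠ 0 := by exact_mod_cast hm0.ne'
  have hmC' : (m:ℂ) = n * N := by simp [hm]
  classical
  set Z' : Finset ℂ := (Z ×ˢ Finset.range N).image (fun q => q.1 + (q.2 : ℂ) * (B / m)) with hZ'
  have hZ'card : Z'.card ≤ m := by
    refine Finset.card_image_le.trans ?_
    rw [Finset.card_product, Finset.card_range]
    exact Nat.mul_le_mul_right _ hZ
  have hcosL : 0 < Real.cos L := Real.cos_pos_of_mem_Ioo ⟨by linarith [Real.pi_pos], hL⟩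
  have hcosβ' : Real.cos L ≤ Real.cos β' :=
    Real.cos_le_cos_of_nonneg_of_le_pi h0 (by linarith [Real.pi_pos]) (by linarith)
  refine ⟨m, hm0, Z', hZ'card, ?_, ?_⟩
  · have hsub : swept φ Z' (B' / m) β' L ⊆
        Metric.cthickening δ S ∪ swept φ Z' (B' / m) β' β := by
      rintro _ ⟨⟨z', t, θ⟩, ⟨hz', ht, hθ⟩, rfl⟩
      rcases le_total θ β with hle | hle
      · exact Or.inr ⟨(z', t, θ), ⟨hz', ht, hθ.1, hle⟩, rfl⟩
      left
      simp only [hZ', Finset.coe_image, mem_image, Finset.mem_coe, Finset.mem_product,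
        Finset.mem_range, Prod.exists] at hz'
      obtain ⟨z, j, ⟨hz, hj⟩, rfl⟩ := hz'
      have hj1 : (j:ℝ) + 1 ≤ N := by exact_mod_cast hj
      refine Metric.mem_cthickening_of_dist_le _
        (z + (((j + t) / N : ℝ) : ℂ) * (B / n) + Complex.exp ((φ + θ : ℝ) * Complex.I)) δ S
        ⟨(z, (j + t) / N, θ), ⟨hz, ⟨?_, ?_⟩, hle, hθ.2⟩, rfl⟩ ?_
      · have := ht.1; positivity
      · rw [div_le_one hNR]; linarith [ht.2]
      · have e : (z + (j : ℂ) * (B / m) + t * (B' / m) + Complex.exp ((φ + θ : ℝ) * Complex.I))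
            - (z + (((j + t) / N : ℝ) : ℂ) * (B / n) + Complex.exp ((φ + θ : ℝ) * Complex.I))
            = t * (B' - B) / m := by
          rw [hmC']; push_cast; field_simp; ring
        rw [dist_eq_norm]
        dsimp only
        rw [e, norm_div, norm_mul, Complex.norm_real, Real.norm_of_nonneg ht.1,
          Complex.norm_natCast, div_le_iff₀ hmR]
        rw [div_lt_iff₀ hδ] at hN
        have h3 : t * ‖B' - B‖ ≤ ‖B' - B‖ := mul_le_of_le_one_left (norm_nonneg _) ht.2
        have h4 : (m:ℝ) = n * N := by simp [hm]
        have h5 : (N:ℝ) ≤ m := by rw [h4]; nlinarith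
        nlinarith
    have hnew : volume (swept φ Z' (B' / m) β' β) ≤
        ENNReal.ofReal (x / Real.cos L * (β - β') ^ 2) := by
      refine (volume_swept_finset_le φ Z' (B' / m) (K := x / Real.cos L * (β - β') / m) hZ'card
        fun θ hθ => ?_).trans (ENNReal.ofReal_le_ofReal ?_)
      · rw [Complex.div_natCast_re, Complex.div_natCast_im, div_mul_eq_mul_div,
          div_mul_eq_mul_div, ← add_div, hB', blind_normal _ _ _ _ (by linarith), abs_div,
          abs_of_pos hmR, abs_mul, abs_of_nonneg (by positivity [hcosL.trans_le hcosβ'])]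
        have hs : |Real.sin (β' - θ)| ≤ β - β' := by
          refine Real.abs_sin_le_abs.trans ?_
          rw [abs_of_nonpos (by linarith [hθ.1])]
          linarith [hθ.2]
        gcongr
      · apply le_of_eq; field_simp
    calc _ ≤ _ := measure_mono hsub
      _ ≤ _ := measure_union_le _ _
      _ ≤ ENNReal.ofReal (A + ε) + ENNReal.ofReal (x / Real.cos L * (β - β') ^ 2) :=
          add_le_add hSδ.le hnew
      _ = _ := by
          rw [← ENNReal.ofReal_add (by positivity) (by positivity)]
          congr 1; ring
  · intro T hT
    -- The jump after each new blind, performed at the assumed cost.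
    have hjump : ∀ z : ℂ, ∃ T' : Set ℂ,
        volume T' ≤ ENNReal.ofReal (C * ‖(B - B') / m‖ + ε / 2 / m) ∧
        JoinedIn (arcsIn L T') (z + B' / m, φ) (z + B / m, φ) := by
      intro z
      obtain ⟨T', h1, h2⟩ := hC ((B - B') / m) (z + B' / m) φ φ (ε / 2 / m) (by positivity)
      refine ⟨T', h1, ?_⟩
      convert h2 using 2
      ring
    choose J hJvol hJ using hjump
    set T₁ : Set ℂ := ⋃ z ∈ Z', J z with hT₁
    have htan : Real.tan β' ≤ Real.tan β := by
      rcases h1.eq_or_lt with rfl | h1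
      · exact le_rfl
      · exact (Real.tan_lt_tan_of_lt_of_lt_pi_div_two (by linarith [Real.pi_pos])
          (by linarith) h1).le
    have htan2 : Real.tan β ≤ Real.tan L := by
      rcases h2.eq_or_lt with rfl | h2
      · exact le_rfl
      · exact (Real.tan_lt_tan_of_lt_of_lt_pi_div_two (by linarith [Real.pi_pos])
          (by linarith) h2).le
    have hT₁vol : volume T₁ ≤ ENNReal.ofReal (C * (x * (Real.tan β - Real.tan β')) + ε / 2) := by
      calc volume T₁ ≤ ∑ z ∈ Z', volume (J z) := measure_biUnion_finset_le _ _
        _ ≤ ∑ z ∈ Z', ENNReal.ofReal (C * ‖(B - B') / m‖ + ε / 2 / m) :=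
            Finset.sum_le_sum fun z _ => hJvol z
        _ = Z'.card * ENNReal.ofReal (C * ‖(B - B') / m‖ + ε / 2 / m) := by simp
        _ ≤ m * ENNReal.ofReal (C * ‖(B - B') / m‖ + ε / 2 / m) := by gcongr
        _ = _ := by
            rw [← ENNReal.ofReal_natCast, ← ENNReal.ofReal_mul (by positivity), norm_div,
              norm_blind_sub, Complex.norm_natCast, abs_of_nonneg hx,
              abs_of_nonneg (by linarith)]
            congr 1; field_simp
    have hstep : ∀ z ∈ Z', JoinedIn (arcsIn L (T ∪ T₁)) (z, φ) (z + B / m, φ) := by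
      intro z hz
      refine ((hT z hz).mono (arcsIn_mono subset_union_left)).trans ((hJ z).mono (arcsIn_mono ?_))
      exact (subset_biUnion_of_mem (u := J) hz).trans subset_union_right
    have hchain : ∀ z ∈ Z, ∀ j ≤ N, 0 < j →
        JoinedIn (arcsIn L (T ∪ T₁)) (z, φ) (z + (j : ℂ) * (B / m), φ) := by
      intro z hz j
      have hmem : ∀ i < N, z + (i : ℂ) * (B / m) ∈ Z' := fun i hi =>
        Finset.mem_image.2 ⟨(z, i), by simp [hz, hi], rfl⟩
      induction j with
      | zero => intro _ h; exact absurd h (lt_irrefl _)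
      | succ j ih =>
        intro hj _
        have hs := hstep _ (hmem j hj)
        have e : z + (j : ℂ) * (B / m) + B / m = z + ((j + 1 : ℕ) : ℂ) * (B / m) := by
          push_cast; ring
        rw [e] at hs
        rcases Nat.eq_zero_or_pos j with rfl | hj0
        · simpa using hs
        · exact (ih (by omega) hj0).trans hs
    obtain ⟨T₂, hT₂vol, hT₂⟩ := hjoin (T ∪ T₁) fun z hz => by
      have := hchain z hz N le_rfl hN0
      have e : (N : ℂ) * (B / m) = B / n := by rw [hmC']; field_simp
      rwa [e] at this
    refine ⟨T₁ ∪ T₂, ?_, by rwa [union_assoc] at hT₂⟩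
    refine (measure_union_le _ _).trans ((add_le_add hT₁vol hT₂vol).trans ?_)
    have := sub_nonneg.2 htan
    have := sub_nonneg.2 htan2
    rw [← ENNReal.ofReal_add (by positivity) (by positivity)]
    exact ENNReal.ofReal_le_ofReal (by linarith)

/-- Passing from `β = L` to `β = 0` in `M` equal steps. -/
lemma stage_iterate {L C : ℝ} (hL0 : 0 ≤ L) (hL : L < Real.pi / 2) (hC0 : 0 ≤ C)
    (hC : LinearCost L C) (p : ℂ) {φ x : ℝ} (hx : 0 ≤ x) {M : ℕ} (hM : 0 < M) :
    ∀ k ≤ M, Stage L C p (blind φ x L) φ x (L * (1 - k / M))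
      (k * (x / Real.cos L * (L / M) ^ 2)) := by
  have hMR : (0:ℝ) < M := by exact_mod_cast hM
  have hcosL : 0 < Real.cos L := Real.cos_pos_of_mem_Ioo ⟨by linarith [Real.pi_pos], hL⟩
  intro k
  induction k with
  | zero => intro _; simpa using stage_zero p φ x
  | succ k ih =>
    intro hk
    have hkR : (k:ℝ) + 1 ≤ M := by exact_mod_cast hk
    have h1 : ((k:ℝ) + 1) / M ≤ 1 := (div_le_one hMR).2 hkR
    have h2 : (k:ℝ) / M ≤ (k + 1) / M := by gcongr; linarith
    have h3 : (0:ℝ) ≤ k / M := by positivity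
    have := stage_step hL hC0 hC (β' := L * (1 - ((k + 1 : ℕ) : ℝ) / M)) hx (by positivity)
      (mul_nonneg hL0 (by push_cast; linarith))
      (mul_le_mul_of_nonneg_left (by push_cast; linarith) hL0)
      (mul_le_of_le_one_right hL0 (by linarith)) (ih (by omega))
    convert this using 1
    push_cast
    field_simp
    ring

/-! ### Reducing the cost to zero -/

lemma LinearCost.mul_sin {L C : ℝ} (hL0 : 0 ≤ L) (hL : L < Real.pi / 2) (hC0 : 0 ≤ C)
    (hC : LinearCost L C) : LinearCost L (C * Real.sin L) := by
  intro w p φ₀ ψ₀ ε hε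
  have hcosL : 0 < Real.cos L := Real.cos_pos_of_mem_Ioo ⟨by linarith [Real.pi_pos], hL⟩
  have hsinL : 0 ≤ Real.sin L := Real.sin_nonneg_of_nonneg_of_le_pi hL0 (by linarith [Real.pi_pos])
  have hne : (Real.tan L : ℂ) - Complex.I ≠ 0 := by
    intro h
    have := congrArg Complex.im h
    simp [-Complex.ofReal_tan] at this
  set v : ℂ := w / (Real.tan L - Complex.I) with hv
  set x := ‖v‖ with hx
  set φ := v.arg with hφ
  have hw : w = blind φ x L := by
    rw [blind, Complex.norm_mul_exp_arg_mul_I, hv, div_mul_cancel₀ _ hne]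
  have hxw : x * Real.tan L = ‖w‖ * Real.sin L := by
    have h1 : ‖(Real.tan L : ℂ) - Complex.I‖ = 1 / Real.cos L := by
      rw [Complex.norm_eq_sqrt_sq_add_sq]
      rw [Real.sqrt_eq_iff_mul_self_eq (by positivity) (by positivity)]
      simp only [Complex.sub_re, Complex.ofReal_re, Complex.I_re, Complex.sub_im,
        Complex.ofReal_im, Complex.I_im, Real.tan_eq_sin_div_cos]
      field_simp
      linarith [Real.sin_sq_add_cos_sq L]
    rw [hx, hv, norm_div, h1, Real.tan_eq_sin_div_cos]
    field_simp
  have hx0 : 0 ≤ x := norm_nonneg _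
  obtain ⟨M, hM⟩ := exists_nat_gt (x / Real.cos L * L ^ 2 / (ε / 4))
  have hM0 : 0 < M := by
    have : (0:ℝ) < M := lt_of_le_of_lt (by positivity) hM
    exact_mod_cast this
  have hMR : (0:ℝ) < M := by exact_mod_cast hM0
  have hst := stage_iterate hL0 hL hC0 hC p (φ := φ) hx0 hM0 M le_rfl
  rw [div_self hMR.ne', sub_self, mul_zero, ← hw] at hst
  obtain ⟨n, hn, Z, hZ, hvol, hjoin⟩ := hst (ε / 4) (by positivity)
  set S := swept φ Z (blind φ x 0 / n) 0 L with hS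
  obtain ⟨T', hT'vol, hT'⟩ := hjoin S fun z hz => joinedIn_translate hz subset_rfl
  rw [Real.tan_zero, sub_zero, hxw] at hT'vol
  refine ⟨(S ∪ T') ∪ (Metric.sphere p 1 ∪ Metric.sphere (p + w) 1), ?_, ?_⟩
  · have hA : M * (x / Real.cos L * (L / M) ^ 2) ≤ ε / 4 := by
      rw [div_lt_iff₀ (by positivity)] at hM
      have : M * (x / Real.cos L * (L / M) ^ 2) = x / Real.cos L * L ^ 2 / M := by field_simp
      rw [this, div_le_iff₀ hMR]
      linarith
    have hz : volume (Metric.sphere p 1 ∪ Metric.sphere (p + w) 1) = 0 :=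
      measure_union_null (volume_sphere_one _) (volume_sphere_one _)
    calc _ ≤ volume (S ∪ T') + 0 := by rw [← hz]; exact measure_union_le _ _
      _ ≤ _ := by
        rw [add_zero]
        refine (measure_union_le _ _).trans ((add_le_add hvol hT'vol).trans ?_)
        rw [← ENNReal.ofReal_add (by positivity) (by positivity)]
        exact ENNReal.ofReal_le_ofReal (by linarith)
  · refine (joinedIn_rotate ?_ φ₀ φ).trans ((hT'.mono (arcsIn_mono subset_union_left)).trans
      (joinedIn_rotate ?_ φ ψ₀))
    · exact subset_union_left.trans subset_union_right
    · exact subset_union_right.trans subset_union_right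

lemma joinedIn_small {L : ℝ} (hL0 : 0 ≤ L) (hL : L < Real.pi / 2) (p q : ℂ) (φ ψ : ℝ) {ε : ℝ}
    (hε : 0 < ε) :
    ∃ T : Set ℂ, volume T < ENNReal.ofReal ε ∧ JoinedIn (arcsIn L T) (p, φ) (q, ψ) := by
  have hsinL : 0 ≤ Real.sin L := Real.sin_nonneg_of_nonneg_of_le_pi hL0 (by linarith [Real.pi_pos])
  have hsin1 : Real.sin L < 1 := by
    rw [← Real.sin_pi_div_two]
    exact Real.sin_lt_sin_of_lt_of_le_pi_div_two (by linarith [Real.pi_pos]) le_rfl hL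
  have hk : ∀ k : ℕ, LinearCost L (L * Real.sin L ^ k) := by
    intro k
    induction k with
    | zero => simpa using linearCost_self
    | succ k ih =>
      rw [pow_succ, ← mul_assoc]
      exact ih.mul_sin hL0 hL (by positivity)
  have hlim : Filter.Tendsto (fun k : ℕ => L * Real.sin L ^ k * ‖q - p‖) Filter.atTop (nhds 0) := by
    have := ((tendsto_pow_atTop_nhds_zero_of_lt_one hsinL hsin1).const_mul L).mul_const ‖q - p‖
    simpa using this
  obtain ⟨k, hk'⟩ := (hlim.eventually (gt_mem_nhds (half_pos hε))).exists
  obtain ⟨T, hT, hj⟩ := hk k (q - p) p φ ψ (ε / 4) (by positivity)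
  refine ⟨T, hT.trans_lt ((ENNReal.ofReal_lt_ofReal_iff hε).2 (by linarith)), ?_⟩
  simpa using hj

/-- A circular arc of radius 1 and arc length < 1.32 (parametrized as
`σ = circleMap O 1 '' Icc a b` with `b - a < 1.32`) can be continuously moved, through
orientation-preserving isometries of the plane (represented as `z ↦ u z + v` with `‖u‖ = 1`),
to its image under any prescribed orientation-preserving isometry `g : z ↦ u z + v`,
touching a set of Lebesgue measure less than ε. -/
theorem kakeya_arc_any_position
    (O : ℂ) (a b : ℝ) (hab : a ≤ b) (hlen : b - a < 1.32)
    (σ : Set ℂ) (hσ : σ = circleMap O 1 '' Set.Icc a b)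
    (ε : ℝ) (hε : 0 < ε)
    (u v : ℂ) (hu : ‖u‖ = 1) :
    ∃ γ : ℝ → ℂ × ℂ,
      ContinuousOn γ (Set.Icc 0 1) ∧
      (∀ t ∈ Set.Icc (0:ℝ) 1, ‖(γ t).1‖ = 1) ∧
      γ 0 = (1, 0) ∧
      (fun z => (γ 1).1 * z + (γ 1).2) '' σ = (fun z => u * z + v) '' σ ∧
      volume (⋃ t ∈ Set.Icc (0:ℝ) 1, (fun z => (γ t).1 * z + (γ t).2) '' σ)
        < ENNReal.ofReal ε := by
  have hL : b - a < Real.pi / 2 := by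
    have := Real.pi_gt_three
    norm_num at hlen
    linarith
  obtain ⟨T, hT, hj⟩ := joinedIn_small (sub_nonneg.2 hab) hL O (u * O + v) a (a + u.arg) hε
  set P := hj.somePath with hP
  -- The rigid motion carrying the initial position `(O, a)` to the position `x`.
  set G : ℂ × ℝ → ℂ × ℂ := fun x =>
    (Complex.exp ((x.2 - a : ℝ) * Complex.I),
      x.1 - Complex.exp ((x.2 - a : ℝ) * Complex.I) * O) with hG
  have hGc : Continuous G := by fun_prop
  have hG1 : G (P.extend 1) = (u, v) := by
    have hua : Complex.exp (u.arg * Complex.I) = u := by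
      have := Complex.norm_mul_exp_arg_mul_I u
      rwa [hu, Complex.ofReal_one, one_mul] at this
    rw [Path.extend_one]
    simp only [hG, add_sub_cancel_left, hua]
  refine ⟨fun t => G (P.extend t), (hGc.comp P.continuous_extend).continuousOn, ?_, ?_, ?_, ?_⟩
  · intro t _
    exact Complex.norm_exp_ofReal_mul_I _
  · dsimp only
    rw [Path.extend_zero]
    simp [hG]
  · dsimp only
    rw [hG1]
  · refine lt_of_le_of_lt (measure_mono ?_) hT
    refine iUnion₂_subset fun t ht => ?_
    rw [hσ]
    rintro _ ⟨_, ⟨θ, hθ, rfl⟩, rfl⟩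
    have hmem : P.extend t ∈ arcsIn (b - a) T := by
      rw [Path.extend_apply _ ht]
      exact hj.somePath_mem _
    have := hmem (θ - a) ⟨by linarith [hθ.1], by linarith [hθ.2]⟩
    convert this using 1
    have he : Complex.exp (((P.extend t).2 + (θ - a) : ℝ) * Complex.I) =
        Complex.exp (((P.extend t).2 - a : ℝ) * Complex.I) * Complex.exp (θ * Complex.I) := by
      rw [← Complex.exp_add]; congr 1; push_cast; ring
    rw [he]
    simp only [hG, circleMap]
    push_cast
    ring
end

section
/- Let σ₀ be a circular arc of radius 1 and of arc length less than 1.32 in the Euclidean plane ℝ², and let σ₁ be the image of σ₀ under a rotation of the plane about one of the endpoints of σ₀. Then for every ε > 0 there exists a continuous path γ : [0,1] → Isom⁺(ℝ²) of orientation-preserving isometries such that γ(0) is the identity, γ(1)(σ₀) = σ₁, and the Lebesgue measure of ⋃_{t∈[0,1]} γ(t)(σ₀) is less than ε. -/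
/-!
Turning an arc about the centre of its circle stays inside the circle and costs no area, so only
the motion of the centre matters: the centre follows a polygonal path, and before each step of the
path the arc may be turned freely. It suffices to show that every displacement `v` of the centre
can be realised by finitely many such steps with arbitrarily small swept area.

To first order in the displacement, the slice of the swept region in the radial direction `e` is the
`trace`: the union of the projections to `e` of the steps whose arc contains the direction `e`. Let
`c` be the infimum of the numbers such that every vector `v` has a path whose traces all have measure
at most `c ‖v‖`. Two facts give `c = 0`:

* (`Ach.truncate`) traversing `n` times the `1 / n`-scaled copy of a path does not increase the
  traces and, for large `n`, puts the path in a thin neighbourhood of the segment `[0, v]`; hence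
  the trace in the direction `e` can be truncated at `|⟪e, v⟫|`;
* (`ach_step`) for arcs of length `Λ < π / 2`, subtract from `u`, in many small steps, a vector `w`
  of length `‖u‖ sin Λ`, so that the vector turns through the angle `Λ`, and realise the rest `u - w`
  by a single step carrying the arc of the directions orthogonal to the vectors passed. In each of
  these directions the truncation makes the contribution of the single step negligible, and in the
  other directions it does not contribute at all. So only the small steps count, and `c ≤ c sin Λ`.

For the actual area (`exists_small_sweep`), the displacement is divided into `n` equal parts: the
first-order terms add up to `O(c ‖v‖)`, the second-order errors to `O(1 / n)`. The arcs of the traces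
are taken slightly longer than the given arc, to allow for the change of the radial direction.
-/

open MeasureTheory Set
open scoped Pointwise

namespace ArcKakeya

/-! ### Polygonal paths and their traces -/

/-- The unit vector of angle `β`. -/
noncomputable def dir (β : ℝ) : ℂ := Complex.exp (β * Complex.I)

/-- A polygonal path of the centre of the circle, as the list of its steps: the displacement of
the centre, and the angle `β` of the middle of the arc that is carried along during the step. -/
abbrev Steps := List (ℂ × ℝ)

/-- Total displacement of a polygonal path. -/
noncomputable def disp (P : Steps) : ℂ := (P.map Prod.fst).sum

/-- Total length of a polygonal path. -/
noncomputable def len (P : Steps) : ℝ := (P.map fun p => ‖p.1‖).sum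

/-- The path scaled by the factor `t`; the arcs carried along stay the same. -/
noncomputable def scale (t : ℝ) (P : Steps) : Steps := P.map fun p => (t • p.1, p.2)

/-- The path traversed `n` times in succession. -/
def reps : ℕ → Steps → Steps
  | 0, _ => []
  | n + 1, P => P ++ reps n P

/-- The trace of the path `P` starting at `x`, in the direction `e`: the union of the projections
to the line of direction `e` of those steps whose arc (with half-angle `arccos κ`) contains the
direction `e`. To first order, this is the slice in the direction `e` of the region swept by the
arcs. -/
noncomputable def trace (κ : ℝ) (e : ℂ) : Steps → ℂ → Set ℝ
  | [], _ => ∅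
  | p :: P, x => {r | κ ≤ inner ℝ e (dir p.2) ∧ r ∈ uIcc (inner ℝ e x) (inner ℝ e (x + p.1))} ∪
      trace κ e P (x + p.1)

lemma norm_dir (β : ℝ) : ‖dir β‖ = 1 := Complex.norm_exp_ofReal_mul_I β

lemma inner_dir (x y : ℝ) : inner ℝ (dir x) (dir y) = Real.cos (x - y) := by
  rw [Complex.inner, dir, dir, Real.cos_sub]
  simp [Complex.exp_mul_I, ← Complex.ofReal_cos, ← Complex.ofReal_sin]
  ring

@[simp] lemma disp_nil : disp [] = 0 := rfl

@[simp] lemma disp_cons (p : ℂ × ℝ) (P : Steps) : disp (p :: P) = p.1 + disp P := by simp [disp]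

lemma disp_append (P Q : Steps) : disp (P ++ Q) = disp P + disp Q := by simp [disp]

@[simp] lemma len_cons (p : ℂ × ℝ) (P : Steps) : len (p :: P) = ‖p.1‖ + len P := by simp [len]

@[simp] lemma scale_cons (t : ℝ) (p : ℂ × ℝ) (P : Steps) :
    scale t (p :: P) = (t • p.1, p.2) :: scale t P := rfl

@[simp] lemma scale_nil (t : ℝ) : scale t [] = [] := rfl

lemma len_nonneg (P : Steps) : 0 ≤ len P := by
  induction P with
  | nil => simp [len]
  | cons p P ih => rw [len_cons]; positivity

lemma disp_scale (t : ℝ) (P : Steps) : disp (scale t P) = t • disp P := by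
  induction P with
  | nil => simp
  | cons p P ih => simp [ih]

lemma len_scale {t : ℝ} (ht : 0 ≤ t) (P : Steps) : len (scale t P) = t * len P := by
  induction P with
  | nil => simp [len]
  | cons p P ih => simp [ih, mul_add, abs_of_nonneg ht]

lemma length_scale (t : ℝ) (P : Steps) : (scale t P).length = P.length := by simp [scale]

lemma disp_reps (n : ℕ) (P : Steps) : disp (reps n P) = (n : ℝ) • disp P := by
  induction n with
  | zero => simp [reps]
  | succ n ih => rw [reps, disp_append, ih]; push_cast; module

/-- Traversing `n` times the path scaled by `1 / n` gives the same total displacement. -/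
lemma disp_reps_scale {n : ℕ} (hn : 0 < n) (P : Steps) :
    disp (reps n (scale (1 / n) P)) = disp P := by
  have : (n : ℝ) ≠ 0 := by positivity
  rw [disp_reps, disp_scale, smul_smul, mul_one_div_cancel this, one_smul]

lemma mem_trace_singleton (κ : ℝ) (e v : ℂ) (β r : ℝ) :
    r ∈ trace κ e [(v, β)] 0 ↔ κ ≤ inner ℝ e (dir β) ∧ r ∈ uIcc 0 (inner ℝ e v) := by
  simp only [trace, union_empty, mem_ofPred_eq, inner_zero_right, zero_add]

lemma trace_append (κ : ℝ) (e : ℂ) (P Q : Steps) (x : ℂ) :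
    trace κ e (P ++ Q) x = trace κ e P x ∪ trace κ e Q (x + disp P) := by
  induction P generalizing x with
  | nil => simp [trace]
  | cons p P ih => simp [trace, ih, union_assoc, add_assoc]

lemma mem_trace_shift (κ : ℝ) (e : ℂ) (P : Steps) (x y : ℂ) (r : ℝ) :
    r ∈ trace κ e P (x + y) ↔ r - inner ℝ e y ∈ trace κ e P x := by
  induction P generalizing x with
  | nil => simp [trace]
  | cons p P ih =>
    have h := ih (x + p.1)
    rw [add_right_comm] at h
    simp only [trace, mem_union, mem_ofPred_eq, h, inner_add_right, mem_uIcc]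
    grind

lemma volume_trace_shift (κ : ℝ) (e : ℂ) (P : Steps) (x : ℂ) :
    volume (trace κ e P x) = volume (trace κ e P 0) := by
  have : trace κ e P x = (fun r => r + -inner ℝ e x) ⁻¹' trace κ e P 0 := by
    ext r
    have := mem_trace_shift κ e P 0 x r
    rw [zero_add] at this
    rw [this, mem_preimage, sub_eq_add_neg]
  rw [this, measure_preimage_add_right]

lemma mem_trace_scale (κ : ℝ) (e : ℂ) (P : Steps) (x : ℂ) {t : ℝ} (ht : 0 < t) (r : ℝ) :
    r ∈ trace κ e (scale t P) (t • x) ↔ t⁻¹ * r ∈ trace κ e P x := by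
  induction P generalizing x with
  | nil => simp [trace]
  | cons p P ih =>
    have h := ih (x + p.1)
    rw [smul_add] at h
    have key : ∀ a b : ℝ, r ∈ uIcc (t * a) (t * b) ↔ t⁻¹ * r ∈ uIcc a b := by
      intro a b
      simp only [mem_uIcc, inv_mul_le_iff₀ ht, le_inv_mul_iff₀ ht]
    simp only [scale_cons, trace, mem_union, mem_ofPred_eq, h]
    rw [← smul_add, inner_smul_right, inner_smul_right, key]

lemma volume_trace_scale (κ : ℝ) (e : ℂ) (P : Steps) {t : ℝ} (ht : 0 < t) :
    volume (trace κ e (scale t P) 0) = ENNReal.ofReal t * volume (trace κ e P 0) := by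
  have : trace κ e (scale t P) 0 = (fun r => t⁻¹ * r) ⁻¹' trace κ e P 0 := by
    ext r
    have := mem_trace_scale κ e P 0 ht r
    rw [smul_zero] at this
    rw [this, mem_preimage]
  rw [this, Real.volume_preimage_mul_left (by positivity), inv_inv, abs_of_pos ht]

lemma abs_inner_le {e : ℂ} (he : ‖e‖ = 1) (z : ℂ) : |inner ℝ e z| ≤ ‖z‖ := by
  simpa [he] using abs_real_inner_le_norm e z

lemma trace_near {κ : ℝ} {e : ℂ} (he : ‖e‖ = 1) (P : Steps) (x : ℂ) {r : ℝ}
    (hr : r ∈ trace κ e P x) : |r - inner ℝ e x| ≤ len P := by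
  induction P generalizing x with
  | nil => simp [trace] at hr
  | cons p P ih =>
    have h1 := abs_inner_le he p.1
    have h2 := len_nonneg P
    rw [len_cons]
    rcases hr with ⟨-, hr⟩ | hr
    · rw [inner_add_right, mem_uIcc] at hr
      grind
    · have := ih _ hr
      rw [inner_add_right] at this
      grind

lemma mem_trace_reps {κ : ℝ} {e : ℂ} {n : ℕ} {P : Steps} {x : ℂ} {r : ℝ}
    (hr : r ∈ trace κ e (reps n P) x) :
    ∃ k < n, r ∈ trace κ e P (x + (k : ℝ) • disp P) := by
  induction n generalizing x with
  | zero => simp [reps, trace] at hr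
  | succ n ih =>
    rw [reps, trace_append] at hr
    rcases hr with hr | hr
    · exact ⟨0, by omega, by simpa using hr⟩
    · obtain ⟨k, hk, h⟩ := ih hr
      refine ⟨k + 1, by omega, ?_⟩
      have hx : x + ((k + 1 : ℕ) : ℝ) • disp P = x + disp P + (k : ℝ) • disp P := by
        push_cast
        module
      rwa [hx]

/-! ### Paths with small traces -/

/-- `Ach κ v F`: some polygonal path of total displacement `v` has, in every direction `e`, a trace
of measure at most `F e`. -/
def Ach (κ : ℝ) (v : ℂ) (F : ℂ → ENNReal) : Prop :=
  ∃ P : Steps, disp P = v ∧ ∀ e, ‖e‖ = 1 → volume (trace κ e P 0) ≤ F e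

lemma Ach.mono {κ : ℝ} {v : ℂ} {F G : ℂ → ENNReal} (h : Ach κ v F)
    (hFG : ∀ e, ‖e‖ = 1 → F e ≤ G e) : Ach κ v G := by
  obtain ⟨P, h1, h2⟩ := h
  exact ⟨P, h1, fun e he => (h2 e he).trans (hFG e he)⟩

lemma Ach.add {κ : ℝ} {v w : ℂ} {F G : ℂ → ENNReal} (h : Ach κ v F) (h' : Ach κ w G) :
    Ach κ (v + w) (fun e => F e + G e) := by
  obtain ⟨P, h1, h2⟩ := h
  obtain ⟨Q, h3, h4⟩ := h'
  refine ⟨P ++ Q, by rw [disp_append, h1, h3], fun e he => ?_⟩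
  rw [trace_append]
  refine (measure_union_le _ _).trans (add_le_add (h2 e he) ?_)
  rw [volume_trace_shift]
  exact h4 e he

/-- Repeating `n` times the path scaled by `1 / n` does not increase the measure of the traces,
while for large `n` it confines the path to a thin neighbourhood of the segment `[0, v]`, so that
the measure of the trace is also at most about `|⟪e, v⟫|`. -/
lemma Ach.truncate {κ : ℝ} {v : ℂ} {F : ℂ → ENNReal} (h : Ach κ v F) {η : ℝ} (hη : 0 < η) :
    Ach κ v (fun e => min (ENNReal.ofReal (|inner ℝ e v| + η)) (F e)) := by
  obtain ⟨P, h1, h2⟩ := h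
  obtain ⟨n, hn⟩ := exists_nat_gt (2 * len P / η)
  have hn0 : 0 < (n : ℝ) := lt_of_le_of_lt (by have := len_nonneg P; positivity) hn
  have hn0' : 0 < n := by exact_mod_cast hn0
  have hsmall : 2 * (1 / n * len P) ≤ η := by
    rw [div_lt_iff₀ hη] at hn
    rw [one_div_mul_eq_div, ← mul_div_assoc, div_le_iff₀ hn0]
    linarith
  refine ⟨reps n (scale (1 / n) P), by rw [disp_reps_scale hn0', h1], fun e he => le_min ?_ ?_⟩
  · have hsub : trace κ e (reps n (scale (1 / n) P)) 0 ⊆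
        Icc (min 0 (inner ℝ e v) - 1 / n * len P) (max 0 (inner ℝ e v) + 1 / n * len P) := by
      intro r hr
      obtain ⟨k, hk, hr⟩ := mem_trace_reps hr
      have := trace_near he _ _ hr
      rw [len_scale (by positivity), disp_scale, smul_smul, h1, zero_add, inner_smul_right] at this
      have hk0 : 0 ≤ (k : ℝ) * (1 / n) := by positivity
      have hk1 : (k : ℝ) * (1 / n) ≤ 1 := by
        rw [mul_one_div, div_le_one hn0]; exact_mod_cast hk.le
      generalize (k : ℝ) * (1 / n) = q at *
      rw [abs_le] at this
      rcases le_total 0 (inner ℝ e v) with h | h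
      · rw [min_eq_left h, max_eq_right h]
        constructor <;> nlinarith
      · rw [min_eq_right h, max_eq_left h]
        constructor <;> nlinarith
    refine (measure_mono hsub).trans ?_
    rw [Real.volume_Icc]
    apply ENNReal.ofReal_le_ofReal
    rcases le_total 0 (inner ℝ e v) with h | h
    · rw [min_eq_left h, max_eq_right h, abs_of_nonneg h]; linarith
    · rw [min_eq_right h, max_eq_left h, abs_of_nonpos h]; linarith
  · have hsub : trace κ e (reps n (scale (1 / n) P)) 0 ⊆
        ⋃ k ∈ Finset.range n, trace κ e (scale (1 / n) P)
          (0 + (k : ℝ) • disp (scale (1 / n) P)) := by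
      intro r hr
      obtain ⟨k, hk, hr⟩ := mem_trace_reps hr
      simp only [mem_iUnion, Finset.mem_range]
      exact ⟨k, hk, hr⟩
    refine (measure_mono hsub).trans ((measure_biUnion_finset_le _ _).trans ?_)
    simp_rw [volume_trace_shift κ e _ (0 + _), volume_trace_scale κ e P (one_div_pos.2 hn0)]
    rw [Finset.sum_const, Finset.card_range, nsmul_eq_mul, ← mul_assoc, ← ENNReal.ofReal_natCast,
      ← ENNReal.ofReal_mul hn0.le, mul_one_div_cancel hn0.ne', ENNReal.ofReal_one, one_mul]
    exact h2 e he

/-- The vector `u` can be turned through the angle `Λ` by subtracting a vector `w` of length `‖u‖ sin Λ`: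
`u - w` is the orthogonal projection of `u` to the line spanned by `u` rotated by `Λ`. Among the
directions orthogonal to the vectors of the segment `[u, u - w]` are all those of an arc of
length `Λ`. -/
lemma exists_turn {Λ : ℝ} (h0 : 0 ≤ Λ) (h1 : Λ ≤ Real.pi / 2) (u : ℂ) :
    ∃ (w : ℂ) (β : ℝ), ‖w‖ ≤ Real.sin Λ * ‖u‖ ∧ ∀ e : ℂ, ‖e‖ = 1 →
      Real.cos (Λ / 2) ≤ inner ℝ e (dir β) → inner ℝ e u * inner ℝ e (u - w) ≤ 0 := by
  have hpol : ∀ z : ℂ, z = ‖z‖ • dir (Complex.arg z) := by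
    intro z
    rw [dir, Complex.real_smul, Complex.norm_mul_exp_arg_mul_I]
  have hc : 0 ≤ Real.cos Λ := Real.cos_nonneg_of_mem_Icc ⟨by linarith, h1⟩
  have hs : 0 ≤ Real.sin Λ := Real.sin_nonneg_of_nonneg_of_le_pi h0 (by linarith [Real.pi_pos])
  have hw : u - ((Real.cos Λ : ℂ) * dir Λ) * u
      = (Real.sin Λ : ℂ) * (-Complex.I * dir Λ) * u := by
    have : (Real.cos Λ : ℂ) ^ 2 + (Real.sin Λ : ℂ) ^ 2 = 1 := by
      exact_mod_cast Real.cos_sq_add_sin_sq Λ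
    rw [dir, Complex.exp_mul_I, ← Complex.ofReal_cos, ← Complex.ofReal_sin]
    linear_combination (-u) * this + u * (Real.sin Λ : ℂ) ^ 2 * Complex.I_sq
  refine ⟨u - ((Real.cos Λ : ℂ) * dir Λ) * u,
    Complex.arg u + Real.pi / 2 + Λ / 2, ?_, ?_⟩
  · rw [hw]
    rw [norm_mul, norm_mul, norm_mul, norm_neg, Complex.norm_I, norm_dir, Complex.norm_real,
      Real.norm_of_nonneg hs, one_mul, mul_one]
  · intro e he hin
    have hu := hpol u
    have he' := hpol e
    rw [he, one_smul] at he'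
    set ω := Complex.arg e
    set τ := Complex.arg u
    have hrot : (dir Λ) * dir τ = dir (τ + Λ) := by
      simp only [dir]; rw [← Complex.exp_add]; congr 1; push_cast; ring
    have hend : u - (u - ((Real.cos Λ : ℂ) * dir Λ) * u) = (Real.cos Λ * ‖u‖) • dir (τ + Λ) := by
      rw [← hrot, Complex.real_smul, sub_sub_cancel]
      nth_rewrite 1 [hu]
      rw [Complex.real_smul]
      push_cast
      ring
    rw [he', inner_dir] at hin
    rw [hend]
    nth_rewrite 1 [hu]
    rw [he', inner_smul_right, inner_smul_right, inner_dir, inner_dir]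
    have hk : 0 ≤ Real.cos (Λ / 2) :=
      Real.cos_nonneg_of_mem_Icc ⟨by linarith [Real.pi_pos], by linarith [Real.pi_pos]⟩
    -- `cos A * cos (A - Λ) = (cos (2 A - Λ) + cos Λ) / 2`, with `A = ω - τ`
    have hprod : Real.cos (ω - τ) * Real.cos (ω - (τ + Λ))
        = Real.cos (Λ / 2) ^ 2 - Real.cos (ω - (τ + Real.pi / 2 + Λ / 2)) ^ 2 := by
      have e1 : ω - τ = (ω - τ - Λ / 2) + Λ / 2 := by ring
      have e2 : ω - (τ + Λ) = (ω - τ - Λ / 2) - Λ / 2 := by ring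
      have e3 : ω - (τ + Real.pi / 2 + Λ / 2) = (ω - τ - Λ / 2) - Real.pi / 2 := by ring
      rw [e2, e3, e1, add_sub_cancel_right]
      generalize ω - τ - Λ / 2 = A at *
      rw [Real.cos_sub_pi_div_two, Real.cos_add, Real.cos_sub]
      have s1 := Real.sin_sq_add_cos_sq A
      have s2 := Real.sin_sq_add_cos_sq (Λ / 2)
      linear_combination (Real.cos (Λ / 2)) ^ 2 * s1 - Real.sin A ^ 2 * s2
    have hsq : Real.cos (Λ / 2) ^ 2 ≤ Real.cos (ω - (τ + Real.pi / 2 + Λ / 2)) ^ 2 := by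
      gcongr
    have hneg : Real.cos (ω - τ) * Real.cos (ω - (τ + Λ)) ≤ 0 := by rw [hprod]; linarith
    have hpos : 0 ≤ ‖u‖ * (Real.cos Λ * ‖u‖) := by positivity
    nlinarith [mul_nonpos_of_nonneg_of_nonpos hpos hneg]

/-- Discrete intermediate value theorem for the affine function `i ↦ A - B + (i / K) B`. -/
lemma exists_small {A B : ℝ} (h : A * (A - B) ≤ 0) {K : ℕ} (hK : 0 < K) :
    ∃ i ≤ K, |A - B + (i / K : ℝ) * B| ≤ |B| / K := by
  have hK' : 0 < (K : ℝ) := by exact_mod_cast hK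
  rcases eq_or_ne B 0 with rfl | hB
  · have : A = 0 := by nlinarith [sq_nonneg A]
    exact ⟨0, by omega, by simp [this]⟩
  -- the zero of the affine function
  obtain ⟨t, ht⟩ : ∃ t, A - B = -(t * B) := ⟨(B - A) / B, by field_simp; ring⟩
  have hA : A = (1 - t) * B := by linarith
  have hB2 : 0 < B ^ 2 := by positivity
  have hpoly : 0 ≤ (1 - t) * t := by
    rw [ht, hA] at h
    by_contra hcon
    push Not at hcon
    nlinarith
  have ht0 : 0 ≤ t := by nlinarith
  have ht1 : t ≤ 1 := by nlinarith
  have hf1 := Nat.floor_le (mul_nonneg ht0 hK'.le)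
  have hf2 := Nat.lt_floor_add_one (t * K)
  refine ⟨⌊t * K⌋₊, ?_, ?_⟩
  · have : (⌊t * K⌋₊ : ℝ) ≤ K := by nlinarith
    exact_mod_cast this
  · generalize (⌊t * K⌋₊ : ℝ) = q at *
    have : A - B + q / K * B = -((t * K - q) * B / K) := by
      rw [ht]; field_simp; ring
    rw [this, abs_neg, abs_div, abs_mul, abs_of_pos hK', abs_of_nonneg (by linarith : 0 ≤ t * K - q)]
    gcongr
    nlinarith [abs_nonneg B]

/-- One step of the recursion. If every vector `v` has a path with traces of measure `≤ c ‖v‖`,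
then the vector `u` has one with traces of measure `≤ (c sin Λ + 2 δ) ‖u‖`. Turn `u` into `u - w` as
in `exists_turn`, in `K` equal steps, following the good paths of the hypothesis for `w / K`;
then make one straight step `u - w` carrying the arc of the directions crossed. In such a direction
`e` one of the intermediate vectors is almost orthogonal to `e`, so truncating there discards
the contribution of the straight step; in the other directions there is no such contribution. -/
lemma ach_step {Λ : ℝ} (h0 : 0 < Λ) (h1 : Λ < Real.pi / 2) {c : ℝ} (hc : 0 ≤ c)
    (H : ∀ v, Ach (Real.cos (Λ / 2)) v (fun _ => ENNReal.ofReal (c * ‖v‖))) {δ : ℝ} (hδ : 0 < δ)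
    (u : ℂ) :
    Ach (Real.cos (Λ / 2)) u (fun _ => ENNReal.ofReal ((c * Real.sin Λ + 2 * δ) * ‖u‖)) := by
  rcases eq_or_ne u 0 with rfl | hu
  · exact ⟨[], rfl, fun e _ => by simp [trace]⟩
  have hu' : 0 < ‖u‖ := norm_pos_iff.2 hu
  obtain ⟨w, β, hw, hz⟩ := exists_turn h0.le h1.le u
  have hs : 0 ≤ Real.sin Λ := Real.sin_nonneg_of_nonneg_of_le_pi h0.le (by linarith [Real.pi_pos])
  obtain ⟨K, hK⟩ := exists_nat_gt (Real.sin Λ / δ)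
  have hK' : 0 < (K : ℝ) := lt_of_le_of_lt (by positivity) hK
  have hK0 : 0 < K := by exact_mod_cast hK'
  set d := δ * ‖u‖ with hd
  have hd0 : 0 < d := by positivity
  have hwK : ‖w‖ / K ≤ d := by
    rw [div_lt_iff₀ hδ] at hK
    rw [div_le_iff₀ hK']
    nlinarith
  set p : ℕ → ℂ := fun j => u - w + (j / K : ℝ) • w with hp
  set κ := Real.cos (Λ / 2)
  have chain : ∀ j : ℕ, Ach κ (p j) (fun e => open Classical in
      if κ ≤ inner ℝ e (dir β) ∧ ∀ i ≤ j, d < |inner ℝ e (p i)| then ⊤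
      else ENNReal.ofReal (2 * d + j * (c * (‖w‖ / K)))) := by
    intro j
    induction j with
    | zero =>
      refine ⟨[(p 0, β)], by simp, fun e he => ?_⟩
      beta_reduce
      split_ifs with hcond
      · exact le_top
      · by_cases hwin : κ ≤ inner ℝ e (dir β)
        · have hle : |inner ℝ e (p 0)| ≤ d := by
            by_contra hcon
            push Not at hcon
            exact hcond ⟨hwin, fun i hi => by rwa [Nat.le_zero.1 hi]⟩
          have : trace κ e [(p 0, β)] 0 = uIcc 0 (inner ℝ e (p 0)) := by
            ext r
            rw [mem_trace_singleton]
            exact and_iff_right hwin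
          rw [this, Real.volume_interval, sub_zero]
          apply ENNReal.ofReal_le_ofReal
          push_cast
          linarith
        · have : trace κ e [(p 0, β)] 0 = ∅ := by
            ext r
            rw [mem_trace_singleton]
            simp only [hwin, false_and, mem_empty_iff_false]
          rw [this, measure_empty]
          exact zero_le
    | succ j ih =>
      have hstep : p (j + 1) = p j + (1 / K : ℝ) • w := by
        simp only [hp]; push_cast; rw [add_div]; module
      have hn : ‖(1 / K : ℝ) • w‖ = ‖w‖ / K := by
        rw [norm_smul, Real.norm_of_nonneg (by positivity), one_div_mul_eq_div]
      have h2 := ((ih.add (H ((1 / K : ℝ) • w))).truncate hd0)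
      rw [← hstep, hn] at h2
      refine h2.mono fun e he => ?_
      beta_reduce
      split_ifs with c1 c2 c2
      · exact le_top
      · -- only the last vector can be almost orthogonal to `e`
        have hle : |inner ℝ e (p (j + 1))| ≤ d := by
          by_contra hcon
          push Not at hcon
          refine c2 ⟨c1.1, fun i hi => ?_⟩
          rcases Nat.le_succ_iff.1 hi with hi | rfl
          · exact c1.2 i hi
          · exact hcon
        refine (min_le_left _ _).trans (ENNReal.ofReal_le_ofReal ?_)
        have : 0 ≤ ((j + 1 : ℕ) : ℝ) * (c * (‖w‖ / K)) := by positivity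
        linarith
      · exact le_top
      · refine (min_le_right _ _).trans ?_
        rw [← ENNReal.ofReal_add (by positivity) (by positivity)]
        apply ENNReal.ofReal_le_ofReal
        push_cast
        linarith
  have hfin := chain K
  have hpK : p K = u := by
    simp only [hp]; rw [div_self hK'.ne']; module
  rw [hpK] at hfin
  refine hfin.mono fun e he => ?_
  beta_reduce
  rw [if_neg]
  · apply ENNReal.ofReal_le_ofReal
    have : (K : ℝ) * (c * (‖w‖ / K)) = c * ‖w‖ := by field_simp
    rw [this]
    nlinarith
  · rintro ⟨hwin, hall⟩
    have hsign := hz e he hwin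
    rw [inner_sub_right] at hsign
    obtain ⟨i, hi, hsm⟩ := exists_small hsign hK0
    have h3 := hall i hi
    simp only [hp] at h3
    rw [inner_add_right, inner_sub_right, inner_smul_right] at h3
    have h4 : |inner ℝ e w| / K ≤ ‖w‖ / K := by
      gcongr
      exact abs_inner_le he w
    linarith

/-- Every displacement is achieved with traces of arbitrarily small measure, since the recursion
`ach_step` multiplies the bound by nearly `sin Λ < 1`. -/
lemma ach_small {Λ : ℝ} (h0 : 0 < Λ) (h1 : Λ < Real.pi / 2) {c : ℝ} (hc : 0 < c) (v : ℂ) :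
    Ach (Real.cos (Λ / 2)) v (fun _ => ENNReal.ofReal (c * ‖v‖)) := by
  set s := Real.sin Λ
  have hs0 : 0 ≤ s := Real.sin_nonneg_of_nonneg_of_le_pi h0.le (by linarith [Real.pi_pos])
  have hs1 : s < 1 := by
    rw [← Real.sin_pi_div_two]
    exact Real.sin_lt_sin_of_lt_of_le_pi_div_two (by linarith [Real.pi_pos]) le_rfl h1
  have key : ∀ n : ℕ, ∀ v, Ach (Real.cos (Λ / 2)) v
      (fun _ => ENNReal.ofReal (((1 + s) / 2) ^ n * ‖v‖)) := by
    intro n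
    induction n with
    | zero =>
      intro v
      refine ⟨[(v, 0)], by simp, fun e he => ?_⟩
      have hsub : trace (Real.cos (Λ / 2)) e [(v, 0)] 0 ⊆ uIcc 0 (inner ℝ e v) := by
        intro r hr
        exact ((mem_trace_singleton _ _ _ _ _).1 hr).2
      refine (measure_mono hsub).trans ?_
      rw [Real.volume_interval, sub_zero, pow_zero, one_mul]
      exact ENNReal.ofReal_le_ofReal (abs_inner_le he v)
    | succ n ih =>
      intro v
      have hpos : 0 < ((1 + s) / 2) ^ n := by positivity
      have hδ : 0 < ((1 + s) / 2) ^ n * ((1 - s) / 4) := mul_pos hpos (by linarith)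
      refine (ach_step h0 h1 hpos.le ih hδ v).mono fun e he => ?_
      apply le_of_eq
      congr 2
      ring
  obtain ⟨n, hn⟩ := exists_pow_lt_of_lt_one hc (by linarith : (1 + s) / 2 < 1)
  refine (key n v).mono fun e he => ENNReal.ofReal_le_ofReal ?_
  gcongr

/-! ### The swept area -/

/-- The arc of the unit circle with middle `dir β` and half-angle `arccos κ`. -/
def arc (κ β : ℝ) : Set ℂ := {f | ‖f‖ = 1 ∧ κ ≤ inner ℝ f (dir β)}

/-- The region swept by the arcs when the centre, starting at `x`, makes the steps of `P`. -/
noncomputable def sweep (κ : ℝ) : Steps → ℂ → Set ℂ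
  | [], _ => ∅
  | p :: P, x => (segment ℝ x (x + p.1) + arc κ p.2) ∪ sweep κ P (x + p.1)

/-- The unit circles centred at the vertices of the path `P` starting at `x`. -/
noncomputable def circles : Steps → ℂ → Set ℂ
  | [], x => Metric.sphere x 1
  | p :: P, x => Metric.sphere x 1 ∪ circles P (x + p.1)

lemma isCompact_arc (κ β : ℝ) : IsCompact (arc κ β) := by
  have h : arc κ β = Metric.sphere (0 : ℂ) 1 ∩ {f | κ ≤ inner ℝ f (dir β)} := by
    ext f; simp only [arc, mem_ofPred_eq, mem_inter_iff, mem_sphere_zero_iff_norm]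
  rw [h]
  exact (isCompact_sphere _ _).inter_right
    (isClosed_le continuous_const (continuous_id.inner continuous_const))

lemma measurableSet_sweep (κ : ℝ) (P : Steps) (x : ℂ) : MeasurableSet (sweep κ P x) := by
  induction P generalizing x with
  | nil => exact MeasurableSet.empty
  | cons p P ih =>
    refine MeasurableSet.union (IsCompact.measurableSet (IsCompact.add ?_ (isCompact_arc _ _)))
      (ih _)
    rw [segment_eq_image']
    exact isCompact_Icc.image (by fun_prop)

lemma volume_circles (P : Steps) (x : ℂ) : volume (circles P x) = 0 := by
  induction P generalizing x with
  | nil => exact Measure.addHaar_sphere _ _ _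
  | cons p P ih => exact measure_union_null (Measure.addHaar_sphere _ _ _) (ih _)

lemma sweep_append (κ : ℝ) (P Q : Steps) (x : ℂ) :
    sweep κ (P ++ Q) x = sweep κ P x ∪ sweep κ Q (x + disp P) := by
  induction P generalizing x with
  | nil => simp [sweep]
  | cons p P ih => simp [sweep, ih, union_assoc, add_assoc]

lemma sweep_shift (κ : ℝ) (P : Steps) (x y : ℂ) :
    sweep κ P (x + y) = (fun z => z + y) '' sweep κ P x := by
  induction P generalizing x with
  | nil => simp [sweep]
  | cons p P ih =>
    have h := ih (x + p.1)
    rw [add_right_comm] at h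
    have hs : segment ℝ (x + y) (x + y + p.1) = (fun z => y + z) '' segment ℝ x (x + p.1) := by
      rw [segment_translate_image, add_comm x y, add_assoc]
    simp only [sweep, h, image_union, hs]
    congr 1
    ext z
    simp only [mem_add, mem_image]
    constructor
    · rintro ⟨_, ⟨q, hq, rfl⟩, f, hf, rfl⟩
      exact ⟨q + f, ⟨q, hq, f, hf, rfl⟩, by ring⟩
    · rintro ⟨_, ⟨q, hq, f, hf, rfl⟩, rfl⟩
      exact ⟨y + q, ⟨q, hq, rfl⟩, f, hf, by ring⟩

lemma volume_sweep_shift (κ : ℝ) (P : Steps) (x : ℂ) :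
    volume (sweep κ P x) = volume (sweep κ P 0) := by
  rw [← zero_add x, sweep_shift, image_add_right, measure_preimage_add_right]

lemma volume_sweep_reps (κ : ℝ) (n : ℕ) (P : Steps) (x : ℂ) :
    volume (sweep κ (reps n P) x) ≤ n * volume (sweep κ P 0) := by
  induction n generalizing x with
  | zero => simp [reps, sweep]
  | succ n ih =>
    rw [reps, sweep_append]
    refine (measure_union_le _ _).trans ?_
    rw [volume_sweep_shift]
    push_cast
    rw [add_mul, one_mul, add_comm]
    gcongr
    exact ih _

/-- A point `ρ e` of the swept region, for a path close to the origin, has `ρ - 1` close to the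
trace in the direction `e`, up to a second-order error; the arcs of the trace have to be slightly
longer than those of the swept region. -/
lemma slice_sweep {κ κ₀ h : ℝ} (hκ : κ ≤ κ₀ - 2 * h) {e : ℂ} (he : ‖e‖ = 1) {ρ : ℝ} (hρ : 0 < ρ)
    (P : Steps) (x : ℂ) (hx : ‖x‖ + len P ≤ h) (hmem : ρ • e ∈ sweep κ₀ P x) :
    ∃ r ∈ trace κ e P x, ρ - 1 - r ∈ Icc (-(2 * h ^ 2)) 0 := by
  induction P generalizing x with
  | nil => exact absurd hmem (notMem_empty _)
  | cons p P ih =>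
    rw [len_cons] at hx
    have hP := len_nonneg P
    rcases hmem with hmem | hmem
    · obtain ⟨y, hy, f, ⟨hf1, hf2⟩, hyf⟩ := mem_add.1 hmem
      rw [segment_eq_image'] at hy
      obtain ⟨t, ⟨ht0, ht1⟩, hty⟩ := hy
      simp only [add_sub_cancel_left] at hty
      have hyh : ‖y‖ ≤ h := by
        rw [← hty]
        refine (norm_add_le _ _).trans ?_
        rw [norm_smul, Real.norm_of_nonneg ht0]
        nlinarith [norm_nonneg p.1]
      have hρe : ‖ρ • e‖ = ρ := by rw [norm_smul, he, mul_one, Real.norm_of_nonneg hρ.le]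
      have hρh : |1 - ρ| ≤ h := by
        have h3 := abs_norm_sub_norm_le f (ρ • e)
        rw [hf1, hρe, ← hyf] at h3
        have : f - (y + f) = -y := by ring
        rw [this, norm_neg] at h3
        linarith
      have hef : ‖e - f‖ ≤ 2 * h := by
        have : e - f = y + (1 - ρ) • e := by
          rw [sub_smul, one_smul, ← hyf]; ring
        rw [this]
        refine (norm_add_le _ _).trans ?_
        rw [norm_smul, he, mul_one, Real.norm_eq_abs]
        linarith
      have hin : inner ℝ e (y + f) = ρ := by
        rw [hyf, inner_smul_right, real_inner_self_eq_norm_sq, he]; ring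
      rw [inner_add_right] at hin
      have hcos : inner ℝ e f ≤ 1 := by
        simpa [he, hf1] using real_inner_le_norm e f
      have hcos' : 1 - 2 * h ^ 2 ≤ inner ℝ e f := by
        have h4 := norm_sub_sq_real e f
        rw [he, hf1] at h4
        have : ‖e - f‖ ^ 2 ≤ (2 * h) ^ 2 := by gcongr
        nlinarith
      refine ⟨inner ℝ e y, Or.inl ⟨?_, ?_⟩, by constructor <;> linarith⟩
      · have h5 := abs_real_inner_le_norm (e - f) (dir p.2)
        rw [norm_dir, mul_one, inner_sub_left] at h5
        linarith [(abs_le.1 h5).1]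
      · rw [← hty, inner_add_right, inner_add_right, inner_smul_right, mem_uIcc]
        rcases le_total 0 (inner ℝ e p.1) with h6 | h6
        · left; constructor <;> nlinarith
        · right; constructor <;> nlinarith
    · obtain ⟨r, hr, hr'⟩ := ih _ (by linarith [norm_add_le x p.1]) hmem
      exact ⟨r, Or.inr hr, hr'⟩

/-- Thickening a trace increases its measure by at most the thickness times the number of steps. -/
lemma thicken_trace (κ : ℝ) (e : ℂ) (P : Steps) (x : ℂ) (η : ℝ) :
    ∃ D : Set ℝ, volume D ≤ P.length * ENNReal.ofReal η ∧
      ∀ r ∈ trace κ e P x, ∀ q, q - r ∈ Icc (-η) 0 → q ∈ trace κ e P x ∪ D := by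
  induction P generalizing x with
  | nil => exact ⟨∅, by simp, fun r hr => absurd hr (notMem_empty _)⟩
  | cons p P ih =>
    obtain ⟨D, hD, h⟩ := ih (x + p.1)
    set m := min (inner ℝ e x) (inner ℝ e (x + p.1)) with hm
    refine ⟨D ∪ Icc (m - η) m, ?_, ?_⟩
    · refine (measure_union_le _ _).trans ?_
      rw [Real.volume_Icc, List.length_cons]
      push_cast
      rw [add_mul, one_mul, sub_sub_cancel]
      gcongr
    · rintro r (⟨hr1, hr2⟩ | hr) q hq
      · by_cases hqm : q ≤ m
        · refine Or.inr (Or.inr ⟨?_, hqm⟩)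
          have : m ≤ r := hr2.1
          linarith [hq.1]
        · exact Or.inl (Or.inl ⟨hr1, (not_le.1 hqm).le, (by linarith [hq.2] : q ≤ r).trans hr2.2⟩)
      · rcases h r hr q hq with h' | h'
        · exact Or.inl (Or.inr h')
        · exact Or.inr (Or.inl h')

/-- Area estimate by radial slices. -/
lemma volume_le_of_slices {A : Set ℂ} (hA : MeasurableSet A) (hball : ∀ z ∈ A, ‖z‖ ≤ 2)
    {B : ENNReal} (hB : ∀ e : ℂ, ‖e‖ = 1 → volume {ρ : ℝ | 0 < ρ ∧ ρ • e ∈ A} ≤ B) :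
    volume A ≤ ENNReal.ofReal (4 * Real.pi) * B := by
  set D : Set (ℝ × ℝ) := (Ioi 0 ×ˢ Ioo (-Real.pi) Real.pi) ∩ Complex.polarCoord.symm ⁻¹' A with hD
  have hcont : Continuous fun p : ℝ × ℝ => Complex.polarCoord.symm p := by
    simp only [Complex.polarCoord_symm_apply]
    fun_prop
  have hDm : MeasurableSet D :=
    (measurableSet_Ioi.prod measurableSet_Ioo).inter (hcont.measurable hA)
  have hsymm : ∀ p : ℝ × ℝ, Complex.polarCoord.symm p = p.1 • dir p.2 := by
    intro p
    rw [Complex.polarCoord_symm_apply, dir, Complex.exp_mul_I, Complex.real_smul]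
    push_cast
    rfl
  have h1 : volume A ≤ 2 * volume D := by
    rw [← lintegral_indicator_one hA, ← Complex.lintegral_comp_polarCoord_symm,
      ← lintegral_indicator_one hDm,
      ← lintegral_const_mul 2 (measurable_one.indicator hDm)]
    change ∫⁻ p in (Ioi 0 ×ˢ Ioo (-Real.pi) Real.pi), _ ≤ _
    rw [← lintegral_indicator (measurableSet_Ioi.prod measurableSet_Ioo)]
    refine lintegral_mono fun p => ?_
    by_cases hp : p ∈ (Ioi 0 ×ˢ Ioo (-Real.pi) Real.pi : Set (ℝ × ℝ))
    · rw [indicator_of_mem hp]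
      by_cases hpA : Complex.polarCoord.symm p ∈ A
      · have hpD : p ∈ D := ⟨hp, hpA⟩
        rw [indicator_of_mem hpA, indicator_of_mem hpD]
        have h2 := hball _ hpA
        rw [Complex.norm_polarCoord_symm, abs_of_pos hp.1] at h2
        simpa using h2
      · rw [indicator_of_notMem hpA, smul_zero]
        exact zero_le
    · rw [indicator_of_notMem hp]
      exact zero_le
  have h2 : volume D ≤ ENNReal.ofReal (2 * Real.pi) * B := by
    rw [Measure.volume_eq_prod, Measure.prod_apply_symm hDm]
    calc ∫⁻ θ, volume ((fun ρ => (ρ, θ)) ⁻¹' D)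
        ≤ ∫⁻ θ, (Ioo (-Real.pi) Real.pi).indicator (fun _ => B) θ := by
          refine lintegral_mono fun θ => ?_
          by_cases hθ : θ ∈ Ioo (-Real.pi) Real.pi
          · rw [indicator_of_mem hθ]
            refine (measure_mono ?_).trans (hB (dir θ) (norm_dir θ))
            rintro ρ ⟨⟨hρ, -⟩, hmem⟩
            rw [mem_preimage, hsymm] at hmem
            exact ⟨hρ, hmem⟩
          · have : (fun ρ : ℝ => (ρ, θ)) ⁻¹' D = ∅ := by
              ext ρ
              simp only [mem_preimage, mem_empty_iff_false, iff_false]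
              exact fun h => hθ h.1.2
            rw [this, measure_empty]
            exact zero_le
      _ = ENNReal.ofReal (2 * Real.pi) * B := by
          rw [lintegral_indicator_const measurableSet_Ioo, Real.volume_Ioo, mul_comm]
          congr 2
          ring
  calc volume A ≤ 2 * (ENNReal.ofReal (2 * Real.pi) * B) := h1.trans (by gcongr)
    _ = ENNReal.ofReal (4 * Real.pi) * B := by
      rw [← mul_assoc]
      congr 1
      rw [show (2 : ENNReal) = ENNReal.ofReal 2 by simp, ← ENNReal.ofReal_mul (by norm_num)]
      congr 1
      ring

lemma volume_sweep_le {κ κ₀ : ℝ} (P : Steps) {h m : ℝ} (hκ : κ ≤ κ₀ - 2 * h) (hh : h ≤ 1)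
    (hP : len P ≤ h) (hm : 0 ≤ m)
    (htr : ∀ e, ‖e‖ = 1 → volume (trace κ e P 0) ≤ ENNReal.ofReal m) :
    volume (sweep κ₀ P 0) ≤ ENNReal.ofReal (4 * Real.pi * (m + P.length * (2 * h ^ 2))) := by
  have hlen : ‖(0 : ℂ)‖ + len P ≤ h := by simpa using hP
  have hball : ∀ (Q : Steps) (x : ℂ), ‖x‖ + len Q ≤ 1 → ∀ z ∈ sweep κ₀ Q x, ‖z‖ ≤ 2 := by
    intro Q
    induction Q with
    | nil => intro x _ z hz; exact absurd hz (notMem_empty _)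
    | cons p Q ih =>
      intro x hx z hz
      rw [len_cons] at hx
      have hQ := len_nonneg Q
      rcases hz with hz | hz
      · obtain ⟨y, hy, f, ⟨hf1, -⟩, rfl⟩ := mem_add.1 hz
        have hy1 : y ∈ Metric.closedBall (0 : ℂ) 1 := by
          refine (convex_closedBall (0 : ℂ) 1).segment_subset ?_ ?_ hy
          · rw [mem_closedBall_zero_iff]; linarith [norm_nonneg p.1]
          · rw [mem_closedBall_zero_iff]; linarith [norm_add_le x p.1]
        rw [mem_closedBall_zero_iff] at hy1
        linarith [norm_add_le y f]
      · exact ih _ (by linarith [norm_add_le x p.1]) z hz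
  have hB := volume_le_of_slices (A := sweep κ₀ P 0)
    (B := ENNReal.ofReal (m + P.length * (2 * h ^ 2)))
    (measurableSet_sweep κ₀ P 0) (hball P 0 (by linarith)) ?_
  · rwa [← ENNReal.ofReal_mul (by positivity)] at hB
  intro e he
  obtain ⟨D, hD, hthick⟩ := thicken_trace κ e P 0 (2 * h ^ 2)
  have hsub : {ρ : ℝ | 0 < ρ ∧ ρ • e ∈ sweep κ₀ P 0} ⊆
      (fun ρ => ρ + -1) ⁻¹' (trace κ e P 0 ∪ D) := by
    rintro ρ ⟨hρ, hmem⟩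
    obtain ⟨r, hr, hr'⟩ := slice_sweep hκ he hρ P 0 hlen hmem
    exact hthick r hr _ hr'
  refine (measure_mono hsub).trans ?_
  rw [measure_preimage_add_right]
  refine (measure_union_le _ _).trans ((add_le_add (htr e he) hD).trans (le_of_eq ?_))
  rw [← ENNReal.ofReal_natCast, ← ENNReal.ofReal_mul (by positivity), ← ENNReal.ofReal_add hm]
  positivity

/-- Every displacement of the centre is achieved by steps whose arcs sweep an arbitrarily small
area: cut the displacement into `n` equal parts, and follow on each of them a path with small traces,
for which the second-order error of the area is `O(1 / n ^ 2)`. -/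
lemma exists_small_sweep {Λ : ℝ} (h0 : 0 < Λ) (h1 : Λ < Real.pi / 2) {κ₀ : ℝ}
    (hκ : Real.cos (Λ / 2) < κ₀) (x v : ℂ) {ε : ℝ} (hε : 0 < ε) :
    ∃ P : Steps, disp P = v ∧ volume (sweep κ₀ P x) < ENNReal.ofReal ε := by
  have hpi := Real.pi_pos
  set c := ε / (8 * Real.pi * (‖v‖ + 1)) with hc
  have hc0 : 0 < c := by positivity
  have hcv : 4 * Real.pi * (c * ‖v‖) ≤ ε / 2 := by
    rw [hc, div_mul_eq_mul_div, ← mul_div_assoc, div_le_div_iff₀ (by positivity) (by norm_num)]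
    have : 0 < ε * Real.pi := by positivity
    nlinarith
  obtain ⟨P, hP, htr⟩ := ach_small h0 h1 hc0 v
  set R := len P
  have hR : 0 ≤ R := len_nonneg P
  have e1 := (tendsto_const_div_atTop_nhds_zero_nat (4 * Real.pi * (P.length * (2 * R ^ 2)))).eventually
    (gt_mem_nhds (half_pos hε))
  have e2 := (tendsto_const_div_atTop_nhds_zero_nat R).eventually
    (gt_mem_nhds (show 0 < min 1 ((κ₀ - Real.cos (Λ / 2)) / 2) from
      lt_min one_pos (by linarith)))
  obtain ⟨n, ⟨hn1, hn2⟩, hn⟩ := ((e1.and e2).and (Filter.eventually_gt_atTop 0)).exists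
  have hn0 : 0 < (n : ℝ) := by exact_mod_cast hn
  have hn3 := hn2.trans_le (min_le_left _ _)
  have hn4 := hn2.trans_le (min_le_right _ _)
  refine ⟨reps n (scale (1 / n) P), by rw [disp_reps_scale hn, hP], ?_⟩
  have hvol := volume_sweep_le (κ := Real.cos (Λ / 2)) (κ₀ := κ₀) (scale (1 / n) P)
    (h := R / n) (m := 1 / n * (c * ‖v‖)) (by linarith) hn3.le
    (by rw [len_scale (by positivity), one_div_mul_eq_div]) (by positivity) (by
      intro e he
      rw [volume_trace_scale _ _ _ (by positivity), ENNReal.ofReal_mul (by positivity)]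
      gcongr
      exact htr e he)
  refine (volume_sweep_reps _ _ _ _).trans_lt ?_
  refine (mul_le_mul_right hvol _).trans_lt ?_
  rw [← ENNReal.ofReal_natCast, ← ENNReal.ofReal_mul hn0.le, ENNReal.ofReal_lt_ofReal_iff hε,
    length_scale]
  have : (n : ℝ) * (4 * Real.pi * (1 / n * (c * ‖v‖) + P.length * (2 * (R / n) ^ 2)))
      = 4 * Real.pi * (c * ‖v‖) + 4 * Real.pi * (P.length * (2 * R ^ 2)) / n := by
    field_simp
  rw [this]
  linarith

/-! ### The motion -/

/-- Positions of the arc `dir '' [a, b]` inside the set `S`: the pair `(x, α)` stands for the arc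
rotated by the angle `α` about the origin, the centre of its circle, and then translated by `x`. -/
def positions (a b : ℝ) (S : Set ℂ) : Set (ℂ × ℝ) :=
  {g | ∀ ψ ∈ Icc a b, g.1 + dir (g.2 + ψ) ∈ S}

lemma positions_mono {a b : ℝ} {S T : Set ℂ} (h : S ⊆ T) : positions a b S ⊆ positions a b T :=
  fun _ hg ψ hψ => h (hg ψ hψ)

/-- Turning an arc about the centre of its circle stays inside the circle. -/
lemma joined_spin (a b : ℝ) {S : Set ℂ} {x : ℂ} (hS : Metric.sphere x 1 ⊆ S) (α α' : ℝ) :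
    JoinedIn (positions a b S) (x, α) (x, α') := by
  apply JoinedIn.of_segment_subset
  rw [← Prod.image_mk_segment_right]
  rintro _ ⟨t, -, rfl⟩ ψ -
  apply hS
  simp [norm_dir]

/-- The motion along a path: before each step the arc is turned into the prescribed position. -/
lemma joined_steps {a b : ℝ} (hab : a ≤ b) (hpi : b - a ≤ Real.pi) (P : Steps) (x : ℂ)
    (α α' : ℝ) :
    JoinedIn (positions a b (sweep (Real.cos ((b - a) / 2)) P x ∪ circles P x))
      (x, α) (x + disp P, α') := by
  induction P generalizing x α with
  | nil =>
    rw [disp_nil, add_zero]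
    exact joined_spin a b subset_union_right α α'
  | cons p P ih =>
    set α₁ := p.2 - (a + b) / 2 with hα₁
    have hspin := joined_spin a b (x := x)
      (S := sweep (Real.cos ((b - a) / 2)) (p :: P) x ∪ circles (p :: P) x)
      (fun z hz => Or.inr (Or.inl hz)) α α₁
    refine hspin.trans (JoinedIn.trans (y := (x + p.1, α₁)) ?_ ?_)
    · apply JoinedIn.of_segment_subset
      rw [← Prod.image_mk_segment_left]
      rintro _ ⟨y, hy, rfl⟩ ψ hψ
      refine Or.inl (Or.inl (Set.add_mem_add hy ⟨norm_dir _, ?_⟩))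
      have : inner ℝ (dir (α₁ + ψ)) (dir p.2) = Real.cos (ψ - (a + b) / 2) := by
        rw [inner_dir, hα₁]
        congr 1
        ring
      dsimp only
      rw [this, ← Real.cos_abs (ψ - (a + b) / 2)]
      apply Real.cos_le_cos_of_nonneg_of_le_pi (abs_nonneg _) (by linarith)
      rw [abs_le]
      constructor <;> linarith [hψ.1, hψ.2]
    · have := ih (x + p.1) α₁
      rw [disp_cons, ← add_assoc]
      refine this.mono (positions_mono ?_)
      exact union_subset_union subset_union_right subset_union_right

end ArcKakeya

open ArcKakeya

/-- Let σ₀ be a circular arc of radius 1 and arc length < 1.32 (parametrized as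
`σ₀ = circleMap O 1 '' Icc a b` with `b - a < 1.32`), and let σ₁ be obtained from σ₀ by a
rotation of the plane about one of the endpoints `circleMap O 1 a`, `circleMap O 1 b` of σ₀.
Then for every ε > 0 there is a continuous path of orientation-preserving isometries
(represented as `z ↦ u z + v` with `‖u‖ = 1`), starting at the identity, carrying σ₀ to σ₁,
whose touched set has Lebesgue measure less than ε. -/
theorem kakeya_arc_rotation_about_endpoint
    (O : ℂ) (a b : ℝ) (hab : a ≤ b) (hlen : b - a < 1.32)
    (σ₀ σ₁ : Set ℂ) (hσ₀ : σ₀ = circleMap O 1 '' Set.Icc a b)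
    (e : ℂ) (he : e = circleMap O 1 a ∨ e = circleMap O 1 b)
    (φ : ℝ)
    (hσ₁ : σ₁ = (fun z => e + Complex.exp (φ * Complex.I) * (z - e)) '' σ₀)
    (ε : ℝ) (hε : 0 < ε) :
    ∃ γ : ℝ → ℂ × ℂ,
      ContinuousOn γ (Set.Icc 0 1) ∧
      (∀ t ∈ Set.Icc (0:ℝ) 1, ‖(γ t).1‖ = 1) ∧
      γ 0 = (1, 0) ∧
      (fun z => (γ 1).1 * z + (γ 1).2) '' σ₀ = σ₁ ∧
      volume (⋃ t ∈ Set.Icc (0:ℝ) 1, (fun z => (γ t).1 * z + (γ t).2) '' σ₀)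
        < ENNReal.ofReal ε := by
  -- the centre of the circle of σ₁
  set O' : ℂ := e + dir φ * (O - e) with hO'
  have hpi := Real.pi_gt_three
  -- `7 / 5` is any angle strictly between `1.32` and `π / 2`
  have hκ : Real.cos ((7 / 5 : ℝ) / 2) < Real.cos ((b - a) / 2) := by
    apply Real.cos_lt_cos_of_nonneg_of_le_pi <;> linarith
  obtain ⟨P, hP, hvol⟩ := exists_small_sweep (Λ := 7 / 5) (by norm_num) (by linarith) hκ O
    (O' - O) hε
  have hj := joined_steps hab (by linarith) P O 0 φ
  set S := sweep (Real.cos ((b - a) / 2)) P O ∪ circles P O with hS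
  have hSvol : volume S < ENNReal.ofReal ε := by
    refine (measure_union_le _ _).trans_lt ?_
    rwa [volume_circles, add_zero]
  rw [hP, add_sub_cancel] at hj
  obtain ⟨f, hf⟩ := hj
  set g : ℝ → ℂ × ℝ := fun t => f.extend t with hg
  have hgc : Continuous g := f.continuous_extend
  have hg0 : g 0 = (O, 0) := f.extend_zero
  have hg1 : g 1 = (O', φ) := f.extend_one
  have hgS : ∀ t ∈ Icc (0 : ℝ) 1, g t ∈ positions a b S := by
    intro t ht
    have : g t = f ⟨t, ht⟩ := f.extend_apply ht
    rw [this]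
    exact hf _
  refine ⟨fun t => (dir (g t).2, (g t).1 - dir (g t).2 * O), ?_, fun t _ => norm_dir _, ?_, ?_, ?_⟩
  · apply Continuous.continuousOn
    unfold dir
    fun_prop
  · simp [hg0, dir]
  · rw [hσ₁]
    congr 1
    funext z
    simp only [hg1, hO', dir]
    ring
  · refine (measure_mono ?_).trans_lt hSvol
    intro z hz
    simp only [mem_iUnion] at hz
    obtain ⟨t, ht, w, hw, rfl⟩ := hz
    rw [hσ₀] at hw
    obtain ⟨ψ, hψ, rfl⟩ := hw
    have := hgS t ht ψ hψ
    convert this using 1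
    simp only [circleMap, dir]
    push_cast
    rw [add_mul, Complex.exp_add]
    ring
end

section
/- Let K be the circle of radius 1 and centre O in ℝ², let P be a point in the interior of K with dist(P, K) = d < 1/2, and let Q ∈ K be a point such that the triangle with vertices P, O, Q is positively oriented. If |PQ| ≥ 2√d, then there exists an angle α with 0 < α < π/2 and sin α < 2√d such that the circle K′ obtained by rotating K about the point Q by angle α in the positive (counter-clockwise) direction contains P; moreover, the distance between O and the centre of K′ is less than 4√d. -/
open Metric

/-!
Put `r = |PQ|`, `c = r / 2`, and let `ψ` be the angle at `Q` from `QP` to `QO`; orientation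
gives `0 < ψ`. The rotated circle passes through `P` exactly when `cos (ψ + α) = c`, so the angle
is `α = arccos c - ψ`. The law of cosines gives `cos ψ = c + e` with `4 c e = 1 - |PO|² < 2 d`,
hence `0 < e` and `0 < α < π / 2`.

The bound `sin α < 2 √d` (see `exists_rotation_angle`) has two cases.
For `c ≥ 1 / 4`, `1 - cos α ≤ cos ψ - c = e < 2 d`, so `sin² α ≤ 2 e < 4 d`.
For `c < 1 / 4`, `sin α * sin (arccos c + ψ) = cos² ψ - c²` gives `sin α ≤ 4 e`, and
`c ≥ √d` gives `e < √d / 2`.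
Finally `|OO'|² = 2 (1 - cos α) ≤ 2 sin² α < 8 d`.
-/

/-- The trigonometric core: `y = cos ψ`, `s = sin ψ`, and `t = √d`. -/
lemma exists_rotation_angle {c y s t : ℝ} (hc : 0 < c) (hs : 0 < s) (hys : y ^ 2 + s ^ 2 = 1)
    (hcy : c < y) (hce : 4 * c * (y - c) < 2 * t ^ 2) (ht : 0 < t) (htc : t ≤ c) :
    ∃ α : ℝ, 0 < α ∧ α < Real.pi / 2 ∧ Real.sin α < 2 * t ∧
      y * Real.cos α - s * Real.sin α = c := by
  have hy1 : y < 1 := by nlinarith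
  have hcosβ : Real.cos (Real.arccos c) = c := Real.cos_arccos (by linarith) (by linarith)
  have hcosψ : Real.cos (Real.arccos y) = y := Real.cos_arccos (by linarith) (by linarith)
  have hsinψ : Real.sin (Real.arccos y) = s := by
    rw [Real.sin_arccos, show 1 - y ^ 2 = s ^ 2 by linarith, Real.sqrt_sq hs.le]
  have hψ : 0 < Real.arccos y := Real.arccos_pos.2 hy1
  have hβ : Real.arccos c < Real.pi / 2 := Real.arccos_lt_pi_div_two.2 hc
  have hψβ : Real.arccos y < Real.arccos c :=
    Real.arccos_lt_arccos (by linarith) hcy hy1.le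
  have hS0 : 0 ≤ Real.sin (Real.arccos c) :=
    Real.sin_nonneg_of_nonneg_of_le_pi (Real.arccos_nonneg c) (Real.arccos_le_pi c)
  have hSc := Real.sin_sq_add_cos_sq (Real.arccos c)
  refine ⟨Real.arccos c - Real.arccos y, by linarith, by linarith, ?_, ?_⟩
  · have hα : 0 < Real.sin (Real.arccos c - Real.arccos y) :=
      Real.sin_pos_of_pos_of_lt_pi (by linarith) (by linarith [Real.pi_pos])
    have hsc := Real.sin_sq_add_cos_sq (Real.arccos c - Real.arccos y)
    have hsin := Real.sin_sub (Real.arccos c) (Real.arccos y)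
    have hcos := Real.cos_sub (Real.arccos c) (Real.arccos y)
    rw [hcosβ, hcosψ, hsinψ] at hsin hcos
    rw [hcosβ] at hSc
    have hle := Real.cos_le_one (Real.arccos c - Real.arccos y)
    generalize Real.sin (Real.arccos c - Real.arccos y) = A at *
    generalize Real.cos (Real.arccos c - Real.arccos y) = B at *
    generalize Real.sin (Real.arccos c) = S at *
    rcases le_or_gt (1 / 4) c with h | h
    · -- `(1 + c)(1 - y) ≤ (1 - c)(1 + y)`, and the product of the two sides is `(S s)²`.
      have h1 : (1 + c) * (1 - y) ≤ S * s := by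
        refine le_of_abs_le (abs_le_of_sq_le_sq ?_ (by positivity))
        have h2 : (S * s) ^ 2 = ((1 + c) * (1 - y)) * ((1 - c) * (1 + y)) := by
          rw [mul_pow, show S ^ 2 = 1 - c ^ 2 by linarith, show s ^ 2 = 1 - y ^ 2 by linarith]
          ring
        rw [h2, sq]
        apply mul_le_mul_of_nonneg_left (by nlinarith)
        exact mul_nonneg (by linarith) (by linarith)
      have h3 : 1 - B ≤ y - c := by rw [hcos]; linarith
      have h4 : y - c < 2 * t ^ 2 := by nlinarith
      apply lt_of_pow_lt_pow_left₀ 2 (by linarith)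
      nlinarith
    · have hS : 1 / 2 ≤ S := by nlinarith
      have h1 : A * (S * y + c * s) = (y - c) * (y + c) := by
        rw [hsin]
        linear_combination y ^ 2 * hSc - c ^ 2 * hys
      have h2 : A * (y / 2) ≤ A * (S * y + c * s) := by
        apply mul_le_mul_of_nonneg_left _ hα.le
        nlinarith [mul_pos hc hs]
      have h3 : A * (y / 2) ≤ 4 * (y - c) * (y / 2) := by nlinarith
      have h4 : A ≤ 4 * (y - c) := le_of_mul_le_mul_right h3 (by linarith)
      have h5 : y - c < t / 2 := by
        by_contra! h6
        nlinarith [mul_le_mul htc h6 (by linarith) hc.le]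
      linarith
  · have h := Real.cos_add (Real.arccos y) (Real.arccos c - Real.arccos y)
    rw [add_sub_cancel, hcosβ, hcosψ, hsinψ] at h
    exact h.symm

/-- Lemma 1 (i): `K` is the circle (sphere) of radius 1 and centre `O`, `P` is in
the interior of `K` at distance `d < 1/2` from `K`, `Q ∈ K`, the triangle `(P, O, Q)` is
positively oriented (its signed area `im(conj (O - P) * (Q - P)) / 2` is positive), and
`|PQ| ≥ 2√d`. Then there is `0 < α < π/2` with `sin α < 2√d` such that the circle `K'` obtained
by rotating `K` about `Q` by angle `α` counter-clockwise (so `K'` is the sphere of radius 1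
centred at the image `Q + e^{iα}(O - Q)` of `O`) contains `P`; moreover the distance between
`O` and the centre of `K'` is less than `4√d`. -/
theorem rotate_circle_to_catch_interior_point
    (O P Q : ℂ) (d : ℝ)
    (hd : Metric.infDist P (Metric.sphere O 1) = d)
    (hd2 : d < 1 / 2)
    (hint : dist P O < 1)
    (hQ : Q ∈ Metric.sphere O 1)
    (horient : 0 < ((starRingEnd ℂ) (O - P) * (Q - P)).im)
    (hPQ : dist P Q ≥ 2 * Real.sqrt d) :
    ∃ α : ℝ, 0 < α ∧ α < Real.pi / 2 ∧ Real.sin α < 2 * Real.sqrt d ∧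
      P ∈ Metric.sphere (Q + Complex.exp (α * Complex.I) * (O - Q)) 1 ∧
      dist O (Q + Complex.exp (α * Complex.I) * (O - Q)) < 4 * Real.sqrt d := by
  have hd' : 1 - dist P O ≤ d := by
    rw [← hd]
    refine (le_infDist ⟨Q, hQ⟩).2 fun X hX => ?_
    have h1 := dist_triangle X P O
    rw [mem_sphere] at hX
    rw [dist_comm P X]
    linarith
  have hd0 : 0 < d := by linarith
  have ht : 0 < Real.sqrt d := Real.sqrt_pos.2 hd0
  have htsq : Real.sqrt d ^ 2 = d := Real.sq_sqrt hd0.le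
  have hρ0 : 0 ≤ dist P O := dist_nonneg
  have hρ : dist P O ^ 2 = (P.re - O.re) ^ 2 + (P.im - O.im) ^ 2 := by
    rw [Complex.dist_eq_re_im, Real.sq_sqrt (by positivity)]
  have hr : dist P Q ^ 2 = (P.re - Q.re) ^ 2 + (P.im - Q.im) ^ 2 := by
    rw [Complex.dist_eq_re_im, Real.sq_sqrt (by positivity)]
  have hu : (Q.re - O.re) ^ 2 + (Q.im - O.im) ^ 2 = 1 := by
    have h : dist Q O ^ 2 = (Q.re - O.re) ^ 2 + (Q.im - O.im) ^ 2 := by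
      rw [Complex.dist_eq_re_im, Real.sq_sqrt (by positivity)]
    rw [mem_sphere.1 hQ] at h
    linarith
  simp only [Complex.mul_im, Complex.conj_re, Complex.conj_im, Complex.sub_re,
    Complex.sub_im] at horient
  generalize dist P Q = r at *
  generalize dist P O = ρ at *
  have hr0 : 0 < r := by linarith
  -- `x + v i` is `(P - Q) * conj (O - Q)`, that is, `r * exp (-ψ i)`.
  obtain ⟨x, hx⟩ : ∃ x, x = (P.re - Q.re) * (O.re - Q.re) + (P.im - Q.im) * (O.im - Q.im) :=
    ⟨_, rfl⟩
  obtain ⟨v, hv⟩ : ∃ v, v = (P.im - Q.im) * (O.re - Q.re) - (P.re - Q.re) * (O.im - Q.im) :=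
    ⟨_, rfl⟩
  have hv0 : v < 0 := by rw [hv]; linarith
  have hxv : x ^ 2 + v ^ 2 = r ^ 2 := by
    rw [hr, hx, hv]
    linear_combination ((P.re - Q.re) ^ 2 + (P.im - Q.im) ^ 2) * hu
  have hcosine : 2 * x = r ^ 2 + 1 - ρ ^ 2 := by
    rw [hr, hρ, hx]
    linear_combination hu
  have hxr : x / r * r = x := div_mul_cancel₀ _ hr0.ne'
  have hdiff : 4 * (r / 2) * (x / r - r / 2) = 1 - ρ ^ 2 := by
    linear_combination 2 * hxr + hcosine
  obtain ⟨α, hα0, hα1, hα2, hα3⟩ := exists_rotation_angle (c := r / 2) (y := x / r)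
    (s := -v / r) (t := Real.sqrt d) (by linarith) (div_pos (by linarith) hr0)
    (by field_simp; linarith)
    (by
      by_contra! h
      nlinarith [mul_nonneg hr0.le (sub_nonneg.2 h)])
    (by rw [hdiff, htsq]; nlinarith) ht (by linarith)
  have hα4 : x * Real.cos α + v * Real.sin α = r ^ 2 / 2 := by
    field_simp at hα3
    linarith
  have hsc := Real.sin_sq_add_cos_sq α
  have hcos0 : 0 < Real.cos α := Real.cos_pos_of_mem_Ioo ⟨by linarith, hα1⟩
  have hsin0 : 0 < Real.sin α := Real.sin_pos_of_pos_of_lt_pi hα0 (by linarith)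
  refine ⟨α, hα0, hα1, hα2, ?_, ?_⟩
  · rw [mem_sphere, Complex.dist_eq_re_im, Real.sqrt_eq_one]
    simp only [Complex.add_re, Complex.add_im, Complex.mul_re, Complex.mul_im, Complex.sub_re,
      Complex.sub_im, Complex.exp_ofReal_mul_I_re, Complex.exp_ofReal_mul_I_im]
    rw [hr, hx, hv] at hα4
    linear_combination (-2) * hα4 + ((Q.re - O.re) ^ 2 + (Q.im - O.im) ^ 2) * hsc + hu
  · rw [Complex.dist_eq_re_im, Real.sqrt_lt' (by linarith)]
    simp only [Complex.add_re, Complex.add_im, Complex.mul_re, Complex.mul_im, Complex.sub_re,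
      Complex.sub_im, Complex.exp_ofReal_mul_I_re, Complex.exp_ofReal_mul_I_im]
    have h1 : 1 - Real.cos α ≤ Real.sin α ^ 2 := by nlinarith [Real.cos_le_one α]
    have h2 : Real.sin α ^ 2 < (2 * Real.sqrt d) ^ 2 := pow_lt_pow_left₀ hα2 hsin0.le two_ne_zero
    calc _ = 2 * (1 - Real.cos α) := by
          linear_combination (2 - 2 * Real.cos α) * hu +
            ((Q.re - O.re) ^ 2 + (Q.im - O.im) ^ 2) * hsc
      _ < 4 * (2 * Real.sqrt d) ^ 2 := by linarith [sq_nonneg (Real.sin α)]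
      _ = _ := by ring
end

section
/- Let K be the circle of radius 1 and centre O in ℝ², let P be a point in the exterior of K with dist(P, K) = d < 1/2, and let Q ∈ K be a point such that the triangle with vertices P, O, Q is positively oriented. If 3√d ≤ |PQ| ≤ 2 − d, then there exists an angle α with 0 < α < π/2 and sin α < 2√d such that the circle K′ obtained by rotating K about the point Q by angle α in the negative (clockwise) direction contains P; moreover, the distance between O and the centre of K′ is less than 4√d. -/
open Metric

/-!
Put `Q` at the origin, let `r = |PQ|`, and let `θ` be the angle from `P` to `O` seen from `Q`, which
lies in `(0, π)` by the orientation hypothesis. As `|PO| = 1 + d`, the law of cosines gives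
`2 r cos θ = r² - (2d + d²)`. Rotating clockwise by `α` replaces `θ` by `θ - α`, and the rotated
circle passes through `P` exactly when `2 cos (θ - α) = r`. The choice is therefore `α = θ - φ` with
`φ = arccos (r / 2)`. Since `r² ≥ 9d ≥ 2d + d²`, we have `0 < φ < θ ≤ π / 2`.

The bounds come from `cos φ - cos θ = 2 sin (α / 2) sin ((θ + φ) / 2) ≥ 2 sin (α / 2) sin φ`, which
says `2 sin (α / 2) ≤ (2d + d²) / (r √(4 - r²))`. The right side is less than `2 √d` because
`r² (4 - r²)` is bounded below by a multiple of `d` for `r²` between `9d` and `(2 - d)²`: it is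
at least `18d` if `r² ≤ 2` and at least `6d` otherwise (`quadratic_bound`). Finally
`sin α ≤ 2 sin (α / 2)`, and `2 sin (α / 2)` is the distance between the two centres.
-/

lemma infDist_unit_sphere_of_exterior (O P : ℂ) (h : 1 < dist P O) :
    infDist P (sphere O 1) = dist P O - 1 := by
  have hpos : 0 < ‖P - O‖ := by rw [← dist_eq_norm]; linarith
  -- The nearest point of the circle is the radial projection of `P`.
  have hmem : O + ((‖P - O‖⁻¹ : ℝ) : ℂ) * (P - O) ∈ sphere O 1 := by
    rw [mem_sphere, dist_eq_norm, add_sub_cancel_left, norm_mul, Complex.norm_real, norm_inv,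
      norm_norm, inv_mul_cancel₀ hpos.ne']
  apply le_antisymm
  · refine (infDist_le_dist_of_mem hmem).trans (le_of_eq ?_)
    have e : P - (O + ((‖P - O‖⁻¹ : ℝ) : ℂ) * (P - O))
        = ((1 - ‖P - O‖⁻¹ : ℝ) : ℂ) * (P - O) := by push_cast; ring
    have h1 : ‖P - O‖⁻¹ ≤ 1 := by
      apply inv_le_one_of_one_le₀; rw [← dist_eq_norm]; exact h.le
    rw [dist_eq_norm, e, norm_mul, Complex.norm_real, Real.norm_of_nonneg (by linarith),
      dist_eq_norm]
    field_simp
  · rw [le_infDist ⟨_, hmem⟩]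
    intro y hy
    have := dist_triangle P y O
    rw [mem_sphere] at hy
    linarith

/-- The estimate `(2d + d²)² < 4d · s (4 - s)` for `s = r²` between `9d` and `(2 - d)²`. -/
lemma quadratic_bound (d s : ℝ) (hd : 0 < d) (hd2 : d < 1 / 2) (h1 : 9 * d ≤ s)
    (h2 : s ≤ (2 - d) ^ 2) : (2 * d + d ^ 2) ^ 2 < 4 * d * (s * (4 - s)) := by
  have hq : d * (2 + d) ^ 2 < 4 * (s * (4 - s)) := by
    rcases le_total s 2 with hs | hs
    · have h3 : 18 * d ≤ s * (4 - s) := by nlinarith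
      have h4 : (2 + d) ^ 2 < 9 := by nlinarith
      nlinarith [mul_lt_mul_of_pos_left h4 hd]
    · have h4 : 3 * d ≤ 4 - s := by nlinarith
      nlinarith
  nlinarith [mul_lt_mul_of_pos_left hq hd]

/-- The angle `α = θ - φ`, `φ = arccos (r / 2)`, and the bound on `sin (α / 2)`. -/
lemma exists_angle (d r θ : ℝ) (hd : 0 < d) (hd2 : d < 1 / 2) (hr : 0 < r)
    (h1 : 9 * d ≤ r ^ 2) (h2 : r ≤ 2 - d) (hθ0 : 0 < θ) (hθπ : θ < Real.pi)
    (hcos : 2 * r * Real.cos θ = r ^ 2 - (2 * d + d ^ 2)) :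
    ∃ α : ℝ, 0 < α ∧ α < Real.pi / 2 ∧ 2 * Real.cos (θ - α) = r ∧
      2 * Real.sin (α / 2) < 2 * Real.sqrt d := by
  have hcφ : Real.cos (Real.arccos (r / 2)) = r / 2 :=
    Real.cos_arccos (by linarith) (by linarith)
  have hφ0 : 0 < Real.arccos (r / 2) := Real.arccos_pos.2 (by linarith)
  set φ := Real.arccos (r / 2) with hφ
  have hcθ : 0 ≤ Real.cos θ := by
    by_contra hneg
    push Not at hneg
    nlinarith
  have hθ2 : θ ≤ Real.pi / 2 := by
    by_contra hgt
    push Not at hgt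
    have := Real.cos_neg_of_pi_div_two_lt_of_lt hgt (by linarith)
    linarith
  have hlt : φ < θ := by
    by_contra hle
    push Not at hle
    have := Real.cos_le_cos_of_nonneg_of_le_pi hθ0.le (Real.arccos_le_pi _) hle
    rw [hcφ] at this
    nlinarith
  have hsφ0 : 0 < Real.sin φ := Real.sin_pos_of_pos_of_lt_pi hφ0 (by linarith)
  have hsφ : Real.sin φ ^ 2 = 1 - r ^ 2 / 4 := by
    rw [Real.sin_sq, hcφ]; ring
  have hmono : Real.sin φ ≤ Real.sin ((θ + φ) / 2) :=
    Real.sin_le_sin_of_le_of_le_pi_div_two (by linarith) (by linarith) (by linarith)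
  have hs0 : 0 < Real.sin ((θ - φ) / 2) :=
    Real.sin_pos_of_pos_of_lt_pi (by linarith) (by linarith)
  have hprod : Real.cos θ - Real.cos φ
      = -2 * Real.sin ((θ + φ) / 2) * Real.sin ((θ - φ) / 2) := Real.cos_sub_cos θ φ
  refine ⟨θ - φ, by linarith, by linarith, by rw [sub_sub_cancel, hcφ]; ring, ?_⟩
  set x := Real.sin ((θ - φ) / 2)
  have hb : 4 * r * Real.sin φ * x ≤ 2 * d + d ^ 2 := by
    have h3 : 4 * r * (Real.sin φ * x) ≤ 4 * r * (Real.sin ((θ + φ) / 2) * x) := by gcongr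
    have h4 : 4 * r * (Real.sin ((θ + φ) / 2) * x) = 2 * d + d ^ 2 := by
      have h5 : 2 * r * (Real.cos θ - Real.cos φ) = -(2 * d + d ^ 2) := by
        rw [mul_sub, hcos, hcφ]; ring
      rw [hprod] at h5
      linarith
    linarith
  have hq := quadratic_bound d (r ^ 2) hd hd2 h1 (by gcongr)
  have hx2 : x ^ 2 < d := by
    have hsq : (4 * r * Real.sin φ * x) ^ 2 ≤ (2 * d + d ^ 2) ^ 2 := by gcongr
    have hexp : (4 * r * Real.sin φ * x) ^ 2 = 4 * (r ^ 2 * (4 - r ^ 2)) * x ^ 2 := by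
      rw [mul_pow, mul_pow, hsφ]; ring
    have hpos : 0 < 4 * (r ^ 2 * (4 - r ^ 2)) := by
      have : 4 - r ^ 2 = 4 * Real.sin φ ^ 2 := by rw [hsφ]; ring
      rw [this]; positivity
    refine lt_of_mul_lt_mul_left ?_ hpos.le
    linarith
  have := Real.lt_sqrt_of_sq_lt hx2
  linarith

/-- Lemma 1 (ii): `K` is the circle (sphere) of radius 1 and centre `O`, `P` is in
the exterior of `K` at distance `d < 1/2` from `K`, `Q ∈ K`, the triangle `(P, O, Q)` is
positively oriented (its signed area `im(conj (O - P) * (Q - P)) / 2` is positive), and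
`3√d ≤ |PQ| ≤ 2 - d`. Then there is `0 < α < π/2` with `sin α < 2√d` such that the circle `K'`
obtained by rotating `K` about `Q` by angle `α` clockwise (so `K'` is the sphere of radius 1
centred at the image `Q + e^{-iα}(O - Q)` of `O`) contains `P`; moreover the distance between
`O` and the centre of `K'` is less than `4√d`. -/
theorem rotate_circle_to_catch_exterior_point
    (O P Q : ℂ) (d : ℝ)
    (hd : Metric.infDist P (Metric.sphere O 1) = d)
    (hd2 : d < 1 / 2)
    (hext : dist P O > 1)
    (hQ : Q ∈ Metric.sphere O 1)
    (horient : 0 < ((starRingEnd ℂ) (O - P) * (Q - P)).im)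
    (hPQ₁ : 3 * Real.sqrt d ≤ dist P Q)
    (hPQ₂ : dist P Q ≤ 2 - d) :
    ∃ α : ℝ, 0 < α ∧ α < Real.pi / 2 ∧ Real.sin α < 2 * Real.sqrt d ∧
      P ∈ Metric.sphere (Q + Complex.exp (-(α : ℂ) * Complex.I) * (O - Q)) 1 ∧
      dist O (Q + Complex.exp (-(α : ℂ) * Complex.I) * (O - Q)) < 4 * Real.sqrt d := by
  have hdd : dist P O = 1 + d := by
    rw [infDist_unit_sphere_of_exterior O P hext] at hd; linarith
  have hd0 : 0 < d := by linarith
  have hsq := Real.sq_sqrt hd0.le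
  have hs0 := Real.sqrt_pos.2 hd0
  have hr : 0 < dist P Q := by linarith
  have h9 : 9 * d ≤ dist P Q ^ 2 := by nlinarith
  rw [mem_sphere, dist_comm, dist_eq_norm] at hQ
  rw [dist_eq_norm] at hdd hr h9 hPQ₂
  obtain ⟨u, rfl⟩ : ∃ u, P = Q + u := ⟨P - Q, by ring⟩
  obtain ⟨v, rfl⟩ : ∃ v, O = Q + v := ⟨O - Q, by ring⟩
  simp only [add_sub_cancel_left, add_sub_add_left_eq_sub] at *
  -- The argument of `z` is the angle `θ` from `P` to `O` seen from `Q`.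
  set z : ℂ := (starRingEnd ℂ) u * v with hz
  have hzn : ‖z‖ = ‖u‖ := by rw [hz, norm_mul, Complex.norm_conj, hQ, mul_one]
  have hzim : 0 < z.im := by
    refine lt_of_lt_of_eq horient ?_
    simp [hz]; ring
  have hzre : z.re = u.re * v.re + u.im * v.im := by simp [hz]
  have hzim' : z.im = u.re * v.im - u.im * v.re := by simp [hz]; ring
  have hrec : ‖u‖ * Real.cos z.arg = z.re := by rw [← hzn]; exact Complex.norm_mul_cos_arg z
  have hims : ‖u‖ * Real.sin z.arg = z.im := by rw [← hzn]; exact Complex.norm_mul_sin_arg z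
  have nsq (w : ℂ) : ‖w‖ ^ 2 = w.re ^ 2 + w.im ^ 2 := by
    rw [← Complex.normSq_eq_norm_sq, Complex.normSq_apply]; ring
  have hu := nsq u
  have hv := nsq v
  rw [hQ] at hv
  have huv := nsq (u - v)
  rw [hdd, Complex.sub_re, Complex.sub_im] at huv
  have hθ0 : 0 < z.arg := by
    refine lt_of_le_of_ne (Complex.arg_nonneg_iff.2 hzim.le) fun h => ?_
    rw [← h, Real.sin_zero] at hims
    linarith
  have hθπ : z.arg < Real.pi := by
    refine lt_of_le_of_ne (Complex.arg_le_pi z) fun h => ?_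
    rw [h, Real.sin_pi] at hims
    linarith
  obtain ⟨α, hα0, hα2, hcα, hsα⟩ := exists_angle d ‖u‖ z.arg hd0 hd2 hr h9 hPQ₂ hθ0 hθπ
    (by rw [mul_assoc, hrec, hzre]; linarith)
  have hexp : Complex.exp (-(α : ℂ) * Complex.I) = ⟨Real.cos α, -Real.sin α⟩ := by
    have h : (-(α : ℂ)) = ((-α : ℝ) : ℂ) := by push_cast; rfl
    apply Complex.ext
    · rw [h, Complex.exp_ofReal_mul_I_re, Real.cos_neg]
    · rw [h, Complex.exp_ofReal_mul_I_im, Real.sin_neg]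
  have hhalf : 0 < Real.sin (α / 2) :=
    Real.sin_pos_of_pos_of_lt_pi (by linarith) (by linarith)
  have hcos : Real.cos α = 1 - 2 * Real.sin (α / 2) ^ 2 := by
    have := Real.cos_two_mul' (α / 2)
    rw [mul_div_cancel₀ _ two_ne_zero, Real.cos_sq'] at this
    linarith
  have hcs := Real.sin_sq_add_cos_sq α
  refine ⟨α, hα0, hα2, ?_, ?_, ?_⟩
  · have h := Real.sin_two_mul (α / 2)
    rw [mul_div_cancel₀ _ two_ne_zero] at h
    nlinarith [Real.cos_le_one (α / 2)]
  · rw [mem_sphere, dist_eq_norm, add_sub_add_left_eq_sub, hexp]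
    rw [← sq_eq_sq₀ (norm_nonneg _) zero_le_one, nsq]
    simp only [Complex.sub_re, Complex.sub_im, Complex.mul_re, Complex.mul_im]
    rw [Real.cos_sub] at hcα
    -- This is `‖u‖ cos (θ - α) = Re (e^{-iα} z)`.
    have hkey : ‖u‖ ^ 2 = 2 * (z.re * Real.cos α + z.im * Real.sin α) := by
      rw [← hrec, ← hims]
      linear_combination (-‖u‖) * hcα
    rw [hzre, hzim'] at hkey
    linear_combination (v.re ^ 2 + v.im ^ 2) * hcs - hv + hkey - hu
  · rw [dist_eq_norm, add_sub_add_left_eq_sub, hexp]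
    have hn : ‖v - (⟨Real.cos α, -Real.sin α⟩ : ℂ) * v‖ = 2 * Real.sin (α / 2) := by
      rw [← sq_eq_sq₀ (norm_nonneg _) (by positivity), nsq]
      simp only [Complex.sub_re, Complex.sub_im, Complex.mul_re, Complex.mul_im]
      linear_combination (v.re ^ 2 + v.im ^ 2) * hcs - (2 - 2 * Real.cos α) * hv - 2 * hcos
    rw [hn]
    linarith
end

section
/- Let K be the circle of radius 1 and centre O in ℝ². Let A, B ∈ K be such that the triangle with vertices O, A, B is positively oriented and η = ∠BOA < 1/5. Let K_A and K_B be the circles obtained by rotating K about the points A and B, respectively, in the positive (counter-clockwise) direction by angles α and β, where 0 < α < 3β/4 and β < η. Then one of the two intersection points of K_A and K_B lies inside K (i.e., in the open disc bounded by K), and its distance from A is less than 20η. -/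
/-!
After translating `O` to the origin and factoring out the unit vector `w = A - O`, one has
`A = 1` and `B = e^{iη}`. The circle `K_A` is parametrised by `P(θ) = 1 - e^{iα} + e^{iθ}`, with
`P(α) = A`, and `P(θ)` lies inside `K` for `α < θ < π` (`one_add_cos_lt`). The point `A` lies
strictly inside `K_B`, again by `one_add_cos_lt`, whereas `P(7η)` lies on or outside `K_B`
(`cos_sum_nonneg`). The intermediate value theorem gives a point of `K_A ∩ K_B` with
`α < θ ≤ 7η < π`, and its distance to `A` is the chord `‖e^{iθ} - e^{iα}‖ ≤ θ - α < 20η`.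
-/

open Metric EuclideanGeometry

lemma one_add_cos_lt {x y : ℝ} (hx : 0 < x) (hy : 0 < y) (hxy : x + y < Real.pi) :
    1 + Real.cos (x + y) < Real.cos x + Real.cos y := by
  have h1 : Real.cos (x + y) = 2 * Real.cos ((x + y) / 2) ^ 2 - 1 := by
    rw [← Real.cos_two_mul]; ring_nf
  have h2 : Real.cos x + Real.cos y = 2 * Real.cos ((x + y) / 2) * Real.cos ((x - y) / 2) :=
    Real.cos_add_cos x y
  have h3 : 0 < Real.cos ((x + y) / 2) :=
    Real.cos_pos_of_mem_Ioo ⟨by linarith, by linarith⟩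
  have h4 : Real.cos ((x + y) / 2) < Real.cos ((x - y) / 2) := by
    rw [← Real.cos_abs ((x - y) / 2)]
    apply Real.cos_lt_cos_of_nonneg_of_le_pi (abs_nonneg _) (by linarith)
    rw [abs_lt]; constructor <;> linarith
  rw [h1, h2]
  nlinarith [mul_pos h3 (sub_pos.2 h4)]

/-- With `θ = 7η` and `d` the vector from the centre of `K_B` to that of `K_A`, this quantity is
`Re (conj d * e^{iθ})`; its nonnegativity puts the point `P(7η)` on or outside `K_B`. -/
lemma cos_sum_nonneg {η α β : ℝ} (hη5 : η < 1 / 5)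
    (hα0 : 0 < α) (hαβ : α < 3 * β / 4) (hβη : β < η) :
    0 ≤ Real.cos (7 * η) - Real.cos (7 * η - α) - Real.cos (7 * η - η)
      + Real.cos (7 * η - η - β) := by
  have hpi := Real.pi_gt_three
  have e1 : Real.cos (7 * η) - Real.cos (7 * η - α)
      = -2 * Real.sin (7 * η - α / 2) * Real.sin (α / 2) := by
    rw [Real.cos_sub_cos]; ring_nf
  have e2 : Real.cos (7 * η - η - β) - Real.cos (7 * η - η)
      = 2 * Real.sin (7 * η - η - β / 2) * Real.sin (β / 2) := by
    rw [Real.cos_sub_cos, show (7 * η - η - β - (7 * η - η)) / 2 = -(β / 2) by ring,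
      Real.sin_neg]; ring_nf
  have s1 : Real.sin (7 * η - α / 2) ≤ Real.sin (7 * η) :=
    Real.sin_le_sin_of_le_of_le_pi_div_two (by linarith) (by linarith) (by linarith)
  have s2 : Real.sin (11 / 2 * η) ≤ Real.sin (7 * η - η - β / 2) :=
    Real.sin_le_sin_of_le_of_le_pi_div_two (by linarith) (by linarith) (by linarith)
  -- Concavity of `sin` on `[0, π]`, using `11/2 = 11/14 * 7`.
  have s3 : 11 / 14 * Real.sin (7 * η) ≤ Real.sin (11 / 2 * η) := by
    have := strictConcaveOn_sin_Icc.concaveOn.2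
      (show (7 * η) ∈ Set.Icc 0 Real.pi from ⟨by linarith, by linarith⟩)
      (show (0 : ℝ) ∈ Set.Icc 0 Real.pi from ⟨le_rfl, by linarith⟩)
      (show (0 : ℝ) ≤ 11 / 14 by norm_num) (show (0 : ℝ) ≤ 3 / 14 by norm_num) (by norm_num)
    simp only [smul_eq_mul, mul_zero, add_zero, Real.sin_zero] at this
    rwa [show 11 / 14 * (7 * η) = 11 / 2 * η by ring] at this
  have s4 : 0 ≤ Real.sin (7 * η) :=
    Real.sin_nonneg_of_nonneg_of_le_pi (by linarith) (by linarith)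
  have s5 : 0 ≤ Real.sin (α / 2) :=
    Real.sin_nonneg_of_nonneg_of_le_pi (by linarith) (by linarith)
  -- `sin x ≥ x - x ^ 3 / 6` loses little for `x < 1/10`, so the ratio stays close to `3/4`.
  have s6 : Real.sin (α / 2) ≤ 11 / 14 * Real.sin (β / 2) := by
    have h1 : Real.sin (α / 2) ≤ α / 2 := Real.sin_le (by linarith)
    have h2 := Real.sin_gt_sub_cube (x := β / 2) (by linarith)
    have h3 : (β / 2) ^ 3 ≤ (β / 2) * (1 / 100) := by
      have : (β / 2) ^ 2 ≤ 1 / 100 := by nlinarith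
      nlinarith
    linarith
  have k1 : Real.sin (7 * η - α / 2) * Real.sin (α / 2)
      ≤ Real.sin (7 * η) * (11 / 14 * Real.sin (β / 2)) :=
    mul_le_mul s1 s6 s5 s4
  have k2 : 11 / 14 * Real.sin (7 * η) * Real.sin (β / 2)
      ≤ Real.sin (7 * η - η - β / 2) * Real.sin (β / 2) :=
    mul_le_mul_of_nonneg_right (s3.trans s2) (by linarith)
  linarith

lemma normSq_one_sub_exp_add_exp (x t : ℝ) :
    Complex.normSq (1 - Complex.exp (x * Complex.I) + Complex.exp (t * Complex.I))
      = 3 - 2 * Real.cos x + 2 * Real.cos t - 2 * Real.cos (t - x) := by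
  rw [Complex.normSq_apply, Real.cos_sub]
  simp only [Complex.add_re, Complex.sub_re, Complex.one_re, Complex.add_im, Complex.sub_im,
    Complex.one_im, Complex.exp_ofReal_mul_I_re, Complex.exp_ofReal_mul_I_im]
  linear_combination Real.sin_sq_add_cos_sq x + Real.sin_sq_add_cos_sq t

lemma norm_one_sub_exp_add_exp_lt {x t : ℝ} (hx : 0 < x) (hxt : x < t) (ht : t < Real.pi) :
    ‖1 - Complex.exp (x * Complex.I) + Complex.exp (t * Complex.I)‖ < 1 := by
  have h := normSq_one_sub_exp_add_exp x t
  have h2 := one_add_cos_lt hx (sub_pos.2 hxt) (by linarith)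
  rw [Complex.normSq_eq_norm_sq] at h
  rw [add_sub_cancel] at h2
  exact (sq_lt_one_iff₀ (norm_nonneg _)).1 (by linarith)

/-- In the coordinates `O = 0`, `A = 1`, `B = e^{iη}`: some `P(θ)` with `α < θ ≤ 7η` lies on
`K_B`. -/
lemma exists_param {η α β : ℝ} (hη5 : η < 1 / 5)
    (hα0 : 0 < α) (hαβ : α < 3 * β / 4) (hβη : β < η) :
    ∃ t : ℝ, α < t ∧ t ≤ 7 * η ∧
      ‖1 - Complex.exp (α * Complex.I) + Complex.exp (t * Complex.I)
        - Complex.exp (η * Complex.I) + Complex.exp ((η + β : ℝ) * Complex.I)‖ = 1 := by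
  have hpi := Real.pi_gt_three
  set f : ℝ → ℝ := fun t => ‖1 - Complex.exp (α * Complex.I) + Complex.exp (t * Complex.I)
        - Complex.exp (η * Complex.I) + Complex.exp ((η + β : ℝ) * Complex.I)‖ with hf
  have hcont : Continuous f := by rw [hf]; fun_prop
  have hlo : f α < 1 := by
    have := norm_one_sub_exp_add_exp_lt (x := η) (t := η + β) (by linarith) (by linarith)
      (by linarith)
    simp only [hf, sub_add_cancel]
    exact this
  have hhi : 1 ≤ f (7 * η) := by
    have h := cos_sum_nonneg hη5 hα0 hαβ hβη
    rw [show 7 * η - η - β = 7 * η - (η + β) by ring, Real.cos_sub, Real.cos_sub,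
      Real.cos_sub] at h
    have h2 : 1 ≤ f (7 * η) ^ 2 := by
      simp only [hf]
      rw [← Complex.normSq_eq_norm_sq, Complex.normSq_apply]
      simp only [Complex.add_re, Complex.sub_re, Complex.one_re, Complex.add_im, Complex.sub_im,
        Complex.one_im, Complex.exp_ofReal_mul_I_re, Complex.exp_ofReal_mul_I_im]
      -- `‖d + e^{iθ}‖² = ‖d‖² + 2 Re (conj d * e^{iθ}) + 1`.
      nlinarith [Real.sin_sq_add_cos_sq (7 * η),
        sq_nonneg (1 - Real.cos α - Real.cos η + Real.cos (η + β)),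
        sq_nonneg (-Real.sin α - Real.sin η + Real.sin (η + β))]
    exact (one_le_sq_iff₀ (norm_nonneg _)).1 h2
  obtain ⟨t, ht, hft⟩ := intermediate_value_Icc (show α ≤ 7 * η by linarith)
    hcont.continuousOn (show (1 : ℝ) ∈ Set.Icc (f α) (f (7 * η)) from ⟨hlo.le, hhi⟩)
  refine ⟨t, lt_of_le_of_ne ht.1 ?_, ht.2, hft⟩
  rintro rfl
  exact hlo.ne hft

lemma rotation_eq {O A B : ℂ} {η : ℝ} (hA : A ∈ Metric.sphere O 1) (hB : B ∈ Metric.sphere O 1)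
    (horient : 0 < ((starRingEnd ℂ) (A - O) * (B - O)).im)
    (hη : η = EuclideanGeometry.angle B O A) :
    B - O = Complex.exp (η * Complex.I) * (A - O) := by
  rw [Metric.mem_sphere, dist_eq_norm] at hA hB
  have hA0 : A - O ≠ 0 := fun h => by simp [h] at hA
  have hB0 : B - O ≠ 0 := fun h => by simp [h] at hB
  have hdiv : (B - O) / (A - O) = (starRingEnd ℂ) (A - O) * (B - O) := by
    rw [div_eq_mul_inv, Complex.inv_def, Complex.normSq_eq_norm_sq, hA]
    simp [mul_comm]
  have hη' : η = Complex.arg ((B - O) / (A - O)) := by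
    rw [hη, EuclideanGeometry.angle, vsub_eq_sub, vsub_eq_sub, Complex.angle_eq_abs_arg hB0 hA0,
      abs_of_nonneg]
    rw [Complex.arg_nonneg_iff, hdiv]
    exact horient.le
  have := Complex.norm_mul_exp_arg_mul_I ((B - O) / (A - O))
  rw [← hη', norm_div, hA, hB] at this
  rw [show Complex.exp (η * Complex.I) = (B - O) / (A - O) by simpa using this]
  field_simp

/-- Lemma 3: `K` is the circle of radius 1 and centre `O`; `A, B ∈ K` with the
triangle `(O, A, B)` positively oriented (signed area `im(conj (A - O) * (B - O)) / 2 > 0`)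
and `η = ∠BOA < 1/5`. `K_A` and `K_B` are obtained from `K` by counter-clockwise rotations
about `A` and `B` through angles `α` and `β` respectively, where `0 < α < 3β/4` and `β < η`
(so `K_A` is the unit sphere centred at `A + e^{iα}(O - A)`, and `K_B` the unit sphere
centred at `B + e^{iβ}(O - B)`). Then one of the intersection points `P` of `K_A` and `K_B`
lies inside `K` (i.e. `dist P O < 1`) and satisfies `dist P A < 20η`. -/
theorem sprouting_intersection_inside
    (O A B : ℂ) (η α β : ℝ)
    (hA : A ∈ Metric.sphere O 1) (hB : B ∈ Metric.sphere O 1)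
    (horient : 0 < ((starRingEnd ℂ) (A - O) * (B - O)).im)
    (hη : η = EuclideanGeometry.angle B O A) (hη5 : η < 1 / 5)
    (hα0 : 0 < α) (hαβ : α < 3 * β / 4) (hβη : β < η) :
    ∃ P : ℂ,
      P ∈ Metric.sphere (A + Complex.exp (α * Complex.I) * (O - A)) 1 ∧
      P ∈ Metric.sphere (B + Complex.exp (β * Complex.I) * (O - B)) 1 ∧
      dist P O < 1 ∧ dist P A < 20 * η := by
  have hBO := rotation_eq hA hB horient hη
  obtain ⟨t, hαt, htη, ht⟩ := exists_param hη5 hα0 hαβ hβη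
  have hpi := Real.pi_gt_three
  have hw : ‖A - O‖ = 1 := by rwa [Metric.mem_sphere, dist_eq_norm] at hA
  refine ⟨A + Complex.exp (α * Complex.I) * (O - A) + Complex.exp (t * Complex.I) * (A - O),
    ?_, ?_, ?_, ?_⟩
  · rw [Metric.mem_sphere, dist_eq_norm, add_sub_cancel_left, norm_mul, hw,
      Complex.norm_exp_ofReal_mul_I, one_mul]
  · rw [Metric.mem_sphere, dist_eq_norm, ← ht, ← mul_one ‖1 - _ + _ - _ + _‖]
    conv_rhs => rw [← hw, ← norm_mul]
    congr 1
    rw [Complex.ofReal_add, add_mul (η : ℂ), Complex.exp_add]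
    linear_combination (Complex.exp (β * Complex.I) - 1) * hBO
  · have h := norm_one_sub_exp_add_exp_lt hα0 hαt (by linarith)
    rw [dist_eq_norm, show A + Complex.exp (α * Complex.I) * (O - A)
        + Complex.exp (t * Complex.I) * (A - O) - O
        = (1 - Complex.exp (α * Complex.I) + Complex.exp (t * Complex.I)) * (A - O) by ring,
      norm_mul, hw, mul_one]
    exact h
  · rw [dist_eq_norm, show A + Complex.exp (α * Complex.I) * (O - A)
        + Complex.exp (t * Complex.I) * (A - O) - A
        = Complex.exp (α * Complex.I) * (Complex.exp (Complex.I * (t - α : ℝ)) - 1)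
          * (A - O) by
      have : Complex.exp (t * Complex.I)
          = Complex.exp (α * Complex.I) * Complex.exp (Complex.I * (t - α : ℝ)) := by
        rw [← Complex.exp_add]; congr 1; push_cast; ring
      rw [this]; ring]
    rw [norm_mul, norm_mul, hw, Complex.norm_exp_ofReal_mul_I, one_mul, mul_one]
    have h := Real.norm_exp_I_mul_ofReal_sub_one_le (x := t - α)
    rw [Real.norm_eq_abs, abs_of_pos (by linarith)] at h
    linarith
end

section
/- Let K be the circle of radius 1 and centre O in ℝ². Let A, B ∈ K be such that the triangle with vertices O, A, B is positively oriented and η = ∠BOA < 1/10. Let K_A and K_B be the circles obtained by rotating K about the points A and B, respectively, in the negative (clockwise) direction by angles α and β, where 0 < α < 3β/4 and β < η. Then one of the two intersection points of K_A and K_B lies outside K (i.e., outside the closed disc bounded by K), and its distance from A is less than 50η. -/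
/-!
Translating by `-O` and dividing by `a = A - O` puts `O` at `0`, `A` at `1` and `B` at `e^{iη}`.
The centres of `K_A` and `K_B` become `c₁ = 1 - e^{-iα}` and `c₂ = e^{iη} - e^{i(η-β)}`. With
`d = c₂ - c₁`, the required point is `c₁ + u`, where `u = d/2 - i s d` and
`s = √(1/|d|² - 1/4)`, so that `|u| = |u - d| = 1`.

To first order `d ≈ i(β - α)` with real part of order `βη`. The assumption `α < 3β/4` keeps
`Im d` at least `0.24 β`, so `u` is a unit vector in the first quadrant with imaginary part
at most `6.1η` (`coordinate_bounds`, `exists_of_bounds`). Since `c₁` also lies in the first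
quadrant, `|c₁ + u| > 1`; and since `|c₁| ≤ α` and `u` is within `√2 · 6.1η` of `1`, the point
`c₁ + u` is within `50η` of `1`.
-/

open Metric EuclideanGeometry

/-- Bounds on the coordinates of the vector `d` joining the normalised centres of the two rotated
circles: `d` points into the second quadrant, and its slope away from the vertical is `O(η)`. -/
lemma coordinate_bounds (η α β : ℝ) (hη10 : η < 1 / 10)
    (hα0 : 0 < α) (hαβ : α < 3 * β / 4) (hβη : β < η) :
    (Real.cos η - Real.cos (η - β)) - (1 - Real.cos α) < 0 ∧
    -((Real.cos η - Real.cos (η - β)) - (1 - Real.cos α)) ≤ 13 / 10 * (β * η) ∧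
    24 / 100 * β ≤ (Real.sin η - Real.sin (η - β)) - Real.sin α ∧
    (Real.sin η - Real.sin (η - β)) - Real.sin α ≤ 11 / 10 * β := by
  have hβ : 0 < β := by linarith
  have hη : 0 < η := by linarith
  have hpi := Real.pi_gt_three
  have cη := Real.one_sub_sq_div_two_le_cos (x := η)
  have cα := Real.one_sub_sq_div_two_le_cos (x := α)
  have cβ := Real.one_sub_sq_div_two_le_cos (x := β)
  have sη := Real.sin_lt hη
  have sα := Real.sin_lt hα0
  have sβ := Real.sin_lt hβ
  have sβ' := Real.sin_gt_sub_cube hβ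
  have sη0 : 0 < Real.sin η := Real.sin_pos_of_pos_of_lt_pi hη (by linarith)
  have sβ0 : 0 < Real.sin β := Real.sin_pos_of_pos_of_lt_pi hβ (by linarith)
  have sα0 : 0 < Real.sin α := Real.sin_pos_of_pos_of_lt_pi hα0 (by linarith)
  have hc : Real.cos η < Real.cos (η - β) :=
    Real.cos_lt_cos_of_nonneg_of_le_pi (by linarith) (by linarith) (by linarith)
  have cη1 := Real.cos_le_one η
  have cα1 := Real.cos_le_one α
  have cβ1 := Real.cos_le_one β
  have cη2 : 99 / 100 ≤ Real.cos η := by nlinarith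
  have sβ2 : 997 / 1000 * β ≤ Real.sin β := by
    have h2 : β ^ 2 ≤ 1 / 100 := by nlinarith
    have h3 : β ^ 3 ≤ 1 / 100 * β := by nlinarith
    linarith
  have h1 : Real.sin η * Real.sin β ≤ η * β := by gcongr
  have h2 : 0 ≤ Real.cos η * (1 - Real.cos β) := mul_nonneg (by linarith) (by linarith)
  have h3 : 0 ≤ Real.sin η * (1 - Real.cos β) := mul_nonneg sη0.le (by linarith)
  have h4 : 99 / 100 * (997 / 1000 * β) ≤ Real.cos η * Real.sin β := by gcongr
  have h5 : Real.cos η * Real.sin β ≤ 1 * β := by gcongr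
  have h6 : Real.sin η * (1 - Real.cos β) ≤ 1 / 10 * (β ^ 2 / 2) := by
    apply mul_le_mul <;> linarith
  have h7 : β ^ 2 ≤ 1 / 10 * β := by nlinarith
  have h8 : α ^ 2 ≤ 9 / 16 * (β * η) := by nlinarith
  refine ⟨by linarith, ?_, ?_, ?_⟩
  · rw [Real.cos_sub]; nlinarith
  · rw [Real.sin_sub]; nlinarith
  · rw [Real.sin_sub]; nlinarith

/-- The intersection point of two unit circles whose centres `(x1, y1)` and `(x1 + dx, y1 + dy)`
are nearly vertically aligned, on the right of the line of centres. -/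
lemma exists_of_bounds (η x1 y1 dx dy : ℝ) (hη : 0 < η) (hη10 : η < 1 / 10)
    (hx1 : 0 ≤ x1) (hy1 : 0 < y1) (hc : x1 ^ 2 + y1 ^ 2 ≤ η ^ 2)
    (hdx : dx < 0) (hdy : 0 < dy) (hdyη : dy ≤ 11 / 10 * η)
    (hslope : -dx ≤ 55 / 10 * η * dy) :
    ∃ x y : ℝ,
      (x - x1) ^ 2 + (y - y1) ^ 2 = 1 ∧
      (x - (x1 + dx)) ^ 2 + (y - (y1 + dy)) ^ 2 = 1 ∧
      1 < x ^ 2 + y ^ 2 ∧ (x - 1) ^ 2 + y ^ 2 < (50 * η) ^ 2 := by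
  have hdx1 : -dx ≤ dy := by nlinarith
  have hD : 0 < dx ^ 2 + dy ^ 2 := by positivity
  have hD1 : dx ^ 2 + dy ^ 2 ≤ 1 / 4 := by nlinarith
  obtain ⟨s, hs0, hs2⟩ : ∃ s : ℝ, 0 ≤ s ∧ s ^ 2 = 1 / (dx ^ 2 + dy ^ 2) - 1 / 4 := by
    have : 4 ≤ 1 / (dx ^ 2 + dy ^ 2) := by rw [le_div_iff₀ hD]; linarith
    exact ⟨_, Real.sqrt_nonneg _, Real.sq_sqrt (by linarith)⟩
  have hsD : (s ^ 2 + 1 / 4) * (dx ^ 2 + dy ^ 2) = 1 := by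
    rw [hs2]; field_simp; ring
  have hs1 : 1 ≤ s := by
    by_contra! h
    nlinarith [mul_nonneg hs0 hs0]
  have hsdy : s * dy ≤ 1 := by
    refine (sq_le_one_iff₀ (mul_nonneg hs0 hdy.le)).1 ?_
    linarith [sq_nonneg (s * dx), sq_nonneg dx, sq_nonneg dy]
  obtain ⟨ux, hux⟩ : ∃ ux, ux = dx / 2 + s * dy := ⟨_, rfl⟩
  obtain ⟨uy, huy⟩ : ∃ uy, uy = dy / 2 - s * dx := ⟨_, rfl⟩
  have hu : ux ^ 2 + uy ^ 2 = 1 := by rw [hux, huy]; linarith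
  have hud : (ux - dx) ^ 2 + (uy - dy) ^ 2 = 1 := by rw [hux, huy]; linarith
  have hux0 : 0 ≤ ux := by
    have := mul_le_mul_of_nonneg_right hs1 hdy.le
    linarith
  have huy0 : 0 < uy := by
    have := mul_nonneg hs0 (neg_nonneg.2 hdx.le)
    linarith
  have huy1 : uy ≤ 61 / 10 * η := by
    have h1 : s * (-dx) ≤ s * (55 / 10 * η * dy) := by gcongr
    have h2 : 55 / 10 * η * (s * dy) ≤ 55 / 10 * η * 1 := by gcongr
    linarith
  have hux1 : ux ≤ 1 := by nlinarith
  have huysq : uy ^ 2 ≤ (61 / 10 * η) ^ 2 := by gcongr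
  -- for a unit vector in the right half-plane, `1 - Re u ≤ 1 - (Re u)² = (Im u)²`
  have hu1 : (ux - 1) ^ 2 + uy ^ 2 ≤ 2 * uy ^ 2 := by
    linarith [mul_nonneg hux0 (sub_nonneg.2 hux1)]
  refine ⟨x1 + ux, y1 + uy, ?_, ?_, ?_, ?_⟩
  · linear_combination hu
  · linear_combination hud
  · linarith [mul_nonneg hx1 hux0, mul_pos hy1 huy0, sq_nonneg x1, pow_pos hy1 2]
  · linarith [sq_nonneg (x1 - (ux - 1)), sq_nonneg (y1 - uy), pow_pos hη 2]

/-- The normalised form of the theorem in coordinates, with `O = 0`, `A = 1` and `B = e^{iη}`. -/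
lemma exists_intersection (η α β : ℝ) (hη10 : η < 1 / 10)
    (hα0 : 0 < α) (hαβ : α < 3 * β / 4) (hβη : β < η) :
    ∃ x y : ℝ,
      (x - (1 - Real.cos α)) ^ 2 + (y - Real.sin α) ^ 2 = 1 ∧
      (x - (Real.cos η - Real.cos (η - β))) ^ 2
        + (y - (Real.sin η - Real.sin (η - β))) ^ 2 = 1 ∧
      1 < x ^ 2 + y ^ 2 ∧ (x - 1) ^ 2 + y ^ 2 < (50 * η) ^ 2 := by
  obtain ⟨b1, b2, b3, b4⟩ := coordinate_bounds η α β hη10 hα0 hαβ hβη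
  have hβ : 0 < β := by linarith
  have hη : 0 < η := by linarith
  have hpi := Real.pi_gt_three
  have sα0 : 0 < Real.sin α := Real.sin_pos_of_pos_of_lt_pi hα0 (by linarith)
  have hc1 : (1 - Real.cos α) ^ 2 + Real.sin α ^ 2 ≤ η ^ 2 := by
    have hαsq : α ^ 2 ≤ η ^ 2 := by gcongr; linarith
    linarith [Real.one_sub_sq_div_two_le_cos (x := α), Real.sin_sq_add_cos_sq α]
  have h := exists_of_bounds η (1 - Real.cos α) (Real.sin α) _
    (Real.sin η - Real.sin (η - β) - Real.sin α) hη hη10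
    (by linarith [Real.cos_le_one α]) sα0 hc1 b1 (by linarith) (by linarith)
    (by linarith [mul_le_mul_of_nonneg_left b3 hη.le, mul_pos hη hβ])
  simpa only [add_sub_cancel] using h

/-- The oriented-angle hypothesis in complex form: `B - O` is `A - O` turned by `η`. -/
lemma sub_eq_mul_of_angle (O A B : ℂ) (η : ℝ)
    (hA : ‖A - O‖ = 1) (hB : ‖B - O‖ = 1)
    (horient : 0 < ((starRingEnd ℂ) (A - O) * (B - O)).im)
    (hη : η = EuclideanGeometry.angle B O A) :
    B - O = (A - O) * (Real.cos η + Real.sin η * Complex.I) := by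
  have hη0 : 0 ≤ η := hη ▸ EuclideanGeometry.angle_nonneg _ _ _
  have hηpi : η ≤ Real.pi := hη ▸ EuclideanGeometry.angle_le_pi _ _ _
  set a := A - O with ha
  set b := B - O with hb
  have hcos : Real.cos η = ((starRingEnd ℂ) a * b).re := by
    rw [hη, EuclideanGeometry.angle, InnerProductGeometry.cos_angle]
    simp only [vsub_eq_sub, ← ha, ← hb, hA, hB, Complex.inner]
    simp [Complex.mul_re]
  have hna : a.re ^ 2 + a.im ^ 2 = 1 := by
    have := Complex.sq_norm a
    rw [hA, Complex.normSq_apply] at this; linarith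
  have hnb : b.re ^ 2 + b.im ^ 2 = 1 := by
    have := Complex.sq_norm b
    rw [hB, Complex.normSq_apply] at this; linarith
  have hsin : Real.sin η = ((starRingEnd ℂ) a * b).im := by
    have h0 := Real.sin_nonneg_of_nonneg_of_le_pi hη0 hηpi
    have h1 := Real.sin_sq_add_cos_sq η
    rw [← sq_eq_sq₀ h0 horient.le]
    rw [hcos] at h1
    simp only [Complex.mul_re, Complex.mul_im, Complex.conj_re, Complex.conj_im] at h1 ⊢
    linear_combination h1 - (b.re ^ 2 + b.im ^ 2) * hna - hnb
  rw [hcos, hsin, Complex.re_add_im]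
  apply Complex.ext
  · simp only [Complex.mul_re, Complex.mul_im, Complex.conj_re, Complex.conj_im]
    linear_combination -b.re * hna
  · simp only [Complex.mul_re, Complex.mul_im, Complex.conj_re, Complex.conj_im]
    linear_combination -b.im * hna

/-- Distances are unchanged by the normalising similarity `z ↦ a z`, `|a| = 1`. -/
lemma norm_eq_sqrt_of_eq_mul (a z : ℂ) (x y : ℝ) (ha : ‖a‖ = 1)
    (hz : z = a * (x + y * Complex.I)) : ‖z‖ = Real.sqrt (x ^ 2 + y ^ 2) := by
  rw [hz, norm_mul, ha, one_mul, Complex.norm_add_mul_I]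

/-- Lemma 9: `K` is the circle of radius 1 and centre `O`; `A, B ∈ K` with the
triangle `(O, A, B)` positively oriented (signed area `im(conj (A - O) * (B - O)) / 2 > 0`)
and `η = ∠BOA < 1/10`. `K_A` and `K_B` are obtained from `K` by clockwise rotations about
`A` and `B` through angles `α` and `β` respectively, where `0 < α < 3β/4` and `β < η`
(so `K_A` is the unit sphere centred at `A + e^{-iα}(O - A)`, and `K_B` the unit sphere
centred at `B + e^{-iβ}(O - B)`). Then one of the intersection points `P` of `K_A` and `K_B`
lies outside `K` (i.e. `dist P O > 1`) and satisfies `dist P A < 50η`. -/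
theorem sprouting_intersection_outside
    (O A B : ℂ) (η α β : ℝ)
    (hA : A ∈ Metric.sphere O 1) (hB : B ∈ Metric.sphere O 1)
    (horient : 0 < ((starRingEnd ℂ) (A - O) * (B - O)).im)
    (hη : η = EuclideanGeometry.angle B O A) (hη10 : η < 1 / 10)
    (hα0 : 0 < α) (hαβ : α < 3 * β / 4) (hβη : β < η) :
    ∃ P : ℂ,
      P ∈ Metric.sphere (A + Complex.exp (-(α : ℂ) * Complex.I) * (O - A)) 1 ∧
      P ∈ Metric.sphere (B + Complex.exp (-(β : ℂ) * Complex.I) * (O - B)) 1 ∧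
      dist P O > 1 ∧ dist P A < 50 * η := by
  have hA' : ‖A - O‖ = 1 := by rwa [Metric.mem_sphere, dist_eq_norm] at hA
  have hB' : ‖B - O‖ = 1 := by rwa [Metric.mem_sphere, dist_eq_norm] at hB
  have hBO := sub_eq_mul_of_angle O A B η hA' hB' horient hη
  obtain ⟨x, y, h1, h2, h3, h4⟩ := exists_intersection η α β hη10 hα0 hαβ hβη
  have hη0 : 0 < η := by linarith
  have hexp : ∀ t : ℝ, Complex.exp (-(t : ℂ) * Complex.I)
      = Real.cos t - Real.sin t * Complex.I := by
    intro t
    rw [Complex.exp_mul_I, Complex.cos_neg, Complex.sin_neg]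
    push_cast; ring
  refine ⟨O + (A - O) * (x + y * Complex.I), ?_, ?_, ?_, ?_⟩
  · rw [Metric.mem_sphere, dist_eq_norm, hexp,
      norm_eq_sqrt_of_eq_mul (A - O) _ (x - (1 - Real.cos α)) (y - Real.sin α) hA', h1,
      Real.sqrt_one]
    push_cast; ring
  · rw [Metric.mem_sphere, dist_eq_norm, hexp,
      norm_eq_sqrt_of_eq_mul (A - O) _ (x - (Real.cos η - Real.cos (η - β)))
        (y - (Real.sin η - Real.sin (η - β))) hA', h2, Real.sqrt_one]
    rw [Real.cos_sub, Real.sin_sub]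
    push_cast at hBO ⊢
    linear_combination (Complex.cos β - Complex.sin β * Complex.I - 1) * hBO
      - (A - O) * Complex.sin η * Complex.sin β * Complex.I_sq
  · rw [gt_iff_lt, dist_eq_norm, norm_eq_sqrt_of_eq_mul (A - O) _ x y hA' (by ring)]
    exact Real.lt_sqrt_of_sq_lt (by linarith)
  · rw [dist_eq_norm, norm_eq_sqrt_of_eq_mul (A - O) _ (x - 1) y hA' (by push_cast; ring)]
    exact (Real.sqrt_lt' (by positivity)).2 h4
end

section
/- Let K be a circle of radius r in ℝ² and let σ be a closed subarc of K with endpoints A and B and of arc length less than rπ. For θ ∈ [0, α], let ρ_θ denote the rotation of the plane about the point A by angle θ (all in the same direction). Then the Lebesgue measure of the swept region H = ⋃_{θ∈[0,α]} ρ_θ(σ) equals |AB|² · α / 2. -/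
/-!
In polar coordinates centred at `A`, the point of the arc at central angle `t` from `A` has radius
`2 r sin (t / 2)` and argument `c ± t / 2` with `c` constant (`circleMap_sub_left`,
`circleMap_sub_right`). The radius increases strictly in `t ∈ [0, b - a] ⊆ [0, π)`, from `0` to
`|AB|`, so the argument is a continuous function `φ` of the radius, namely
`φ ρ = c ± arcsin (ρ / (2 r))`. Hence the swept region is, up to translation by `A`, a twisted
sector `{ρ e^{i (φ ρ + ψ)} : 0 ≤ ρ ≤ |AB|, 0 ≤ ψ ≤ α}` (`sweep_eq_sector`; for clockwise rotation
`φ` is shifted by `-α`). Each circle of radius `ρ ∈ (0, |AB|]` about the centre meets it in an arc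
of angle `α < 2π`, so integration in polar coordinates gives
`∫ ρ in 0..|AB|, ρ α = |AB|² α / 2` (`volume_sector`).
-/

open MeasureTheory Set

/-- The sector of radius `d` and opening angle `α` with apex `0`, twisted so that at radius `ρ` its
arguments run over `[φ ρ, φ ρ + α]`. -/
def sector (φ : ℝ → ℝ) (d α : ℝ) : Set ℂ :=
  (fun p : ℝ × ℝ => (p.1 : ℂ) * Complex.exp ((φ p.1 + p.2 : ℝ) * Complex.I)) ''
    (Icc 0 d ×ˢ Icc 0 α)

/-- The real arguments of the points of the arc `{e^{iψ} : c ≤ ψ ≤ c + α}` of the unit circle; a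
`2π`-periodic subset of `ℝ`. -/
def angles (c α : ℝ) : Set ℝ :=
  {θ : ℝ | ∃ ψ ∈ Icc 0 α, Complex.exp ((θ:ℝ) * Complex.I) =
    Complex.exp ((c + ψ : ℝ) * Complex.I)}

lemma exp_eq_iff (x y : ℝ) : Complex.exp ((x:ℝ) * Complex.I) = Complex.exp ((y:ℝ) * Complex.I) ↔
    ∃ n : ℤ, x = y + n * (2 * Real.pi) := by
  rw [Complex.exp_eq_exp_iff_exists_int]
  refine exists_congr fun n => ?_
  constructor
  · intro h
    have h2 := congrArg Complex.im h
    simpa using h2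
  · rintro rfl
    push_cast
    ring

lemma measure_angles (c α : ℝ) (h0 : 0 ≤ α) (h2 : α < 2 * Real.pi) :
    volume (angles c α ∩ Ioo (-Real.pi) Real.pi) = ENNReal.ofReal α := by
  set S := angles c α with hS
  have hT : 0 < 2 * Real.pi := Real.two_pi_pos
  have e0 : (S ∩ Ioo (-Real.pi) Real.pi : Set ℝ) =ᵐ[volume]
      (S ∩ Ioc (-Real.pi) (-Real.pi + 2 * Real.pi) : Set ℝ) := by
    rw [show -Real.pi + 2 * Real.pi = Real.pi by ring]
    exact (ae_eq_refl S).inter Ioo_ae_eq_Ioc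
  have hinv : ∀ g : AddSubgroup.zmultiples (2 * Real.pi), (fun x => g +ᵥ x) ⁻¹' S = S := by
    rintro ⟨g, n, rfl⟩
    ext x
    simp only [hS, angles, mem_preimage, mem_ofPred_eq]
    refine exists_congr fun ψ => and_congr_right fun _ => ?_
    have : Complex.exp ((((⟨(fun n : ℤ => n • (2 * Real.pi)) n, n, rfl⟩ :
        AddSubgroup.zmultiples (2 * Real.pi)) +ᵥ x : ℝ) : ℝ) * Complex.I) =
        Complex.exp ((x:ℝ) * Complex.I) := by
      rw [exp_eq_iff]
      exact ⟨n, by simp [AddSubgroup.vadd_def]; ring⟩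
    rw [this]
  have hmeas : MeasurableSet S := by
    have : S = (fun θ : ℝ => Complex.exp ((θ:ℝ) * Complex.I)) ⁻¹'
        ((fun ψ : ℝ => Complex.exp ((c + ψ : ℝ) * Complex.I)) '' Icc 0 α) := by
      ext x; simp only [hS, angles, mem_ofPred_eq, mem_preimage, mem_image]
      exact exists_congr fun ψ => and_congr_right fun _ => eq_comm
    rw [this]
    refine ((isCompact_Icc.image (by fun_prop)).isClosed.preimage (by fun_prop)).measurableSet
  -- By periodicity the window `(-π, π)` may be replaced by one starting at `c`, where the set is
  -- a single interval.
  rw [measure_congr e0, (isAddFundamentalDomain_Ioc hT (-Real.pi) volume).measure_set_eq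
    (isAddFundamentalDomain_Ioc hT c volume) hmeas hinv]
  have e1 : (S ∩ Ioc c (c + 2 * Real.pi) : Set ℝ) =ᵐ[volume]
      (S ∩ Ioo c (c + 2 * Real.pi) : Set ℝ) :=
    (ae_eq_refl S).inter Ioo_ae_eq_Ioc.symm
  have e2 : S ∩ Ioo c (c + 2 * Real.pi) = Ioc c (c + α) := by
    ext x
    simp only [hS, angles, mem_inter_iff, mem_ofPred_eq, mem_Ioo, mem_Ioc, mem_Icc, exp_eq_iff]
    constructor
    · rintro ⟨⟨ψ, ⟨h, h'⟩, n, rfl⟩, h3, h4⟩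
      have hn : n = 0 := by
        have l1 : (-1 : ℝ) < n := by nlinarith
        have l2 : (n : ℝ) < 1 := by nlinarith
        have l1' : -1 < n := by exact_mod_cast l1
        have l2' : n < 1 := by exact_mod_cast l2
        omega
      subst hn
      simp at h3 ⊢
      exact ⟨h3, h'⟩
    · rintro ⟨h, h'⟩
      exact ⟨⟨x - c, ⟨by linarith, by linarith⟩, 0, by simp⟩, h, by linarith⟩
  rw [measure_congr e1, e2, Real.volume_Ioc]
  simp

lemma volume_sector (φ : ℝ → ℝ) (hφ : Continuous φ) (d α : ℝ) (hd : 0 ≤ d) (h0 : 0 ≤ α)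
    (h2 : α < 2 * Real.pi) :
    volume (sector φ d α) = ENNReal.ofReal (d ^ 2 * α / 2) := by
  have hcl : MeasurableSet (sector φ d α) := by
    refine ((isCompact_Icc.prod isCompact_Icc).image ?_).isClosed.measurableSet
    fun_prop
  have key : ∀ ρ ∈ Ioi (0:ℝ), ∀ θ : ℝ, (Complex.polarCoord.symm (ρ, θ) ∈ sector φ d α ↔
      ρ ∈ Ioc 0 d ∧ θ ∈ angles (φ ρ) α) := by
    intro ρ hρ θ
    have hρ : 0 < ρ := hρ
    have : Complex.polarCoord.symm (ρ, θ) = ρ * Complex.exp ((θ:ℝ) * Complex.I) := by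
      rw [Complex.polarCoord_symm_apply, Complex.exp_mul_I]
      push_cast; rfl
    rw [this]
    simp only [sector, angles, mem_image, mem_prod, Prod.exists, mem_ofPred_eq]
    constructor
    · rintro ⟨ρ', ψ, ⟨h1, h2⟩, h3⟩
      have h4 := congrArg norm h3
      rw [norm_mul, norm_mul, Complex.norm_exp_ofReal_mul_I, Complex.norm_exp_ofReal_mul_I,
        Complex.norm_of_nonneg h1.1, Complex.norm_of_nonneg hρ.le, mul_one, mul_one] at h4
      subst h4
      exact ⟨⟨hρ, h1.2⟩, ψ, h2, (mul_left_cancel₀ (by exact_mod_cast hρ.ne') h3).symm⟩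
    · rintro ⟨h1, ψ, h2, h3⟩
      exact ⟨ρ, ψ, ⟨⟨h1.1.le, h1.2⟩, h2⟩, by rw [h3]⟩
  rw [← lintegral_indicator_one hcl, ← Complex.lintegral_comp_polarCoord_symm]
  have ht : polarCoord.target = Ioi (0:ℝ) ×ˢ Ioo (-Real.pi) Real.pi := rfl
  rw [ht, Measure.volume_eq_prod, setLIntegral_prod]
  · have : ∀ ρ ∈ Ioi (0:ℝ), ∫⁻ θ in Ioo (-Real.pi) Real.pi, ENNReal.ofReal (ρ, θ).1 •
        (sector φ d α).indicator 1 (Complex.polarCoord.symm (ρ, θ)) =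
        (Ioc 0 d).indicator (fun ρ => ENNReal.ofReal (ρ * α)) ρ := by
      intro ρ hρ
      have hρ0 : 0 < ρ := hρ
      by_cases h : ρ ∈ Ioc 0 d
      · rw [indicator_of_mem h, ENNReal.ofReal_mul hρ0.le, ← measure_angles (φ ρ) α h0 h2]
        set S := angles (φ ρ) α with hS
        have hm : MeasurableSet S := by
          have : S = (fun θ => Complex.polarCoord.symm (ρ, θ)) ⁻¹' sector φ d α := by
            ext θ; rw [mem_preimage, key ρ hρ θ]; simp only [h, true_and, hS]
          rw [this]
          refine measurableSet_preimage ?_ hcl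
          simp only [Complex.polarCoord_symm_apply]
          fun_prop
        have e : ∀ θ, (sector φ d α).indicator (1 : ℂ → ENNReal) (Complex.polarCoord.symm (ρ, θ)) =
            S.indicator 1 θ := by
          intro θ
          classical
          simp only [indicator_apply, key ρ hρ θ, h, true_and, Pi.one_apply, ← hS]
        simp only [e, smul_eq_mul]
        rw [lintegral_const_mul' _ _ ENNReal.ofReal_ne_top, lintegral_indicator_one hm,
          Measure.restrict_apply hm]
      · rw [indicator_of_notMem h]
        have e : ∀ θ, (sector φ d α).indicator (1 : ℂ → ENNReal) (Complex.polarCoord.symm (ρ, θ)) =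
            0 := by
          intro θ
          exact indicator_of_notMem (fun hm => h ((key ρ hρ θ).1 hm).1) _
        simp only [e, smul_zero, lintegral_zero]
    rw [setLIntegral_congr_fun measurableSet_Ioi this, lintegral_indicator measurableSet_Ioc,
      Measure.restrict_restrict measurableSet_Ioc,
      inter_eq_left.2 (Ioc_subset_Ioi_self : Ioc 0 d ⊆ Ioi 0),
      ← ofReal_integral_eq_lintegral_ofReal]
    · rw [← intervalIntegral.integral_of_le hd, intervalIntegral.integral_mul_const, integral_id]
      congr 1; ring
    · exact ((continuous_id.mul continuous_const).integrableOn_Icc).mono_set Ioc_subset_Icc_self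
    · filter_upwards [ae_restrict_mem measurableSet_Ioc] with x hx using mul_nonneg hx.1.le h0
  · refine AEMeasurable.smul (measurable_fst.ennreal_ofReal).aemeasurable ?_
    refine ((measurable_one.indicator hcl).comp ?_).aemeasurable
    have : ⇑Complex.polarCoord.symm = fun p : ℝ × ℝ =>
        (p.1 : ℂ) * (Real.cos p.2 + Real.sin p.2 * Complex.I) :=
      funext Complex.polarCoord_symm_apply
    rw [this]
    fun_prop

lemma circleMap_sub_left (O : ℂ) (r a u : ℝ) :
    circleMap O r u = circleMap O r a + ((2 * r * Real.sin ((u - a) / 2) : ℝ) : ℂ) *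
      Complex.exp ((a + Real.pi / 2 + 1 * ((u - a) / 2) : ℝ) * Complex.I) := by
  have h1 : Complex.exp (u * Complex.I) =
      Complex.exp ((u + a) / 2 * Complex.I) * Complex.exp ((u - a) / 2 * Complex.I) := by
    rw [← Complex.exp_add]; congr 1; ring
  have h2 : Complex.exp (a * Complex.I) =
      Complex.exp ((u + a) / 2 * Complex.I) * Complex.exp (-((u - a) / 2) * Complex.I) := by
    rw [← Complex.exp_add]; congr 1; ring
  have h3 : Complex.exp ((a + Real.pi / 2 + 1 * ((u - a) / 2) : ℝ) * Complex.I) =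
      Complex.exp ((u + a) / 2 * Complex.I) * Complex.I := by
    rw [show ((a + Real.pi / 2 + 1 * ((u - a) / 2) : ℝ) : ℂ) * Complex.I =
      (u + a) / 2 * Complex.I + Real.pi / 2 * Complex.I by push_cast; ring, Complex.exp_add,
      Complex.exp_pi_div_two_mul_I]
  rw [circleMap, circleMap, h3, h1, h2]
  push_cast
  rw [Complex.sin]
  linear_combination (-r * Complex.exp ((u + a) / 2 * Complex.I) *
    (Complex.exp (-((u - a) / 2) * Complex.I) - Complex.exp ((u - a) / 2 * Complex.I))) *
      Complex.I_sq

lemma circleMap_sub_right (O : ℂ) (r b u : ℝ) :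
    circleMap O r u = circleMap O r b + ((2 * r * Real.sin ((b - u) / 2) : ℝ) : ℂ) *
      Complex.exp ((b - Real.pi / 2 + -1 * ((b - u) / 2) : ℝ) * Complex.I) := by
  rw [circleMap_sub_left O r b u]
  have h : Complex.exp ((b + Real.pi / 2 + 1 * ((u - b) / 2) : ℝ) * Complex.I) =
      -Complex.exp ((b - Real.pi / 2 + -1 * ((b - u) / 2) : ℝ) * Complex.I) := by
    rw [← Complex.exp_add_pi_mul_I]
    congr 1; push_cast; ring
  rw [h, show (u - b) / 2 = -((b - u) / 2) by ring, Real.sin_neg]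
  push_cast; ring

/-- The sweep of an arc given in polar form about its endpoint `A` is a translated twisted sector.
The twist inverts the radius `ρ = 2 r sin (t / 2)` as `t / 2 = arcsin (ρ / (2 r))`; the parameter
`δ` is the left end of the interval `J = [δ, δ + α]` of rotation angles. -/
lemma sweep_eq_sector (A : ℂ) (r c e ℓ α δ : ℝ) (J : Set ℝ) (hr : 0 < r)
    (hℓ0 : 0 ≤ ℓ) (hℓ : ℓ < Real.pi) (hJ : ∀ x, x ∈ J ↔ x - δ ∈ Icc 0 α) :
    {w : ℂ | ∃ x ∈ J, ∃ t ∈ Icc 0 ℓ, w = A + Complex.exp ((x : ℝ) * Complex.I) *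
      (((2 * r * Real.sin (t / 2) : ℝ) : ℂ) * Complex.exp ((c + e * (t / 2) : ℝ) * Complex.I))} =
    (fun z => A + z) '' sector (fun ρ => c + e * Real.arcsin (ρ / (2 * r)) + δ)
      (2 * r * Real.sin (ℓ / 2)) α := by
  have hpi := Real.pi_pos
  ext w
  simp only [sector, mem_ofPred_eq, mem_image, mem_prod, Prod.exists]
  constructor
  · rintro ⟨x, hx, t, ⟨ht0, ht1⟩, rfl⟩
    refine ⟨_, ⟨2 * r * Real.sin (t / 2), x - δ, ⟨⟨?_, ?_⟩, (hJ x).1 hx⟩, rfl⟩, ?_⟩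
    · have := Real.sin_nonneg_of_nonneg_of_le_pi (x := t / 2) (by linarith) (by linarith)
      positivity
    · have := Real.sin_le_sin_of_le_of_le_pi_div_two (x := t / 2) (y := ℓ / 2)
        (by linarith) (by linarith) (by linarith)
      gcongr
    · have h : Real.arcsin (2 * r * Real.sin (t / 2) / (2 * r)) = t / 2 := by
        rw [mul_div_cancel_left₀ _ (by positivity), Real.arcsin_sin (by linarith) (by linarith)]
      rw [h, mul_left_comm, ← Complex.exp_add]
      congr 3; push_cast; ring
  · rintro ⟨_, ⟨ρ, ψ, ⟨⟨hρ0, hρ1⟩, hψ⟩, rfl⟩, rfl⟩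
    have h2r : 0 < 2 * r := by positivity
    have hq0 : 0 ≤ ρ / (2 * r) := by positivity
    have hq1 : ρ / (2 * r) ≤ Real.sin (ℓ / 2) := by
      rw [div_le_iff₀ h2r]; linarith
    refine ⟨ψ + δ, (hJ _).2 (by simpa using hψ), 2 * Real.arcsin (ρ / (2 * r)), ⟨?_, ?_⟩, ?_⟩
    · have := Real.arcsin_nonneg.2 hq0
      positivity
    · have h3 := Real.arcsin_le_arcsin hq1
      rw [Real.arcsin_sin (by linarith) (by linarith)] at h3
      linarith
    · rw [mul_div_cancel_left₀ _ two_ne_zero,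
        Real.sin_arcsin (by linarith) (hq1.trans (Real.sin_le_one _)),
        mul_div_cancel₀ _ h2r.ne', mul_left_comm, ← Complex.exp_add]
      congr 3; push_cast; ring

/-- The measure of the sweep of an arc given in polar form about its endpoint `A`; the
rotation angles `s θ` fill `[0, α]` or `[-α, 0]`, an interval of length `α` in both cases. -/
lemma volume_sweep (A : ℂ) (r c e ℓ α s : ℝ) (hr : 0 < r) (hℓ0 : 0 ≤ ℓ) (hℓ : ℓ < Real.pi)
    (hα0 : 0 < α) (hα2 : α < 2 * Real.pi) (hs : s = 1 ∨ s = -1) (σ : Set ℂ)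
    (hσ : σ = (fun t : ℝ => A + ((2 * r * Real.sin (t / 2) : ℝ) : ℂ) *
      Complex.exp ((c + e * (t / 2) : ℝ) * Complex.I)) '' Icc 0 ℓ) :
    volume (⋃ θ ∈ Set.Icc (0:ℝ) α,
      (fun z => A + Complex.exp ((s * θ : ℝ) * Complex.I) * (z - A)) '' σ) =
      ENNReal.ofReal ((2 * r * Real.sin (ℓ / 2)) ^ 2 * α / 2) := by
  obtain ⟨δ, hδ⟩ : ∃ δ : ℝ, ∀ x, x ∈ (fun θ => s * θ) '' Icc 0 α ↔ x - δ ∈ Icc 0 α := by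
    rcases hs with rfl | rfl
    · exact ⟨0, fun x => by simp⟩
    · refine ⟨-α, fun x => ?_⟩
      simp only [mem_image, mem_Icc]
      constructor
      · rintro ⟨θ, ⟨h0, h1⟩, rfl⟩
        constructor <;> linarith
      · rintro ⟨h0, h1⟩
        exact ⟨-x, ⟨by linarith, by linarith⟩, by ring⟩
  have hH : (⋃ θ ∈ Set.Icc (0:ℝ) α,
      (fun z => A + Complex.exp ((s * θ : ℝ) * Complex.I) * (z - A)) '' σ) =
      {w : ℂ | ∃ x ∈ (fun θ => s * θ) '' Icc 0 α, ∃ t ∈ Icc 0 ℓ,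
        w = A + Complex.exp ((x : ℝ) * Complex.I) * (((2 * r * Real.sin (t / 2) : ℝ) : ℂ) *
          Complex.exp ((c + e * (t / 2) : ℝ) * Complex.I))} := by
    ext w
    simp only [hσ, mem_iUnion, mem_image, mem_ofPred_eq, exists_exists_and_eq_and,
      add_sub_cancel_left, exists_prop]
    simp only [eq_comm]
  have hsin := Real.sin_nonneg_of_nonneg_of_le_pi (x := ℓ / 2) (by linarith) (by linarith)
  rw [hH, sweep_eq_sector A r c e ℓ α δ _ hr hℓ0 hℓ hδ, image_add_left, measure_preimage_add,
    volume_sector _ (by fun_prop) _ _ (by positivity) hα0.le hα2]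

/-- Lemma 6: `σ` is a closed subarc (of arc length `r * (b - a) < r * π`) of the
circle of radius `r` centred at `O`, with endpoints `A` and `B` (in either order), parametrized
as `σ = circleMap O r '' Icc a b`. For `θ ∈ [0, α]` (where `0 < α < 2π`), let
`ρ_θ z = A + e^{s θ i} (z - A)` be the rotation of the plane about the endpoint `A` by angle
`θ`, all in the same direction (`s = 1` or `s = -1`). Then the Lebesgue measure of the swept
region `H = ⋃_{θ ∈ [0,α]} ρ_θ(σ)` equals `|AB|² · α / 2`. -/
theorem measure_of_rotated_arc_sweep
    (O : ℂ) (r a b α s : ℝ) (hr : 0 < r) (hab : a ≤ b) (hlen : r * (b - a) < r * Real.pi)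
    (hα0 : 0 < α) (hα2 : α < 2 * Real.pi) (hs : s = 1 ∨ s = -1)
    (σ : Set ℂ) (hσ : σ = circleMap O r '' Set.Icc a b)
    (A B : ℂ)
    (hAB : (A = circleMap O r a ∧ B = circleMap O r b) ∨
           (A = circleMap O r b ∧ B = circleMap O r a))
    (H : Set ℂ)
    (hH : H = ⋃ θ ∈ Set.Icc (0:ℝ) α,
        (fun z => A + Complex.exp ((s * θ : ℝ) * Complex.I) * (z - A)) '' σ) :
    volume H = ENNReal.ofReal (dist A B ^ 2 * α / 2) := by
  have hℓ : b - a < Real.pi := lt_of_mul_lt_mul_left hlen hr.le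
  have hsin := Real.sin_nonneg_of_nonneg_of_le_pi (x := (b - a) / 2) (by linarith) (by linarith)
  have hd : dist A B = 2 * r * Real.sin ((b - a) / 2) := by
    have h0 : 0 ≤ 2 * r * Real.sin ((b - a) / 2) := by positivity
    rcases hAB with ⟨rfl, rfl⟩ | ⟨rfl, rfl⟩
    · rw [circleMap_sub_left O r a b, dist_self_add_right, norm_mul,
        Complex.norm_exp_ofReal_mul_I, Complex.norm_of_nonneg h0, mul_one]
    · rw [circleMap_sub_right O r b a, dist_self_add_right, norm_mul,
        Complex.norm_exp_ofReal_mul_I, Complex.norm_of_nonneg h0, mul_one]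
  rw [hH, hd]
  rcases hAB with ⟨rfl, rfl⟩ | ⟨rfl, rfl⟩
  · refine volume_sweep _ r (a + Real.pi / 2) 1 (b - a) α s hr (by linarith) hℓ hα0 hα2 hs σ ?_
    rw [hσ]
    ext w
    simp only [mem_image, mem_Icc]
    constructor
    · rintro ⟨u, ⟨h1, h2⟩, rfl⟩
      exact ⟨u - a, ⟨by linarith, by linarith⟩, (circleMap_sub_left O r a u).symm⟩
    · rintro ⟨t, ⟨h1, h2⟩, rfl⟩
      refine ⟨t + a, ⟨by linarith, by linarith⟩, ?_⟩
      rw [circleMap_sub_left O r a (t + a), add_sub_cancel_right]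
  · refine volume_sweep _ r (b - Real.pi / 2) (-1) (b - a) α s hr (by linarith) hℓ hα0 hα2 hs σ ?_
    rw [hσ]
    ext w
    simp only [mem_image, mem_Icc]
    constructor
    · rintro ⟨u, ⟨h1, h2⟩, rfl⟩
      exact ⟨b - u, ⟨by linarith, by linarith⟩, (circleMap_sub_right O r b u).symm⟩
    · rintro ⟨t, ⟨h1, h2⟩, rfl⟩
      refine ⟨b - t, ⟨by linarith, by linarith⟩, ?_⟩
      rw [circleMap_sub_right O r b (b - t), sub_sub_cancel]
end

section
/- With the standard two-circle setup (parameters ε, h with 0 < ε < 10⁻⁶ and 0 < h ≤ ε/10³), if a straight line intersects the arc P₀P₁ in at least two distinct points, or is tangent to the arc P₀P₁, then the angle between that line and the y-axis is less than h + ε. -/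
/-!
Put the origin at `M` and let `(x, y)` be a point of the arc. Its membership in the lune gives
`ε² + 2xs + 2yc ≤ 0 ≤ ε² - 2xs + 2yc` with `s = sin (h/2)`, `c = cos (h/2)`, so `x ≤ 0` and
`|y|` is at most about `ε (ε + h) / 2`; as `x² + y² = ε²`, the number `x` is close to `-ε`
(`arc_point_bounds`).

A line with direction `v` that cuts the circle in two points is orthogonal to the sum of the two
radii, and a tangent is orthogonal to its radius. In both cases `v` is orthogonal to a sum of
two radii of arc points (equal ones for a tangent), a vector whose slope is at most
`0.6 (ε + h)`. Hence `|re v| ≤ 0.6 (ε + h) ‖v‖`, and `0.6 t < sin t` for small `t > 0`.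
-/

open Metric Set

/-- Every point of the arc, seen from `M`, lies to the left at almost full distance `ε` and has
a vertical offset of second order. -/
theorem arc_point_bounds (ε h : ℝ) (hε0 : 0 < ε) (hε : ε < 1 / 10 ^ 6) (hh0 : 0 < h)
    (hh : h ≤ ε / 10 ^ 3) (X : ℂ)
    (hX : X ∈ Metric.sphere (((Real.cos (h / 2) : ℝ) : ℂ) * Complex.I) ε ∩
      closure (Metric.closedBall ((-Real.sin (h / 2) : ℝ) : ℂ) 1 \
        Metric.closedBall ((Real.sin (h / 2) : ℝ) : ℂ) 1)) :
    X.re ^ 2 + (X.im - Real.cos (h / 2)) ^ 2 = ε ^ 2 ∧ X.re ≤ -(0.9 * ε) ∧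
      |X.im - Real.cos (h / 2)| ≤ 0.51 * (ε * (ε + h)) := by
  obtain ⟨hS, hC⟩ := hX
  have hA : X ∈ Metric.closedBall ((-Real.sin (h / 2) : ℝ) : ℂ) 1 :=
    closure_minimal Set.sdiff_subset Metric.isClosed_closedBall hC
  have hB : 1 ≤ dist X ((Real.sin (h / 2) : ℝ) : ℂ) := by
    have hcl : IsClosed {z : ℂ | 1 ≤ dist z ((Real.sin (h / 2) : ℝ) : ℂ)} :=
      isClosed_le continuous_const (by fun_prop)
    refine closure_minimal (fun z hz => ?_) hcl hC
    have := hz.2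
    rw [Metric.mem_closedBall, not_le] at this
    exact this.le
  rw [Metric.mem_sphere] at hS
  rw [Metric.mem_closedBall] at hA
  have hS2 : dist X (((Real.cos (h / 2) : ℝ) : ℂ) * Complex.I) ^ 2 = ε ^ 2 := by rw [hS]
  have hA2 : dist X ((-Real.sin (h / 2) : ℝ) : ℂ) ^ 2 ≤ 1 := by
    have := dist_nonneg (x := X) (y := ((-Real.sin (h / 2) : ℝ) : ℂ))
    nlinarith
  have hB2 : 1 ≤ dist X ((Real.sin (h / 2) : ℝ) : ℂ) ^ 2 := by nlinarith
  rw [Complex.dist_eq, Complex.sq_norm, Complex.normSq_apply] at hS2 hA2 hB2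
  simp only [Complex.sub_re, Complex.sub_im, Complex.mul_re, Complex.mul_im, Complex.ofReal_re,
    Complex.ofReal_im, Complex.I_re, Complex.I_im] at hS2 hA2 hB2
  have hs0 : 0 < Real.sin (h / 2) :=
    Real.sin_pos_of_pos_of_lt_pi (by linarith) (by linarith [Real.pi_gt_three])
  have hs1 : Real.sin (h / 2) < h / 2 := Real.sin_lt (by linarith)
  have hc1 : 1 - (h / 2) ^ 2 / 2 ≤ Real.cos (h / 2) := Real.one_sub_sq_div_two_le_cos
  have hsc := Real.sin_sq_add_cos_sq (h / 2)
  generalize Real.sin (h / 2) = s at *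
  generalize Real.cos (h / 2) = c at *
  have hc : 0.99 ≤ c := by nlinarith
  obtain ⟨y, hy⟩ : ∃ y, X.im - c = y := ⟨_, rfl⟩
  have him : X.im = y + c := by linarith
  rw [hy]
  rw [him] at hS2 hA2 hB2
  generalize X.re = x at *
  clear hC hA hB hS hy him
  have e : x ^ 2 + y ^ 2 = ε ^ 2 := by linear_combination hS2
  have a : ε ^ 2 + 2 * x * s + 2 * y * c ≤ 0 := by linear_combination hA2 - hsc - e
  have b : 0 ≤ ε ^ 2 - 2 * x * s + 2 * y * c := by linear_combination hB2 + hsc + e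
  clear hS2 hA2 hB2
  have hx0 : x ≤ 0 := by
    by_contra hpos
    push Not at hpos
    have := mul_pos hpos hs0
    nlinarith
  have hxε : -ε ≤ x := by nlinarith [sq_nonneg y]
  have hxs : -(x * s) ≤ ε * (h / 2) := by nlinarith
  have hyb : |y| ≤ 0.51 * (ε * (ε + h)) := by
    have hp : 0 < ε * (ε + h) := by positivity
    rw [abs_le]
    constructor
    · by_contra hn
      push Not at hn
      nlinarith
    · by_contra hn
      push Not at hn
      nlinarith
  refine ⟨e, ?_, hyb⟩
  have hy1 : |y| ≤ 0.1 * ε := by nlinarith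
  have hy2 : y ^ 2 ≤ (0.1 * ε) ^ 2 := by
    rw [← sq_abs]; gcongr
  by_contra hn
  push Not at hn
  nlinarith

/-- Lemma 4: standard two-circle setup, with `0 < ε < 10⁻⁶`, `0 < h ≤ ε/10³`,
`O₀ = (-sin(h/2), 0)`, `O₁ = (sin(h/2), 0)`, `M = (0, cos(h/2))`, `L₀` the closure of
`K̄₀ \ K̄₁`, and the arc `P₀P₁` realized as `sphere M ε ∩ L₀`. If the line through `p` with
direction `v ≠ 0` meets this arc in two distinct points, or is tangent to it (it meets the
arc at a point `X` with `v` perpendicular to the radius `X - M`), then the angle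
`arcsin (|re v| / ‖v‖)` between the line and the `y`-axis is less than `h + ε`. -/
theorem secant_angle_with_y_axis
    (ε h : ℝ) (hε0 : 0 < ε) (hε : ε < 1 / 10 ^ 6) (hh0 : 0 < h) (hh : h ≤ ε / 10 ^ 3)
    (O₀ O₁ M : ℂ) (L₀ arc : Set ℂ)
    (hO₀ : O₀ = ((-Real.sin (h / 2) : ℝ) : ℂ))
    (hO₁ : O₁ = ((Real.sin (h / 2) : ℝ) : ℂ))
    (hM : M = ((Real.cos (h / 2) : ℝ) : ℂ) * Complex.I)
    (hL₀ : L₀ = closure (Metric.closedBall O₀ 1 \ Metric.closedBall O₁ 1))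
    (harc : arc = Metric.sphere M ε ∩ L₀)
    (p v : ℂ) (hv : v ≠ 0)
    (line : Set ℂ) (hline : line = {z : ℂ | ∃ t : ℝ, z = p + t • v})
    (hcut : (∃ X ∈ arc, ∃ Y ∈ arc, X ≠ Y ∧ X ∈ line ∧ Y ∈ line) ∨
            (∃ X ∈ arc, X ∈ line ∧ ((starRingEnd ℂ) v * (X - M)).re = 0)) :
    Real.arcsin (|v.re| / ‖v‖) < h + ε := by
  subst hO₀ hO₁ hM hL₀ harc hline
  -- The witness `(a, b)` is a sum of two radii orthogonal to `v`.
  obtain ⟨a, b, ha, hb, hab⟩ : ∃ a b : ℝ, a ≤ -(1.8 * ε) ∧ |b| ≤ 1.02 * (ε * (ε + h)) ∧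
      v.re * a + v.im * b = 0 := by
    rcases hcut with ⟨X, hX, Y, hY, hne, ⟨t, ht⟩, ⟨u, hu⟩⟩ | ⟨X, hX, -, hperp⟩
    · obtain ⟨e1, x1, y1⟩ := arc_point_bounds ε h hε0 hε hh0 hh X hX
      obtain ⟨e2, x2, y2⟩ := arc_point_bounds ε h hε0 hε hh0 hh Y hY
      refine ⟨X.re + Y.re, (X.im - Real.cos (h / 2)) + (Y.im - Real.cos (h / 2)),
        by linarith, (abs_add_le _ _).trans (by linarith), ?_⟩
      have htu : t - u ≠ 0 := by
        intro h0
        exact hne (by rw [ht, hu, sub_eq_zero.mp h0])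
      have hre : X.re - Y.re = (t - u) * v.re := by rw [ht, hu]; simp; ring
      have him : X.im - Y.im = (t - u) * v.im := by rw [ht, hu]; simp; ring
      -- Difference of the two circle equations.
      refine (mul_eq_zero.mp ?_).resolve_left htu
      linear_combination e1 - e2 - (X.re + Y.re) * hre -
        (X.im - Real.cos (h / 2) + (Y.im - Real.cos (h / 2))) * him
    · obtain ⟨e1, x1, y1⟩ := arc_point_bounds ε h hε0 hε hh0 hh X hX
      refine ⟨2 * X.re, 2 * (X.im - Real.cos (h / 2)), by linarith, ?_, ?_⟩
      · rw [abs_mul, abs_two]; linarith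
      · simp only [Complex.mul_re, Complex.conj_re, Complex.conj_im, Complex.sub_re,
          Complex.sub_im, Complex.mul_im, Complex.ofReal_re, Complex.ofReal_im, Complex.I_re,
          Complex.I_im] at hperp
        linear_combination 2 * hperp
  have hvpos : 0 < ‖v‖ := norm_pos_iff.mpr hv
  have hkey : |v.re| ≤ 0.6 * (ε + h) * ‖v‖ := by
    have h1 : |v.re| * |a| = |v.im| * |b| := by
      rw [← abs_mul, ← abs_mul, eq_neg_of_add_eq_zero_left hab, abs_neg]
    have h2 : |v.im| * |b| ≤ ‖v‖ * (1.02 * (ε * (ε + h))) := by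
      gcongr
      exact Complex.abs_im_le_norm v
    have h3 : |v.re| * (1.8 * ε) ≤ |v.re| * |a| := by
      gcongr
      linarith [neg_le_abs a]
    have h4 : 0 < ‖v‖ * (ε * (ε + h)) := by positivity
    have h5 : |v.re| * ε ≤ (0.6 * (ε + h) * ‖v‖) * ε := by nlinarith
    exact le_of_mul_le_mul_right h5 hε0
  have ht0 : 0 < h + ε := by linarith
  have ht1 : h + ε ≤ 0.1 := by linarith
  have hsin : h + ε - (h + ε) ^ 3 / 6 < Real.sin (h + ε) :=
    Real.sin_gt_sub_cube ht0
  rw [Real.arcsin_lt_iff_lt_sin' ⟨by linarith [Real.pi_gt_three], by linarith [Real.pi_gt_three]⟩]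
  calc |v.re| / ‖v‖ ≤ 0.6 * (ε + h) := by rwa [div_le_iff₀ hvpos]
    _ < h + ε - (h + ε) ^ 3 / 6 := by
      have : (h + ε) ^ 2 ≤ 0.01 := by nlinarith
      nlinarith
    _ < Real.sin (h + ε) := hsin
end

section
/- With the standard two-circle setup (parameters ε, h with 0 < ε < 10⁻⁶ and 0 < h ≤ ε/10³), let Q′ and Q″ be points of the arc P₀P₁ such that the y-coordinate of Q′ is greater than the y-coordinate of Q″, let C ∈ L₁ satisfy |CM| ≤ 2 − 5ε, and let K′, K″ be circles of radius 1 with centres O′, O″ such that Q′, C ∈ K′, Q″, C ∈ K″, and |OO′| < ε, |OO″| < ε. Let ρ be the rotation about the point C mapping K″ onto K′. Then the angle between the x-axis and the line through the points Q′ and ρ(Q″) is less than 6ε. -/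
open Metric Set

/-!
Put `u = Q' - O'` and `v = ρ(Q'') - O'`. Both are unit vectors, so the chord `u - v = Q' - ρ(Q'')`
is orthogonal to `u + v`, and its inclination to the `x`-axis equals that of `u + v` to the
`y`-axis. Now `u` and `Q'' - O''` lie within `2ε` of `M`, which is on the `y`-axis, and
`v = e^{iα} (Q'' - O'')` lies within `|O' O''| < 2ε` of `Q'' - O''`, because the rotation moves all
unit vectors by the same distance and carries `O'' - C` to `O' - C`. Hence `|re (u + v)| ≤ 6ε`,
while `im (u + v)` is close to `2`: the sine of the inclination is at most about `3ε`, well below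
`sin 6ε`. If `Q' = ρ(Q'')`, the quotient in the statement is `0 / 0 = 0` and the bound is trivial.
-/

/-- The chord `u - v` of the unit circle is orthogonal to `u + v`, so it is nearly horizontal as
soon as `u + v` is nearly vertical. -/
lemma abs_im_sub_div_norm_le {u v : ℂ} {ε : ℝ} (hε : 0 ≤ ε) (hu : ‖u‖ = 1) (hv : ‖v‖ = 1)
    (hre : |(u + v).re| ≤ 6 * ε) (him : 3 / 2 ≤ (u + v).im) :
    |(u - v).im| / ‖u - v‖ ≤ 4 * ε := by
  apply div_le_of_le_mul₀ (norm_nonneg _) (by positivity)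
  have hu2 : u.re * u.re + u.im * u.im = 1 := by
    rw [← Complex.normSq_apply, Complex.normSq_eq_norm_sq, hu, one_pow]
  have hv2 : v.re * v.re + v.im * v.im = 1 := by
    rw [← Complex.normSq_apply, Complex.normSq_eq_norm_sq, hv, one_pow]
  have horth : (u - v).im * (u + v).im = -((u - v).re * (u + v).re) := by
    simp only [Complex.sub_re, Complex.sub_im, Complex.add_re, Complex.add_im]
    linarith
  have habs : |(u - v).im| * |(u + v).im| = |(u - v).re| * |(u + v).re| := by
    rw [← abs_mul, horth, abs_neg, abs_mul]
  have h1 : |(u - v).im| * (3 / 2) ≤ |(u - v).im| * |(u + v).im| :=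
    mul_le_mul_of_nonneg_left (him.trans (le_abs_self _)) (abs_nonneg _)
  have h2 : |(u - v).re| * |(u + v).re| ≤ ‖u - v‖ * (6 * ε) :=
    mul_le_mul (Complex.abs_re_le_norm _) hre (abs_nonneg _) (norm_nonneg _)
  linarith

/-- Lemma 5 (ii): standard two-circle setup, with `0 < ε < 10⁻⁶`, `0 < h ≤ ε/10³`,
`O₀ = (-sin(h/2), 0)`, `O₁ = (sin(h/2), 0)`, `O = 0`, `M = (0, cos(h/2))`, `L₀, L₁` the closures
of `K̄₀ \ K̄₁` and `K̄₁ \ K̄₀`, and the arc `P₀P₁` realized as `sphere M ε ∩ L₀`. Let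
`Q′, Q″` be on the arc with the `y`-coordinate of `Q′` greater than that of `Q″`, let `C ∈ L₁`
with `|CM| ≤ 2 - 5ε`, and let `K′, K″` be unit circles with centres `O′, O″` such that
`Q′, C ∈ K′`, `Q″, C ∈ K″` and `|OO′| < ε`, `|OO″| < ε`. Let `ρ` be the rotation about `C`
through angle `α ∈ [0, 2π)` (counter-clockwise) mapping `K″` onto `K′` (i.e. mapping `O″` to
`O′`). Then the angle `arcsin (|im (Q′ - ρ(Q″))| / ‖Q′ - ρ(Q″)‖)` between the `x`-axis and the
line through `Q′` and `ρ(Q″)` is less than `6ε`. -/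
theorem rotated_point_line_angle_with_x_axis
    (ε h : ℝ) (hε0 : 0 < ε) (hε : ε < 1 / 10 ^ 6) (hh0 : 0 < h) (hh : h ≤ ε / 10 ^ 3)
    (O₀ O₁ M : ℂ) (L₀ L₁ arc : Set ℂ)
    (hO₀ : O₀ = ((-Real.sin (h / 2) : ℝ) : ℂ))
    (hO₁ : O₁ = ((Real.sin (h / 2) : ℝ) : ℂ))
    (hM : M = ((Real.cos (h / 2) : ℝ) : ℂ) * Complex.I)
    (hL₀ : L₀ = closure (Metric.closedBall O₀ 1 \ Metric.closedBall O₁ 1))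
    (hL₁ : L₁ = closure (Metric.closedBall O₁ 1 \ Metric.closedBall O₀ 1))
    (harc : arc = Metric.sphere M ε ∩ L₀)
    (Q' Q'' C O' O'' : ℂ) (α : ℝ)
    (hQ' : Q' ∈ arc) (hQ'' : Q'' ∈ arc) (hy : Q''.im < Q'.im)
    (hC : C ∈ L₁) (hCM : dist C M ≤ 2 - 5 * ε)
    (hQ'K' : dist Q' O' = 1) (hCK' : dist C O' = 1)
    (hQ''K'' : dist Q'' O'' = 1) (hCK'' : dist C O'' = 1)
    (hO' : dist 0 O' < ε) (hO'' : dist 0 O'' < ε)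
    (hα0 : 0 ≤ α) (hα2 : α < 2 * Real.pi)
    (hρ : C + Complex.exp (α * Complex.I) * (O'' - C) = O') :
    Real.arcsin (|(Q' - (C + Complex.exp (α * Complex.I) * (Q'' - C))).im| /
        ‖Q' - (C + Complex.exp (α * Complex.I) * (Q'' - C))‖) < 6 * ε := by
  subst harc
  have hQ'M : ‖Q' - M‖ = ε := by simpa [dist_eq_norm] using hQ'.1
  have hQ''M : ‖Q'' - M‖ = ε := by simpa [dist_eq_norm] using hQ''.1
  simp only [dist_eq_norm, zero_sub, norm_neg] at hQ'K' hQ''K'' hCK'' hO' hO''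
  have hexp : ‖Complex.exp (α * Complex.I)‖ = 1 := Complex.norm_exp_ofReal_mul_I α
  set e := Complex.exp (α * Complex.I)
  have hchord : Q' - (C + e * (Q'' - C)) = (Q' - O') - e * (Q'' - O'') := by
    rw [← hρ]; ring
  have hv : ‖e * (Q'' - O'')‖ = 1 := by rw [norm_mul, hexp, hQ''K'', one_mul]
  -- Rotation by `e` moves the unit vectors `Q'' - O''` and `O'' - C` by the same distance.
  have hrot : ‖(e - 1) * (Q'' - O'')‖ ≤ 2 * ε := by
    have h1 : ‖(e - 1) * (Q'' - O'')‖ = ‖(e - 1) * (O'' - C)‖ := by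
      rw [norm_mul, norm_mul, hQ''K'', norm_sub_rev O'' C, hCK'']
    have h2 : (e - 1) * (O'' - C) = O' - O'' := by rw [← hρ]; ring
    rw [h1, h2]
    linarith [norm_sub_le O' O'']
  have hsum : ‖(Q' - O') + e * (Q'' - O'') - 2 * M‖ ≤ 6 * ε := by
    have h1 : (Q' - O') + e * (Q'' - O'') - 2 * M =
        ((Q' - M) - O') + ((Q'' - M) - O'') + (e - 1) * (Q'' - O'') := by ring
    rw [h1]
    linarith [norm_add₃_le (a := (Q' - M) - O') (b := (Q'' - M) - O'')
        (c := (e - 1) * (Q'' - O'')), norm_sub_le (Q' - M) O', norm_sub_le (Q'' - M) O'']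
  have hMre : (2 * M).re = 0 := by
    rw [hM]
    simp only [Complex.mul_im, Complex.mul_re, Complex.I_re, Complex.I_im, Complex.ofReal_re,
      Complex.ofReal_im, Complex.re_ofNat, Complex.im_ofNat]
    ring
  have hMim : (2 * M).im = 2 * Real.cos (h / 2) := by
    rw [hM]
    simp only [Complex.mul_im, Complex.mul_re, Complex.I_re, Complex.I_im, Complex.ofReal_re,
      Complex.ofReal_im, Complex.re_ofNat, Complex.im_ofNat]
    ring
  have hcos : 1 - (h / 2) ^ 2 / 2 ≤ Real.cos (h / 2) := Real.one_sub_sq_div_two_le_cos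
  have hre : |((Q' - O') + e * (Q'' - O'')).re| ≤ 6 * ε := by
    have := (Complex.abs_re_le_norm _).trans hsum
    rwa [Complex.sub_re _ (2 * M), hMre, sub_zero] at this
  have him : 3 / 2 ≤ ((Q' - O') + e * (Q'' - O'')).im := by
    have := (abs_le.1 ((Complex.abs_im_le_norm _).trans hsum)).1
    rw [Complex.sub_im _ (2 * M), hMim] at this
    have hh1 : h ≤ 1 / 10 := by linarith
    nlinarith
  have hquot := abs_im_sub_div_norm_le hε0.le hQ'K' hv hre him
  rw [hchord]
  have hpi := Real.pi_gt_three
  rw [Real.arcsin_lt_iff_lt_sin' ⟨by linarith, by linarith⟩]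
  have hsin : 6 * ε - (6 * ε) ^ 3 / 6 < Real.sin (6 * ε) :=
    Real.sin_gt_sub_cube (by linarith)
  have hcube : (6 * ε) ^ 3 / 6 ≤ ε := by
    have h1 : ε ^ 2 ≤ 1 / 10 ^ 6 := by nlinarith
    nlinarith
  linarith
end

section
/- Let a ≤ b ≤ c be the side lengths of a (nondegenerate) triangle in the Euclidean plane, and let α be the angle of the triangle opposite to the side of length a. Then α < 2a/c. -/
/-!
By the law of sines `c * sin α = a * sin γ ≤ a`, so it suffices that `α < 2 * sin α`. As `a ≤ b`,
the law of cosines makes `α` acute, and then Jordan's inequality `2 / π * α < sin α` gives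
`α < π / 2 * sin α < 2 * sin α`.
-/

open EuclideanGeometry

/-- Lemma 14: if `a ≤ b ≤ c` are the side lengths of a nondegenerate triangle
`ABC` in the plane (`a = |BC|` opposite `A`, `b = |AC|` opposite `B`, `c = |AB|` opposite `C`),
and `α = ∠BAC` is the angle opposite the side of length `a`, then `α < 2a/c`. -/
theorem smallest_angle_lt
    (A B C : ℂ) (a b c : ℝ)
    (ha : a = dist B C) (hb : b = dist A C) (hc : c = dist A B)
    (hab : a ≤ b) (hbc : b ≤ c)
    (hnd : ¬ Collinear ℝ ({A, B, C} : Set ℂ)) :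
    EuclideanGeometry.angle B A C < 2 * a / c := by
  have hBC : B ≠ C := by
    rintro rfl
    exact hnd (by simpa using collinear_pair ℝ A B)
  have hAB : A ≠ B := by
    rintro rfl
    exact hnd (by simpa using collinear_pair ℝ A C)
  have ha0 : 0 < a := ha ▸ dist_pos.2 hBC
  have hc0 : 0 < c := hc ▸ dist_pos.2 hAB
  have hb0 : 0 < b := ha0.trans_le hab
  have hcos := dist_sq_eq_dist_sq_add_dist_sq_sub_two_mul_dist_mul_dist_mul_cos_angle B A C
  have hsin := sin_angle_mul_dist_eq_sin_angle_mul_dist C A B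
  rw [dist_comm B A, ← ha, ← hc, dist_comm C A, ← hb] at hcos
  rw [angle_comm C A B, ← ha, ← hc] at hsin
  have hsin_le : Real.sin (∠ B A C) * c ≤ a := by
    rw [hsin]
    exact mul_le_of_le_one_left ha0.le (Real.sin_le_one _)
  have hacute : ∠ B A C < Real.pi / 2 := by
    by_contra! h
    have hcos_le : Real.cos (∠ B A C) ≤ 0 :=
      Real.cos_nonpos_of_pi_div_two_le_of_le h
        (by linarith [angle_le_pi B A C, Real.pi_pos])
    -- A non-acute angle would give `a ^ 2 ≥ b ^ 2 + c ^ 2`.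
    nlinarith [mul_nonneg (mul_pos hc0 hb0).le (neg_nonneg.2 hcos_le), mul_pos hc0 hc0]
  rcases (angle_nonneg B A C).eq_or_lt with h0 | h0
  · rw [← h0]
    positivity
  · have hjordan := Real.mul_lt_sin h0 hacute
    have hpi := Real.pi_pos
    rw [div_mul_eq_mul_div, div_lt_iff₀ hpi] at hjordan
    have hsin_pos : 0 < Real.sin (∠ B A C) :=
      Real.sin_pos_of_pos_of_lt_pi h0 (by linarith)
    have hlt : ∠ B A C < 2 * Real.sin (∠ B A C) := by
      nlinarith [mul_le_mul_of_nonneg_left Real.pi_le_four hsin_pos.le]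
    rw [lt_div_iff₀ hc0]
    nlinarith [mul_lt_mul_of_pos_right hlt hc0]
end

section
/- With the standard two-circle setup (parameters ε, h with 0 < ε < 10⁻⁶ and 0 < h ≤ ε/10³), both |∠P₀MO − π/2| < h + ε and |∠P₁MO − π/2| < h + ε hold, where ∠PᵢMO denotes the angle at the vertex M in the triangle PᵢMO. -/
/-!
Both estimates are instances of one fact about a circle of radius 1 centred at `(s, 0)` and passing
through `M = (0, c)`: a chord `MP` of length `ε` has direction `(x, y) / ε` with
`ε² = 2 s x - 2 c y`, because `P` and `M` both lie on the circle. Since `|x| ≤ ε`, the cosine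
`-y / ε` of the angle at `M` between `MP` and `MO` is at most `(ε / 2 + |s|) / c` in absolute value.
With `|s| = sin (h / 2) ≤ h / 2` and `c` close to `1`, Jordan's inequality
`2 / π * |δ| ≤ |sin δ|`, applied to `δ = π / 2 - ∠PMO`, turns this into the claim.
-/

open Metric Set EuclideanGeometry

/-- The angle bound for a chord `MP` of length `ε` of the unit circle centred at `(s, 0)`
through `M = (0, c)`. -/
lemma abs_angle_chord_sub_pi_div_two_lt {ε h s c : ℝ} {P : ℂ}
    (hε0 : 0 < ε) (hh0 : 0 < h) (hc : 9 / 10 ≤ c) (hs : |s| ≤ h / 2)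
    (hsc : s ^ 2 + c ^ 2 = 1)
    (hP : dist P (s : ℂ) = 1) (hPM : dist P ((c : ℂ) * Complex.I) = ε) :
    |EuclideanGeometry.angle P ((c : ℂ) * Complex.I) 0 - Real.pi / 2| < h + ε := by
  have h1 : (P.re - s) ^ 2 + P.im ^ 2 = 1 := by
    have := congrArg (· ^ 2) hP
    simp only [Complex.dist_eq, Complex.sq_norm, Complex.normSq_apply] at this
    simp at this
    linarith
  have h2 : P.re ^ 2 + (P.im - c) ^ 2 = ε ^ 2 := by
    have := congrArg (· ^ 2) hPM
    simp only [Complex.dist_eq, Complex.sq_norm, Complex.normSq_apply] at this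
    simp at this
    linarith
  have hx : |P.re| ≤ ε := abs_le_of_sq_le_sq (by nlinarith [sq_nonneg (P.im - c)]) hε0.le
  have hkey : 2 * c * (P.im - c) = 2 * s * P.re - ε ^ 2 := by nlinarith
  have hcos : Real.cos (EuclideanGeometry.angle P ((c : ℂ) * Complex.I) 0)
      = -(P.im - c) / ε := by
    rw [EuclideanGeometry.angle, InnerProductGeometry.cos_angle]
    have e1 : ‖P -ᵥ (c : ℂ) * Complex.I‖ = ε := by rw [← hPM, Complex.dist_eq]; rfl
    have e2 : ‖(0 : ℂ) -ᵥ (c : ℂ) * Complex.I‖ = c := by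
      simp [abs_of_nonneg (by linarith : (0 : ℝ) ≤ c)]
    rw [e1, e2]
    have e3 : inner ℝ (P -ᵥ (c : ℂ) * Complex.I) ((0 : ℂ) -ᵥ (c : ℂ) * Complex.I)
        = -(P.im - c) * c := by
      simp [Complex.inner]
      ring
    rw [e3]
    have : c ≠ 0 := by linarith
    field_simp
  have hbound : |-(P.im - c) / ε| ≤ (h + ε) / (9 / 5) := by
    have hsx : |s * P.re| ≤ h / 2 * ε := by
      rw [abs_mul]
      exact mul_le_mul hs hx (abs_nonneg _) (by linarith)
    have hcy : c * |P.im - c| ≤ (h + ε) / 2 * ε := by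
      have : c * |P.im - c| = |s * P.re - ε ^ 2 / 2| := by
        rw [← abs_of_nonneg (by linarith : (0 : ℝ) ≤ c), ← abs_mul,
          abs_of_nonneg (by linarith : (0 : ℝ) ≤ c)]
        congr 1
        linarith
      rw [this, abs_le]
      obtain ⟨ha, hb⟩ := abs_le.1 hsx
      constructor <;> nlinarith
    rw [abs_div, abs_neg, abs_of_pos hε0, div_le_iff₀ hε0]
    nlinarith [mul_le_mul_of_nonneg_right hc (abs_nonneg (P.im - c))]
  rw [← hcos, ← Real.sin_pi_div_two_sub] at hbound
  rw [abs_sub_comm]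
  have hjordan := Real.mul_abs_le_abs_sin
    (x := Real.pi / 2 - EuclideanGeometry.angle P ((c : ℂ) * Complex.I) 0) (by
      have ha := EuclideanGeometry.angle_nonneg P ((c : ℂ) * Complex.I) 0
      have hb := EuclideanGeometry.angle_le_pi P ((c : ℂ) * Complex.I) 0
      rw [abs_le]
      constructor <;> linarith)
  -- The constants work out because `2 / π > 5 / 9`.
  have hpi : (5 / 9 : ℝ) < 2 / Real.pi := by
    rw [lt_div_iff₀ Real.pi_pos]
    linarith [Real.pi_lt_d2]
  by_contra! hcon
  nlinarith

/-- inequalities (e9), (e10): standard two-circle setup, with `0 < ε < 10⁻⁶`,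
`0 < h ≤ ε/10³`, `O₀ = (-sin(h/2), 0)`, `O₁ = (sin(h/2), 0)`, `O = 0`, `M = (0, cos(h/2))`,
`L₀` the closure of `K̄₀ \ K̄₁`, and `P₀ ∈ K₀`, `P₁ ∈ K₁` the endpoints of the arc
`sphere M ε ∩ L₀`. Then `|∠P₀MO − π/2| < h + ε` and `|∠P₁MO − π/2| < h + ε`. -/
theorem angle_at_M_near_right_angle
    (ε h : ℝ) (hε0 : 0 < ε) (hε : ε < 1 / 10 ^ 6) (hh0 : 0 < h) (hh : h ≤ ε / 10 ^ 3)
    (O₀ O₁ M : ℂ) (L₀ : Set ℂ)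
    (hO₀ : O₀ = ((-Real.sin (h / 2) : ℝ) : ℂ))
    (hO₁ : O₁ = ((Real.sin (h / 2) : ℝ) : ℂ))
    (hM : M = ((Real.cos (h / 2) : ℝ) : ℂ) * Complex.I)
    (hL₀ : L₀ = closure (Metric.closedBall O₀ 1 \ Metric.closedBall O₁ 1))
    (P₀ P₁ : ℂ)
    (hP₀ : P₀ ∈ Metric.sphere O₀ 1 ∩ (Metric.sphere M ε ∩ L₀))
    (hP₁ : P₁ ∈ Metric.sphere O₁ 1 ∩ (Metric.sphere M ε ∩ L₀)) :
    |EuclideanGeometry.angle P₀ M 0 - Real.pi / 2| < h + ε ∧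
    |EuclideanGeometry.angle P₁ M 0 - Real.pi / 2| < h + ε := by
  subst hO₀ hO₁ hM
  have hε' : ε < 1 / 1000000 := by norm_num at hε ⊢; exact hε
  have hh' : h ≤ ε / 1000 := by norm_num at hh ⊢; exact hh
  have hsin0 : 0 ≤ Real.sin (h / 2) :=
    Real.sin_nonneg_of_nonneg_of_le_pi (by linarith) (by linarith [Real.pi_gt_three])
  have hsin : Real.sin (h / 2) ≤ h / 2 := Real.sin_le (by linarith)
  have hcos : 9 / 10 ≤ Real.cos (h / 2) := by
    nlinarith [Real.one_sub_sq_div_two_le_cos (x := h / 2)]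
  have hsc := Real.sin_sq_add_cos_sq (h / 2)
  exact ⟨abs_angle_chord_sub_pi_div_two_lt hε0 hh0 hcos
      (by rwa [abs_neg, abs_of_nonneg hsin0]) (by rw [neg_sq]; exact hsc)
      hP₀.1 hP₀.2.1,
    abs_angle_chord_sub_pi_div_two_lt hε0 hh0 hcos
      (by rwa [abs_of_nonneg hsin0]) hsc hP₁.1 hP₁.2.1⟩
end

section
/- With the standard two-circle setup (parameters ε, h with 0 < ε < 10⁻⁶ and 0 < h ≤ ε/10³), let Q″ be a point of the arc P₀P₁, let C ∈ L₁ satisfy |CM| ≤ 2 − 5ε, and let O′ be a point with |OO′| < ε. Then the triangle with vertices Q″, O′, C is positively oriented. -/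
open Metric Set

/-!
Write `s = sin (h/2)`, `c = cos (h/2)`, `Q″ = (-p, y)`, `C = (a, b)`, `O' = (u, w)`. Twice the
signed area is `a y + b p + u (b - y) - w (a + p)`. Membership in the lunes pins `Q″` near
`(-ε, 1)` (`arc_bounds`), and the terms in `u, w` are `O(ε)`. If `b ≥ 3/5`, the term `b p ≈ b ε`
beats `ε |b - y|`, since `|b - y|` is at most about `2/5`. If `b < 3/5`, the bound
`|CM| ≤ 2 - 5ε` keeps `C` away from the lower common point `-M` of the circles, so that `a` has
order at least `√ε`, which is much larger than `ε` (`lune_bounds`), and the term `a y` dominates.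
The two cases are compared in `area_pos`.
-/

/-- A lune lies in the first closed disc and outside the second open disc. -/
lemma lune_coords {A B z : ℂ} (hz : z ∈ closure (closedBall A 1 \ closedBall B 1)) :
    (z.re - A.re) ^ 2 + (z.im - A.im) ^ 2 ≤ 1 ∧ 1 ≤ (z.re - B.re) ^ 2 + (z.im - B.im) ^ 2 := by
  have hcl : IsClosed {z : ℂ | (z.re - A.re) ^ 2 + (z.im - A.im) ^ 2 ≤ 1 ∧
      1 ≤ (z.re - B.re) ^ 2 + (z.im - B.im) ^ 2} := by
    rw [Set.ofPred_and]
    exact (isClosed_le (by fun_prop) (by fun_prop)).inter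
      (isClosed_le (by fun_prop) (by fun_prop))
  refine closure_minimal ?_ hcl hz
  rintro x ⟨hA, hB⟩
  rw [mem_closedBall, Complex.dist_eq_re_im] at hA hB
  constructor
  · simpa using (Real.sqrt_le_iff.mp hA).2
  · by_contra hlt
    exact hB (Real.sqrt_le_one.mpr (not_le.mp hlt).le)

/-- The point `(-p, y)` of the arc is close to `(-ε, 1)`. -/
lemma arc_bounds {ε s c p y : ℝ} (hε0 : 0 < ε) (hε : ε < 1 / 10 ^ 6) (hs0 : 0 < s)
    (hs : s ≤ ε / 2000) (hc0 : 0 < c) (hc1 : c ≤ 1) (hsc : s ^ 2 + c ^ 2 = 1)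
    (hQM : p ^ 2 + (y - c) ^ 2 = ε ^ 2)
    (h1 : (-p + s) ^ 2 + y ^ 2 ≤ 1) (h2 : 1 ≤ (-p - s) ^ 2 + y ^ 2) :
    99 / 100 * ε ≤ p ∧ p ≤ ε ∧ 99 / 100 ≤ y ∧ y ≤ 1 := by
  have hc : 1 - s ≤ c := by nlinarith
  have hp0 : 0 ≤ p := by nlinarith
  have hpε : p ≤ ε := by nlinarith [sq_nonneg (y - c)]
  obtain ⟨v, rfl⟩ : ∃ v, y = c + v := ⟨y - c, by ring⟩
  have hps : p * s ≤ ε * (ε / 2000) := by gcongr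
  have e1 : ε ^ 2 - 2 * (p * s) + 2 * (c * v) ≤ 0 := by nlinarith
  have e2 : 0 ≤ ε ^ 2 + 2 * (p * s) + 2 * (c * v) := by nlinarith
  have hv0 : v ≤ 0 := by
    by_contra hv
    have := mul_pos hc0 (not_le.mp hv)
    nlinarith
  have hv1 : -ε / 10 ≤ v := by
    by_contra hv
    have hcv := mul_le_mul_of_nonneg_left (not_le.mp hv).le hc0.le
    have hcε : (1 - s) * ε ≤ c * ε := by gcongr
    have hsε : s * ε ≤ 1 / 10 * ε := by gcongr; linarith
    have hεε : ε * ε ≤ 1 / 10 ^ 6 * ε := by gcongr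
    linarith
  refine ⟨?_, hpε, by linarith, by linarith⟩
  by_contra hp
  have : p ^ 2 ≤ (99 / 100 * ε) ^ 2 := by
    apply pow_le_pow_left₀ hp0 (not_le.mp hp).le
  have hv2 : (-v) ^ 2 ≤ (ε / 10) ^ 2 := by
    apply pow_le_pow_left₀ <;> linarith
  have := pow_pos hε0 2
  linarith

/-- A point `(a, b)` of the right lune with `|CM| ≤ 2 - 5ε` is either high up or has abscissa
large compared with `ε`. -/
lemma lune_bounds {ε s c a b : ℝ} (hε0 : 0 < ε) (hε : ε < 1 / 10 ^ 6) (hs0 : 0 < s)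
    (hs : s ≤ ε / 2000) (hc0 : 0 < c) (hc1 : c ≤ 1) (hsc : s ^ 2 + c ^ 2 = 1)
    (h1 : (a - s) ^ 2 + b ^ 2 ≤ 1) (h2 : 1 ≤ (a + s) ^ 2 + b ^ 2)
    (hCM : a ^ 2 + (b - c) ^ 2 ≤ (2 - 5 * ε) ^ 2) :
    0 ≤ a ∧ -1 ≤ b ∧ b ≤ 1 ∧ (b < 3 / 5 → 100 * ε ≤ a) := by
  have hc : 1 - s ≤ c := by nlinarith
  have ha : 0 ≤ a := by nlinarith
  have hb := abs_le.mp ((sq_le_one_iff_abs_le_one b).mp (by nlinarith [sq_nonneg (a - s)]))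
  have ha2 : a ≤ 2 := by nlinarith [sq_nonneg b]
  refine ⟨ha, hb.1, hb.2, fun hlt => ?_⟩
  have has : a * s ≤ 2 * (ε / 2000) := by gcongr
  have hss : s * s ≤ 1 * s := by gcongr; linarith
  have hεε : ε * ε ≤ 1 / 10 ^ 6 * ε := by gcongr
  -- expand `|CM|²` and use `a² + b² ≥ 1 - s² - 2as`
  have hbc : -(b * c) ≤ 1 - 9 * ε := by linarith
  have hb9 : -(1 - 8 * ε) ≤ b := by
    by_contra hlow
    have h8 : 0 ≤ 1 - 8 * ε := by linarith
    have hbc' := mul_le_mul_of_nonneg_right (not_le.mp hlow).le hc0.le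
    have hc' := mul_le_mul_of_nonneg_left hc h8
    have := mul_pos hε0 hs0
    linarith
  have hb2 : b ^ 2 ≤ 1 - 8 * ε := by
    have := mul_nonneg (show 0 ≤ b + (1 - 8 * ε) by linarith)
      (show 0 ≤ 1 - 8 * ε - b by linarith)
    linarith
  have hbig : (1000 * ε) ^ 2 ≤ (a + s) ^ 2 := by linarith
  have := abs_le_of_sq_le_sq' hbig (by linarith)
  linarith [this.2]

/-- Positivity of twice the signed area, given the estimates on `Q″ = (-p, y)`, `C = (a, b)` and
`O' = (u, w)`. -/
lemma area_pos {ε p y a b u w : ℝ} (hε0 : 0 < ε) (hε : ε < 1 / 10 ^ 6)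
    (hp1 : 99 / 100 * ε ≤ p) (hp2 : p ≤ ε) (hy1 : 99 / 100 ≤ y) (hy2 : y ≤ 1)
    (ha : 0 ≤ a) (hb1 : -1 ≤ b) (hb2 : b ≤ 1) (hab : b < 3 / 5 → 100 * ε ≤ a)
    (hu : -ε ≤ u ∧ u ≤ ε) (hw : -ε ≤ w ∧ w ≤ ε) :
    0 < a * y + b * p + u * (b - y) - w * (a + p) := by
  have hwa : w * (a + p) ≤ ε * (a + ε) := by
    have : w * (a + p) ≤ ε * (a + p) := by gcongr; linarith; exact hw.2
    have hpp : ε * p ≤ ε * ε := by gcongr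
    linarith
  have hay : a * (99 / 100) ≤ a * y := by gcongr
  have hεa : ε * a ≤ 1 / 10 ^ 6 * a := by gcongr
  have hεε : ε * ε ≤ 1 / 10 ^ 6 * ε := by gcongr
  have hubd : ∀ d, |b - y| ≤ d → -(ε * d) ≤ u * (b - y) := by
    intro d hd
    have h1 : |u * (b - y)| ≤ ε * d := by
      rw [abs_mul]
      have := abs_le.mpr hu
      gcongr
    exact (abs_le.mp h1).1
  rcases lt_or_ge b (3 / 5) with hlt | hge
  · have := hubd 2 (abs_le.mpr ⟨by linarith, by linarith⟩)
    have := hab hlt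
    have : -ε ≤ b * p := by
      have : -1 * p ≤ b * p := by gcongr; linarith
      linarith
    linarith
  · have := hubd (2 / 5) (abs_le.mpr ⟨by linarith, by linarith⟩)
    have : 3 / 5 * (99 / 100 * ε) ≤ b * p := by gcongr
    linarith

/-- standard two-circle setup, with `0 < ε < 10⁻⁶`, `0 < h ≤ ε/10³`,
`O₀ = (-sin(h/2), 0)`, `O₁ = (sin(h/2), 0)`, `O = 0`, `M = (0, cos(h/2))`, `L₀, L₁` the closures
of `K̄₀ \ K̄₁` and `K̄₁ \ K̄₀`, and the arc `P₀P₁` realized as `sphere M ε ∩ L₀`. Let `Q″` be a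
point of the arc, let `C ∈ L₁` with `|CM| ≤ 2 - 5ε`, and let `O′` be a point with `|OO′| < ε`.
Then the triangle `(Q″, O′, C)` is positively oriented, i.e. its signed area
`im(conj (O′ - Q″) * (C - Q″)) / 2` is positive. -/
theorem triangle_positively_oriented
    (ε h : ℝ) (hε0 : 0 < ε) (hε : ε < 1 / 10 ^ 6) (hh0 : 0 < h) (hh : h ≤ ε / 10 ^ 3)
    (O₀ O₁ M : ℂ) (L₀ L₁ arc : Set ℂ)
    (hO₀ : O₀ = ((-Real.sin (h / 2) : ℝ) : ℂ))
    (hO₁ : O₁ = ((Real.sin (h / 2) : ℝ) : ℂ))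
    (hM : M = ((Real.cos (h / 2) : ℝ) : ℂ) * Complex.I)
    (hL₀ : L₀ = closure (Metric.closedBall O₀ 1 \ Metric.closedBall O₁ 1))
    (hL₁ : L₁ = closure (Metric.closedBall O₁ 1 \ Metric.closedBall O₀ 1))
    (harc : arc = Metric.sphere M ε ∩ L₀)
    (Q'' C O' : ℂ)
    (hQ'' : Q'' ∈ arc)
    (hC : C ∈ L₁) (hCM : dist C M ≤ 2 - 5 * ε)
    (hO' : dist 0 O' < ε) :
    0 < ((starRingEnd ℂ) (O' - Q'') * (C - Q'')).im := by
  have hs0 : 0 < Real.sin (h / 2) :=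
    Real.sin_pos_of_pos_of_lt_pi (by linarith) (by linarith [Real.pi_gt_three])
  have hs : Real.sin (h / 2) ≤ ε / 2000 := by
    linarith [Real.sin_le (show 0 ≤ h / 2 by linarith)]
  have hc0 : 0 < Real.cos (h / 2) :=
    Real.cos_pos_of_mem_Ioo ⟨by linarith [Real.pi_gt_three], by linarith [Real.pi_gt_three]⟩
  have hc1 := Real.cos_le_one (h / 2)
  have hsc := Real.sin_sq_add_cos_sq (h / 2)
  subst hL₀ hL₁ harc
  obtain ⟨hQM, hQL⟩ := hQ''
  obtain ⟨hQ1, hQ2⟩ := lune_coords hQL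
  obtain ⟨hC1, hC2⟩ := lune_coords hC
  rw [mem_sphere, Complex.dist_eq_re_im,
    Real.sqrt_eq_iff_eq_sq (by positivity) hε0.le] at hQM
  rw [Complex.dist_eq_re_im, Real.sqrt_le_left (by linarith)] at hCM
  rw [Complex.dist_eq_re_im, Real.sqrt_lt' hε0] at hO'
  subst hO₀ hO₁ hM
  generalize Real.sin (h / 2) = s at *
  generalize Real.cos (h / 2) = c at *
  obtain ⟨q, y⟩ := Q''
  obtain ⟨a, b⟩ := C
  obtain ⟨u, w⟩ := O'
  obtain ⟨p, rfl⟩ : ∃ p, q = -p := ⟨-q, by ring⟩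
  simp only [Complex.ofReal_re, Complex.ofReal_im, Complex.mul_re, Complex.mul_im, Complex.I_re,
    Complex.I_im, Complex.zero_re, Complex.zero_im] at hQM hQ1 hQ2 hC1 hC2 hCM hO'
  obtain ⟨hp1, hp2, hy1, hy2⟩ := arc_bounds (p := p) (y := y) hε0 hε hs0 hs hc0 hc1 hsc
    (by linarith) (by linarith) (by linarith)
  obtain ⟨ha, hb1, hb2, hab⟩ := lune_bounds (a := a) (b := b) hε0 hε hs0 hs hc0 hc1 hsc
    (by linarith) (by linarith) (by linarith)
  have hu := abs_le_of_sq_le_sq' (a := u) (b := ε) (by nlinarith [sq_nonneg w]) hε0.le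
  have hw := abs_le_of_sq_le_sq' (a := w) (b := ε) (by nlinarith [sq_nonneg u]) hε0.le
  have key := area_pos hε0 hε hp1 hp2 hy1 hy2 ha hb1 hb2 hab hu hw
  simp only [Complex.mul_im, Complex.conj_re, Complex.conj_im, Complex.sub_re, Complex.sub_im]
  linarith
end
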